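/- Let β = 1/20. For every f ∈ 𝒮 with logarithmic coefficients γ_n, the sharp inequality ∑_{n=1}^∞ n³ |γ_n|² / ((n+1)²(n+β)) ≤ ∑_{n=1}^∞ n / ((n+1)²(n+β)) holds (the right-hand side, denoted E_{1,1/20}, is ≈ 0.62787); the inequality is strict unless f(z) = z/(1−e^{iθ}z)² for some θ ∈ ℝ. -/

import Mathlib

/-!
Let `c_k = 2 γ_k` be the Taylor coefficients of `log (f z / z)`, and let
`E_N = ∑_{k ≤ N} (N + 1 - k) (k |c_k|² - 4 / k)` (`milE`). With `w_n = n² / ((n+1)² (n + 1/20))`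
the claim says that `∑ w_n (n |c_n|² - 4 / n) ≤ 0`. Two summations by parts (`sum_by_parts`) turn
this sum into `∑ (Δ² w)_N E_N`. Milin's inequality, proved by de Branges, says `E_N ≤ 0`
(`milE_nonpos`), and `(Δ² w)_N ≥ 0` for `N ≥ 2`. However `(Δ² w)_1` is slightly negative, so a
combination of `E_1, …, E_9` with the negative coefficient `-56/5000` at `E_1` has to be shown
nonpositive directly (`milE_special`).

Both inequalities come from one form of de Branges' argument, `Phi_classS`. It applies to every
system of weights `S_k(x)`, `x = e^{-t}`, solving the de Branges differential equations with
nonnegative derivatives `x S_k' = k Λ_k` (`Wt`). For `E_N` one has `Λ_k = wA N k`, a Fourier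
coefficient of a Chebyshev polynomial `U_N(1 - x + x cos θ)`. It is nonnegative because this
polynomial is the trace of the `N`-th symmetric power of a product of a rotation and a twisted
inverse rotation, whose Fourier coefficients are sums of squares by the symmetry of Krawtchouk
matrices (`krawtchouk_duality`, `wA_nonneg`). For the combination only `Λ_1` contains a negative
term, and its positivity on `[0, 1]` is read off from its Bernstein coefficients
(`special_one_nonneg`).

Loewner's differential equation is replaced by finite chains. A univalent self-map `ψ` of the disk
with `ψ(0) = 0` and `ψ'(0) = a > 0` factors as `χ ∘ η` with any prescribed `χ'(0)` in `[a, 1]`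
(`UU.interpolate`): by the Riemann mapping theorem for domains with connected complement
(`riemann_map`) a factor can be improved whenever there is room, and normal families give a
maximal one. Along a factor with derivative `e^{-h}` the weighted functional decreases up to an
error `O(h²)` (`Phi_step`), because its first-order change is governed by de Branges' quadratic
form, which is nonnegative on Carathéodory functions (`dbL_nonneg`). Summing over a chain and
letting `h → 0` gives the inequality for bounded functions, and dilation gives it for all of `𝒮`.

The coefficient `-56/5000` is strictly smaller than `(Δ² w)_1`, so equality forces `|c_1| = 2`. This
characterises the rotations of the Koebe function (`koebe_of_norm_coeff_one`): after a rotation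
`c_1 = 2`, and if `c_k = 2 / k` for `k ≤ N`, then `E_N = 0` is maximal in `𝒮`, so that its first
variation along the Koebe transforms `(f((z + ζ) / (1 + conj ζ z)) - f(ζ)) / ((1 - |ζ|²) f'(ζ))`
is nonpositive in every direction `ζ`, which forces `c_{N+1} = 2 / (N + 1)` (`coeff_step`). Hence
`f(z) = z / (1 - z)²`.
-/

open Complex Metric Real

/-- The class `𝒮` of normalized univalent (analytic and injective) functions
on the unit disk. -/
def InClassS (f : ℂ → ℂ) : Prop :=
  AnalyticOnNhd ℂ f (ball (0 : ℂ) 1) ∧ Set.InjOn f (ball (0 : ℂ) 1) ∧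
    f 0 = 0 ∧ deriv f 0 = 1

/-- `γ` are the logarithmic coefficients of `f`: there is an analytic branch `g`
of `log (f z / z)` on the unit disk with `g 0 = 0` whose Taylor coefficients at `0`
are `2 * γ n` for `n ≥ 1`. -/
def IsLogCoeffs (f : ℂ → ℂ) (γ : ℕ → ℂ) : Prop :=
  ∃ g : ℂ → ℂ, AnalyticOnNhd ℂ g (ball (0 : ℂ) 1) ∧ g 0 = 0 ∧
    (∀ z ∈ ball (0 : ℂ) 1, z ≠ 0 → Complex.exp (g z) = f z / z) ∧
    ∀ n : ℕ, 1 ≤ n → iteratedDeriv n g 0 = (n.factorial : ℂ) * (2 * γ n)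

/-- `f` coincides on the unit disk with a rotation `z / (1 - e^{iθ} z)^2`
of the Koebe function. -/
def IsKoebeRotation (f : ℂ → ℂ) : Prop :=
  ∃ θ : ℝ, Set.EqOn f
    (fun z => z / (1 - Complex.exp (θ * Complex.I) * z) ^ 2) (ball (0 : ℂ) 1)

/-! ### de Branges weight polynomials -/

open Polynomial in
/-- `wA N k` is the coefficient of `e^{ikθ}` in `U_N(1 - x + x cos θ)`, as a polynomial in `x`;
`U_N` is the Chebyshev polynomial of the second kind, and the recursion is
`U_{N+2}(y) = 2 y U_{N+1}(y) - U_N(y)`. -/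
noncomputable def wA : ℕ → ℤ → Polynomial ℝ
  | 0, k => if k = 0 then 1 else 0
  | 1, k => if k = 0 then 2 * (1 - X) else if k = 1 ∨ k = -1 then X else 0
  | (N + 2), k => 2 * (1 - X) * wA (N + 1) k + X * (wA (N + 1) (k - 1) + wA (N + 1) (k + 1)) - wA N k

open Polynomial in
lemma wA_rec (N : ℕ) (k : ℤ) : wA (N + 2) k =
    2 * (1 - X) * wA (N + 1) k + X * (wA (N + 1) (k - 1) + wA (N + 1) (k + 1)) - wA N k := by
  rw [wA]

lemma wA_support (N : ℕ) : ∀ k : ℤ, (N : ℤ) < |k| → wA N k = 0 := by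
  induction N using Nat.twoStepInduction with
  | zero => intro k hk; rw [wA]; rw [if_neg]; rintro rfl; simp at hk
  | one =>
    intro k hk
    rw [wA, if_neg, if_neg]
    · rintro (rfl | rfl) <;> simp at hk
    · rintro rfl; simp at hk
  | more N h0 h1 =>
    intro k hk
    push_cast at hk
    rw [wA_rec, h0 k (by linarith), h1 k (by push_cast; linarith), h1 (k-1), h1 (k+1)]
    · simp
    · push_cast; rw [lt_abs] at *; omega
    · push_cast; rw [lt_abs] at *; omega

open Polynomial in
/-- The de Branges differential equations, in the variable `x = e^{-t}`. -/
lemma wA_deriv (N : ℕ) : ∀ k : ℤ, X * (derivative (wA N k) + derivative (wA N (k + 1))) =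
    (k : ℝ[X]) * wA N k - ((k : ℝ[X]) + 1) * wA N (k + 1) := by
  induction N using Nat.twoStepInduction with
  | zero =>
    intro k
    simp only [wA]
    by_cases h : k = 0
    · subst h; simp
    · by_cases h' : k + 1 = 0
      · have : (k : ℝ[X]) + 1 = 0 := by exact_mod_cast congrArg (Int.cast (R := ℝ[X])) h'
        simp [h, h', this]
      · simp [h, h']
  | one =>
    intro k
    by_cases h : k = 0
    · subst h; simp [wA]; ring
    by_cases h : k = 1
    · subst h; simp [wA]
    by_cases h : k = -1
    · subst h; simp [wA]; ring
    by_cases h : k = -2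
    · subst h; simp [wA]; ring
    · rw [wA, wA, if_neg (by omega), if_neg (by omega), if_neg (by omega), if_neg (by omega)]; simp
  | more N h0 h1 =>
    intro k
    have e0 := h0 k
    have e1 := h1 k
    have e2 := h1 (k - 1)
    have e3 := h1 (k + 1)
    rw [wA_rec, wA_rec]
    rw [show k - 1 + 1 = k by ring] at e2
    rw [show k + 1 - 1 = k by ring]
    push_cast at *
    simp only [derivative_add, derivative_sub, derivative_mul, derivative_X, derivative_one, derivative_ofNat]
    linear_combination 2 * (1 - X) * e1 + X * e2 + X * e3 - e0

/-- At `x = 1` one has `U_N(cos θ) = ∑_{j ≤ N} e^{i(N-2j)θ}`, so that of two neighbouring coefficients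
within the range one is `1` and the other `0`. -/
lemma wA_one (N : ℕ) : ∀ k : ℤ, (wA N k).eval 1 + (wA N (k + 1)).eval 1 =
    if -(N : ℤ) - 1 ≤ k ∧ k ≤ N then 1 else 0 := by
  induction N using Nat.twoStepInduction with
  | zero =>
    intro k
    simp only [wA]
    split_ifs <;> first | omega | simp
  | one =>
    intro k
    simp only [wA]
    split_ifs <;> first | omega | simp
  | more N h0 h1 =>
    intro k
    have e0 := h0 k
    have e2 := h1 (k - 1)
    have e3 := h1 (k + 1)
    rw [wA_rec, wA_rec]
    rw [show k - 1 + 1 = k by ring] at e2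
    rw [show k + 1 - 1 = k by ring]
    simp only [Polynomial.eval_add, Polynomial.eval_sub, Polynomial.eval_mul, Polynomial.eval_X,
      Polynomial.eval_one, Polynomial.eval_ofNat]
    push_cast at *
    have : (if -((N:ℤ) + 2) - 1 ≤ k ∧ k ≤ N + 2 then (1:ℝ) else 0) =
      (if -((N:ℤ) + 1) - 1 ≤ k - 1 ∧ k - 1 ≤ N + 1 then 1 else 0) +
      (if -((N:ℤ) + 1) - 1 ≤ k + 1 ∧ k + 1 ≤ N + 1 then 1 else 0) -
      (if -(N:ℤ) - 1 ≤ k ∧ k ≤ N then 1 else 0) := by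
      split_ifs <;> first | omega | norm_num
    rw [this]
    linear_combination e2 + e3 - e0

/-! ### Positivity of the weight polynomials -/

open Polynomial Finset in
/-- The trace of the `N`-th symmetric power of the matrix with rows `(a, b)` and `(c, d)`, computed
in the basis of monomials `X ^ i` of the binary forms of degree `N`. -/
noncomputable def symTr {R : Type} [CommRing R] (a b c d : R) (N : ℕ) : R :=
  ∑ i ∈ range (N + 1), ((C a * X + C b) ^ i * (C c * X + C d) ^ (N - i)).coeff i

open Polynomial Finset in
lemma coeff_lin_mul {R : Type} [CommRing R] (a b : R) (q : R[X]) (i : ℕ) :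
    ((C a * X + C b) * q).coeff (i + 1) = a * q.coeff i + b * q.coeff (i + 1) := by
  rw [add_mul, mul_assoc, coeff_add, coeff_C_mul, coeff_C_mul, mul_comm X q, coeff_mul_X]

open Polynomial Finset in
lemma coeff_lin_mul_zero {R : Type} [CommRing R] (a b : R) (q : R[X]) :
    ((C a * X + C b) * q).coeff 0 = b * q.coeff 0 := by
  simp [mul_coeff_zero]

open Polynomial in
lemma natDegree_lin_pow {R : Type} [CommRing R] (a b : R) (n : ℕ) :
    ((C a * X + C b) ^ n).natDegree ≤ n :=
  (natDegree_pow_le_of_le n natDegree_linear_le).trans (by simp)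

open Polynomial Finset in
lemma symTr_rec {R : Type} [CommRing R] (a b c d : R) (N : ℕ) :
    symTr a b c d (N + 2) = (a + d) * symTr a b c d (N + 1) - (a * d - b * c) * symTr a b c d N := by
  set L1 : R[X] := C a * X + C b with hL1
  set L2 : R[X] := C c * X + C d with hL2
  -- `Y n` is a sum along the superdiagonal; it closes the recursion for the diagonal sums.
  let Y : ℕ → R := fun n => ∑ i ∈ range n, (L1 ^ i * L2 ^ (n - i)).coeff (i + 1)
  have hS : ∀ n, symTr a b c d (n + 1) = d ^ (n + 1) + a * symTr a b c d n + b * Y n := by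
    intro n
    simp only [symTr, Y]
    rw [sum_range_succ']
    have h0 : (L1 ^ 0 * L2 ^ (n + 1 - 0)).coeff 0 = d ^ (n + 1) := by
      simp [hL2, coeff_zero_eq_eval_zero]
    rw [h0]
    have h1 : ∀ i ∈ range (n + 1), (L1 ^ (i + 1) * L2 ^ (n + 1 - (i + 1))).coeff (i + 1) =
        a * (L1 ^ i * L2 ^ (n - i)).coeff i + b * (L1 ^ i * L2 ^ (n - i)).coeff (i + 1) := by
      intro i _
      rw [pow_succ', mul_assoc, coeff_lin_mul, Nat.add_sub_add_right]
    rw [sum_congr rfl h1, sum_add_distrib, ← mul_sum, ← mul_sum, sum_range_succ (n := n)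
      (f := fun i => (L1 ^ i * L2 ^ (n - i)).coeff (i + 1))]
    have h2 : (L1 ^ n * L2 ^ (n - n)).coeff (n + 1) = 0 := by
      rw [Nat.sub_self, pow_zero, mul_one]
      exact coeff_eq_zero_of_natDegree_lt (Nat.lt_succ_of_le (natDegree_lin_pow a b n))
    rw [h2]; ring
  have hY : ∀ n, Y (n + 1) = c * symTr a b c d n + d * Y n := by
    intro n
    simp only [symTr, Y]
    have h1 : ∀ i ∈ range (n + 1), (L1 ^ i * L2 ^ (n + 1 - i)).coeff (i + 1) =
        c * (L1 ^ i * L2 ^ (n - i)).coeff i + d * (L1 ^ i * L2 ^ (n - i)).coeff (i + 1) := by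
      intro i hi
      rw [Nat.sub_add_comm (by simpa [Nat.lt_succ_iff] using hi), pow_succ', mul_left_comm, coeff_lin_mul]
    rw [sum_congr rfl h1, sum_add_distrib, ← mul_sum, ← mul_sum, sum_range_succ (n := n)
      (f := fun i => (L1 ^ i * L2 ^ (n - i)).coeff (i + 1))]
    have h2 : (L1 ^ n * L2 ^ (n - n)).coeff (n + 1) = 0 := by
      rw [Nat.sub_self, pow_zero, mul_one]
      exact coeff_eq_zero_of_natDegree_lt (Nat.lt_succ_of_le (natDegree_lin_pow a b n))
    rw [h2]; ring
  rw [hS (N + 1), hY N]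
  have := hS N
  linear_combination (-d) * this

open Polynomial Finset in
lemma homog_step {R : Type} [CommRing R] (a b : R) (q : R[X]) (N : ℕ) (hq : q.natDegree ≤ N) (A B : R[X]) :
    ∑ j ∈ range (N + 2), C (((C a * X + C b) * q).coeff j) * (A ^ j * B ^ (N + 1 - j)) =
    (C a * A + C b * B) * ∑ j ∈ range (N + 1), C (q.coeff j) * (A ^ j * B ^ (N - j)) := by
  rw [sum_range_succ', coeff_lin_mul_zero]
  simp only [coeff_lin_mul]
  simp only [C_add, C_mul, add_mul, sum_add_distrib]
  have e1 : ∑ j ∈ range (N + 1), C a * C (q.coeff j) * (A ^ (j + 1) * B ^ (N + 1 - (j + 1))) =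
     C a * A * ∑ j ∈ range (N + 1), C (q.coeff j) * (A ^ j * B ^ (N - j)) := by
    rw [mul_sum]
    refine sum_congr rfl fun j _ => ?_
    rw [Nat.add_sub_add_right]; ring
  have e2 : ∑ j ∈ range (N + 1), C b * C (q.coeff (j+1)) * (A ^ (j + 1) * B ^ (N + 1 - (j + 1))) + C b * C (q.coeff 0) * (A ^ 0 * B ^ (N + 1 - 0)) =
     C b * B * ∑ j ∈ range (N + 1), C (q.coeff j) * (A ^ j * B ^ (N - j)) := by
    rw [← sum_range_succ' (fun j => C b * C (q.coeff j) * (A ^ j * B ^ (N + 1 - j))), sum_range_succ,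
      coeff_eq_zero_of_natDegree_lt (Nat.lt_succ_of_le hq), mul_sum]
    simp only [C_0, mul_zero, zero_mul, add_zero]
    refine sum_congr rfl fun j hj => ?_
    rw [Nat.sub_add_comm (by simpa [Nat.lt_succ_iff] using hj)]; ring
  rw [e1, add_assoc, e2]

open Polynomial Finset in
lemma natDegree_lin_lin {R : Type} [CommRing R] (a b c d : R) (m n : ℕ) :
    ((C a * X + C b) ^ m * (C c * X + C d) ^ n).natDegree ≤ m + n :=
  natDegree_mul_le_of_le (natDegree_lin_pow _ _ _) (natDegree_lin_pow _ _ _)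

open Polynomial Finset in
lemma homog_expand {R : Type} [CommRing R] (a b c d : R) (A B : R[X]) (m n : ℕ) :
    (C a * A + C b * B) ^ m * (C c * A + C d * B) ^ n =
    ∑ j ∈ range (m + n + 1), C (((C a * X + C b) ^ m * (C c * X + C d) ^ n).coeff j) * (A ^ j * B ^ (m + n - j)) := by
  induction m with
  | zero =>
    induction n with
    | zero => simp
    | succ n ih =>
      simp only [pow_zero, one_mul, zero_add] at ih ⊢
      rw [pow_succ', ih, pow_succ', homog_step c d _ n (natDegree_lin_pow _ _ _)]
  | succ m ih =>
    rw [pow_succ', mul_assoc, ih, pow_succ', mul_assoc, ← homog_step a b _ _ (natDegree_lin_lin _ _ _ _ _ _)]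
    refine sum_congr ?_ ?_
    · congr 1; ring
    · intro j _; rw [show m + 1 + n = m + n + 1 by ring]

open Polynomial Finset in
/-- The matrix of the `N`-th symmetric power of `R = (c, s; -s, c)` is, up to scaling by binomial
coefficients, the transpose of that of the transposed matrix `(c, -s; s, c)`; both sides are read off
from one bivariate `N`-th power. -/
lemma krawtchouk_duality (c s : ℝ) (N i j : ℕ) (hi : i ≤ N) (hj : j ≤ N) :
    (N.choose i : ℝ) * ((C c * X + C s) ^ i * (C (-s) * X + C c) ^ (N - i)).coeff j =
    (N.choose j : ℝ) * ((C c * X + C (-s)) ^ j * (C s * X + C c) ^ (N - j)).coeff i := by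
  -- inner variable `C X`, outer variable `X`
  have key : (X * C (C c * X + C s) + C (C (-s) * X + C c) : ℝ[X][X]) ^ N =
      (C X * (C (C c) * X + C (C (-s))) + (C (C s) * X + C (C c))) ^ N := by
    congr 1
    simp only [C_add, C_mul, C_neg]; ring
  rw [add_pow, add_pow] at key
  have k1 := congrArg (fun p : ℝ[X][X] => (p.coeff i).coeff j) key
  simp only [finsetSum_coeff] at k1
  have l1 : ∀ x ∈ range (N + 1), (((X * C (C c * X + C s)) ^ x * C (C (-s) * X + C c) ^ (N - x) * ((N.choose x : ℕ) : ℝ[X][X])).coeff i).coeff j = if x = i then (N.choose i : ℝ) * ((C c * X + C s) ^ i * (C (-s) * X + C c) ^ (N - i)).coeff j else 0 := by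
    intro x _
    have : ((X * C (C c * X + C s)) ^ x * C (C (-s) * X + C c) ^ (N - x) * ((N.choose x : ℕ) : ℝ[X][X])) =
       C (((C c * X + C s) ^ x * (C (-s) * X + C c) ^ (N - x)) * C (N.choose x : ℝ)) * X ^ x := by
      simp only [mul_pow, C_mul, C_pow, map_natCast]; ring
    rw [this, coeff_C_mul_X_pow]
    by_cases h : x = i
    · subst h; rw [if_pos rfl, if_pos rfl, coeff_mul_C, mul_comm]
    · rw [if_neg h, if_neg (Ne.symm h)]; simp
  have l2 : ∀ x ∈ range (N + 1), (((C X * (C (C c) * X + C (C (-s)))) ^ x * (C (C s) * X + C (C c)) ^ (N - x) * ((N.choose x : ℕ) : ℝ[X][X])).coeff i).coeff j = if x = j then (N.choose j : ℝ) * ((C c * X + C (-s)) ^ j * (C s * X + C c) ^ (N - j)).coeff i else 0 := by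
    intro x _
    have : ((C X * (C (C c) * X + C (C (-s)))) ^ x * (C (C s) * X + C (C c)) ^ (N - x) * ((N.choose x : ℕ) : ℝ[X][X])) =
       C (X ^ x) * (((C c * X + C (-s)) ^ x * (C s * X + C c) ^ (N - x)) * C (N.choose x : ℝ)).map (C : ℝ →+* ℝ[X]) := by
      simp only [mul_pow, Polynomial.map_mul, Polynomial.map_pow, Polynomial.map_add, map_C, map_X, C_pow, map_natCast, Polynomial.map_natCast]; ring
    rw [this, coeff_C_mul, coeff_map, mul_comm (X ^ x), coeff_C_mul, coeff_mul_C, coeff_X_pow]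
    by_cases h : x = j
    · subst h; rw [if_pos rfl, if_pos rfl]; ring
    · rw [if_neg h, if_neg (Ne.symm h)]; ring
  rw [sum_congr rfl l1, sum_congr rfl l2, sum_ite_eq', sum_ite_eq', if_pos (by simp; omega), if_pos (by simp; omega)] at k1
  exact k1

open Polynomial Finset LaurentPolynomial in
/-- The matrix is the product of `R = (c, s; -s, c)` and `(c, -s T; s T⁻¹, c)`, a conjugate of the
transpose of `R` by a diagonal matrix. The trace of its `N`-th symmetric power is therefore
`∑ m_{ij} m'_{ji} T^{j-i}`, where `m_{ij} m'_{ji} ≥ 0` by `krawtchouk_duality`. -/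
lemma symTr_laurent_nonneg (c s : ℝ) (N : ℕ) (k : ℤ) :
    0 ≤ (symTr (LaurentPolynomial.C c * LaurentPolynomial.C c + LaurentPolynomial.C s * (LaurentPolynomial.C s * T (-1)))
      (LaurentPolynomial.C c * -(LaurentPolynomial.C s * T 1) + LaurentPolynomial.C s * LaurentPolynomial.C c)
      (LaurentPolynomial.C (-s) * LaurentPolynomial.C c + LaurentPolynomial.C c * (LaurentPolynomial.C s * T (-1)))
      (LaurentPolynomial.C (-s) * -(LaurentPolynomial.C s * T 1) + LaurentPolynomial.C c * LaurentPolynomial.C c)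
      N : ℝ[T;T⁻¹]).coeff k := by
  set K : ℝ →+* ℝ[T;T⁻¹] := LaurentPolynomial.C with hK
  set A : (ℝ[T;T⁻¹])[X] := Polynomial.C (K c) * X + Polynomial.C (-(K s * T 1)) with hA
  set B : (ℝ[T;T⁻¹])[X] := Polynomial.C (K s * T (-1)) * X + Polynomial.C (K c) with hB
  have hT : (T 1 * T (-1) : ℝ[T;T⁻¹]) = 1 := by rw [← T_add]; simp
  have hA' : A = Polynomial.C (T 1) * ((Polynomial.C c * X + Polynomial.C (-s)).map K).comp (Polynomial.C (T (-1)) * X) := by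
    simp only [hA, Polynomial.map_add, Polynomial.map_mul, map_C, map_X, add_comp, mul_comp, C_comp, X_comp, Polynomial.C_mul, RingHom.map_neg, neg_comp, Polynomial.map_neg]
    have : (Polynomial.C (T 1) * Polynomial.C (T (-1)) : (ℝ[T;T⁻¹])[X]) = 1 := by rw [← Polynomial.C_mul, hT, Polynomial.C_1]
    linear_combination (-Polynomial.C (K c) * X) * this
  have hB' : B = ((Polynomial.C s * X + Polynomial.C c).map K).comp (Polynomial.C (T (-1)) * X) := by
    simp only [hB, Polynomial.map_add, Polynomial.map_mul, map_C, map_X, add_comp, mul_comp, C_comp, X_comp, Polynomial.C_mul]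
    ring
  have hco : ∀ i j, (A ^ j * B ^ (N - j)).coeff i =
      K (((Polynomial.C c * X + Polynomial.C (-s)) ^ j * (Polynomial.C s * X + Polynomial.C c) ^ (N - j)).coeff i) * T ((j : ℤ) - i) := by
    intro i j
    have : A ^ j * B ^ (N - j) = Polynomial.C (T j) * ((((Polynomial.C c * X + Polynomial.C (-s)) ^ j * (Polynomial.C s * X + Polynomial.C c) ^ (N - j)).map K).comp (Polynomial.C (T (-1)) * X)) := by
      rw [hA', hB', mul_pow, Polynomial.map_mul, Polynomial.map_pow, Polynomial.map_pow, mul_comp, pow_comp, pow_comp, ← Polynomial.C_pow, T_pow]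
      rw [mul_one, mul_assoc]
    rw [this, coeff_C_mul, comp_C_mul_X_coeff, coeff_map, T_pow, sub_eq_add_neg, T_add]
    rw [show (i : ℤ) * (-1) = -i by ring]
    ring
  have hL : (Polynomial.C (K c * K c + K s * (K s * T (-1))) * X + Polynomial.C (K c * -(K s * T 1) + K s * K c)) = Polynomial.C (K c) * A + Polynomial.C (K s) * B := by
    simp only [hA, hB, Polynomial.C_add, Polynomial.C_mul]; ring
  have hL' : (Polynomial.C (K (-s) * K c + K c * (K s * T (-1))) * X + Polynomial.C (K (-s) * -(K s * T 1) + K c * K c)) = Polynomial.C (K (-s)) * A + Polynomial.C (K c) * B := by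
    simp only [hA, hB, Polynomial.C_add, Polynomial.C_mul]; ring
  have hM : ∀ i j, ((Polynomial.C (K c) * X + Polynomial.C (K s)) ^ i * (Polynomial.C (K (-s)) * X + Polynomial.C (K c)) ^ (N - i)).coeff j =
     K (((Polynomial.C c * X + Polynomial.C s) ^ i * (Polynomial.C (-s) * X + Polynomial.C c) ^ (N - i)).coeff j) := by
    intro i j
    rw [← coeff_map]
    simp only [Polynomial.map_mul, Polynomial.map_pow, Polynomial.map_add, map_C, map_X]
  have main : symTr (K c * K c + K s * (K s * T (-1))) (K c * -(K s * T 1) + K s * K c)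
      (K (-s) * K c + K c * (K s * T (-1))) (K (-s) * -(K s * T 1) + K c * K c) N =
      ∑ i ∈ range (N + 1), ∑ j ∈ range (N + 1),
        K (((Polynomial.C c * X + Polynomial.C s) ^ i * (Polynomial.C (-s) * X + Polynomial.C c) ^ (N - i)).coeff j *
        ((Polynomial.C c * X + Polynomial.C (-s)) ^ j * (Polynomial.C s * X + Polynomial.C c) ^ (N - j)).coeff i) * T ((j : ℤ) - i) := by
    unfold symTr
    refine sum_congr rfl fun i hi => ?_
    have hi' : i + (N - i) = N := by simp at hi; omega
    rw [hL, hL', homog_expand, hi', finsetSum_coeff]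
    refine sum_congr rfl fun j hj => ?_
    rw [coeff_C_mul, hco, hM, map_mul, mul_assoc]
  rw [main]
  have hsum : ∀ (n : ℕ) (F : ℕ → ℝ[T;T⁻¹]), (∑ i ∈ range n, F i).coeff k = ∑ i ∈ range n, (F i).coeff k := by
    intro n F
    rw [AddMonoidAlgebra.coeff_sum, Finset.sum_apply']
  rw [hsum]
  simp only [hsum]
  refine sum_nonneg fun i hi => sum_nonneg fun j hj => ?_
  rw [← single_eq_C_mul_T, AddMonoidAlgebra.coeff_single, Finsupp.single_apply]
  split_ifs
  swap
  · exact le_rfl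
  have hi' : i ≤ N := by simp at hi; omega
  have hj' : j ≤ N := by simp at hj; omega
  have hd := krawtchouk_duality c s N i j hi' hj'
  have p1 : (0 : ℝ) < N.choose i := by exact_mod_cast Nat.choose_pos hi'
  have p2 : (0 : ℝ) < N.choose j := by exact_mod_cast Nat.choose_pos hj'
  set m := ((Polynomial.C c * X + Polynomial.C s) ^ i * (Polynomial.C (-s) * X + Polynomial.C c) ^ (N - i)).coeff j
  set m' := ((Polynomial.C c * X + Polynomial.C (-s)) ^ j * (Polynomial.C s * X + Polynomial.C c) ^ (N - j)).coeff i
  have : 0 ≤ (N.choose i : ℝ) * (m * m') := by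
    calc (0 : ℝ) ≤ N.choose j * (m' * m') := mul_nonneg p2.le (mul_self_nonneg _)
      _ = _ := by linear_combination (-m') * hd
  exact nonneg_of_mul_nonneg_right this p1

open Polynomial Finset LaurentPolynomial in
/-- Positivity of the derivatives of de Branges' weights. With `c = √(1 - x)` and `s = √x` the matrix
of `symTr_laurent_nonneg` has determinant `1` and trace `2 (1 - x) + x (T + T⁻¹)`, so that the traces
of its symmetric powers satisfy the recursion of `wA`. -/
lemma wA_nonneg (N : ℕ) (k : ℤ) (x : ℝ) (h0 : 0 ≤ x) (h1 : x ≤ 1) : 0 ≤ (wA N k).eval x := by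
  have hc : √(1 - x) * √(1 - x) = 1 - x := Real.mul_self_sqrt (by linarith)
  have hs : √x * √x = x := Real.mul_self_sqrt h0
  have H := symTr_laurent_nonneg (√(1 - x)) (√x) N k
  set c := √(1 - x)
  set s := √x
  set K : ℝ →+* ℝ[T;T⁻¹] := LaurentPolynomial.C with hK
  have hT : (T 1 * T (-1) : ℝ[T;T⁻¹]) = 1 := by rw [← T_add]; simp
  have hKc : K c * K c = K (1 - x) := by rw [← map_mul, hc]
  have hKs : K s * K s = K x := by rw [← map_mul, hs]
  have h1' : K c * K c + K s * K s = 1 := by rw [hKc, hKs, ← map_add]; simp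
  set a := K c * K c + K s * (K s * T (-1))
  set b := K c * -(K s * T 1) + K s * K c
  set c' := K (-s) * K c + K c * (K s * T (-1))
  set d := K (-s) * -(K s * T 1) + K c * K c
  have htr : a + d = K (2 * (1 - x)) + K x * (T 1 + T (-1)) := by
    have : K (2 * (1 - x)) = 2 * K (1 - x) := by rw [map_mul]; congr 1
    rw [this]
    simp only [a, d, map_neg]
    linear_combination (T 1 + T (-1)) * hKs + 2 * hKc
  have hdet : a * d - b * c' = 1 := by
    simp only [a, b, c', d, map_neg]
    linear_combination (K c * K c + K s * K s + 1) * h1' + (K c * K c * K s * K s + K s * K s * K s * K s) * hT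
  have key : ∀ n, ∀ k : ℤ, (symTr a b c' d n).coeff k = (wA n k).eval x := by
    intro n
    have hC : ∀ (r : ℝ) (p : ℝ[T;T⁻¹]) (k : ℤ), (K r * p).coeff k = r * p.coeff k := by
      intro r p k
      rw [← LaurentPolynomial.smul_eq_C_mul]; rfl
    have hTm : ∀ (m : ℤ) (p : ℝ[T;T⁻¹]) (k : ℤ), (T m * p).coeff k = p.coeff (k - m) := by
      intro m p k
      have := AddMonoidAlgebra.coeff_single_mul_eq_mul_coeff (r := (1 : ℝ)) (x := p) (m := m) (m₁ := k) (k - m)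
        (fun m' _ => by omega)
      rw [one_mul] at this
      exact this
    induction n using Nat.twoStepInduction with
    | zero =>
      intro k
      have : symTr a b c' d 0 = T 0 := by simp [symTr]
      rw [this, T_apply, wA]
      by_cases h : k = 0
      · simp [h]
      · simp [h, Ne.symm h]
    | one =>
      intro k
      have : symTr a b c' d 1 = a + d := by
        simp [symTr, sum_range_succ, coeff_X, coeff_C, add_comm]
      rw [this, htr, AddMonoidAlgebra.coeff_add, Finsupp.add_apply, hC, AddMonoidAlgebra.coeff_add,
        Finsupp.add_apply, T_apply, T_apply, hK, C_apply, wA]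
      by_cases h : k = 0
      · simp [h]
      by_cases h : k = 1
      · simp [h]
      by_cases h : k = -1
      · simp [h]
      · simp [*, Ne.symm h]
        intro hh; omega
    | more n h0 h1 =>
      intro k
      rw [symTr_rec, wA_rec, htr, hdet, one_mul, add_mul, mul_assoc, add_mul]
      rw [AddMonoidAlgebra.coeff_sub, Finsupp.sub_apply, AddMonoidAlgebra.coeff_add, Finsupp.add_apply,
        hC, hC, AddMonoidAlgebra.coeff_add, Finsupp.add_apply, hTm, hTm, h0, h1, h1, h1, sub_neg_eq_add]
      simp
  rw [key] at H
  exact H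

/-! ### The de Branges quadratic identity -/

open Finset in
/-- The coefficients of `(1 + z G') P` when `c` and `d` are the coefficients of `G` and `P`. -/
noncomputable def dbD (c d : ℕ → ℂ) (k : ℕ) : ℂ :=
  ∑ j ∈ range (k + 1), (if j = 0 then 1 else (j : ℂ) * c j) * d (k - j)

open Finset in
/-- The rate of decrease, along a Loewner chain driven by the Carathéodory function with coefficients
`d`, of the Milin functional `∑ (k ‖c_k‖² - 4 / k) σ_k`, `1 ≤ k ≤ n`, whose weights
satisfy `x dσ_k/dx = k lam_k`, `x = e^{-t}`. -/
noncomputable def dbL (σ lam : ℕ → ℝ) (c d : ℕ → ℂ) (n : ℕ) : ℝ :=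
  ∑ k ∈ range n, (-((k + 1 : ℝ) * lam (k + 1)) * ((k + 1 : ℝ) * ‖c (k + 1)‖ ^ 2 - 4 / (k + 1 : ℝ)) +
    2 * (k + 1 : ℝ) * σ (k + 1) * ((starRingEnd ℂ) (c (k + 1)) * dbD c d (k + 1)).re)

/-- The coefficients of `(1 + z G') / (1 - κ z)`. -/
noncomputable def dbB (c : ℕ → ℂ) (κ : ℂ) : ℕ → ℂ
  | 0 => 1
  | k + 1 => κ * dbB c κ k + ((k + 1 : ℕ) : ℂ) * c (k + 1)

open Finset in
lemma dbB_sum (c : ℕ → ℂ) (κ : ℂ) (k : ℕ) :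
    ∑ j ∈ range (k + 1), (if j = 0 then 1 else (j : ℂ) * c j) * κ ^ (k - j) = dbB c κ k := by
  induction k with
  | zero => simp [dbB]
  | succ k ih =>
    rw [sum_range_succ, dbB, ← ih, mul_sum]
    congr 1
    · refine sum_congr rfl fun j hj => ?_
      have : j ≤ k := by simp at hj; omega
      rw [Nat.sub_add_comm this, pow_succ]; ring
    · simp

open Finset in
lemma dbD_kappa (c : ℕ → ℂ) (κ : ℂ) (k : ℕ) :
    dbD c (fun m => if m = 0 then 1 else 2 * κ ^ m) (k + 1) = dbB c κ (k + 1) + κ * dbB c κ k := by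
  rw [dbD, sum_range_succ, dbB, ← dbB_sum c κ k, mul_sum]
  have : ∀ j ∈ range (k + 1), (if j = 0 then 1 else (j : ℂ) * c j) * (if k + 1 - j = 0 then 1 else 2 * κ ^ (k + 1 - j)) =
     2 * (κ * ((if j = 0 then 1 else (j : ℂ) * c j) * κ ^ (k - j))) := by
    intro j hj
    have : j ≤ k := by simp at hj; omega
    rw [if_neg (show ¬ (k + 1 - j = 0) by omega), Nat.sub_add_comm this, pow_succ]; ring
  rw [sum_congr rfl this, ← mul_sum]
  simp
  ring

open Finset in
/-- De Branges' identity: for the Carathéodory function `(1 + κ z) / (1 - κ z)` the form `dbL` is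
`∑ lam_k |B_k + κ B_{k-1}|²`, the remaining terms telescoping. -/
lemma dbL_kappa (σ lam : ℕ → ℝ) (n : ℕ) (hσ : ∀ k, 1 ≤ k → σ k = σ (k + 1) + lam k + lam (k + 1))
    (h0 : σ (n + 1) = 0) (h0' : lam (n + 1) = 0) (hl : ∀ k, 1 ≤ k → 0 ≤ lam k) (c : ℕ → ℂ) (κ : ℂ) (hκ : ‖κ‖ = 1) :
    0 ≤ dbL σ lam c (fun m => if m = 0 then 1 else 2 * κ ^ m) n := by
  set B := dbB c κ with hB
  have hBs : ∀ k, B (k + 1) = κ * B k + ((k + 1 : ℕ) : ℂ) * c (k + 1) := fun k => rfl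
  have term : ∀ k : ℕ, (-((k + 1 : ℝ) * lam (k + 1)) * ((k + 1 : ℝ) * ‖c (k + 1)‖ ^ 2 - 4 / (k + 1 : ℝ)) +
    2 * (k + 1 : ℝ) * σ (k + 1) * ((starRingEnd ℂ) (c (k + 1)) * dbD c (fun m => if m = 0 then 1 else 2 * κ ^ m) (k + 1)).re)
     = lam (k + 1) * normSq (B (k + 1) + κ * B k) +
      (2 * (σ (k + 1) - lam (k + 1)) * (normSq (B (k + 1)) - 1) - 2 * (σ (k + 1) + lam (k + 1)) * (normSq (B k) - 1)) := by
    intro k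
    rw [dbD_kappa, ← hB]
    have hk1 : (k + 1 : ℝ) ≠ 0 := by positivity
    have e1 : -((k + 1 : ℝ) * lam (k + 1)) * ((k + 1 : ℝ) * ‖c (k + 1)‖ ^ 2 - 4 / (k + 1 : ℝ)) =
      - lam (k + 1) * (normSq (((k + 1 : ℕ) : ℂ) * c (k + 1)) - 4) := by
      rw [Complex.normSq_mul, Complex.normSq_natCast, Complex.normSq_eq_norm_sq]; push_cast; field_simp
    have e2 : (k + 1 : ℝ) * ((starRingEnd ℂ) (c (k + 1)) * (B (k + 1) + κ * B k)).re =
       ((starRingEnd ℂ) (((k + 1 : ℕ) : ℂ) * c (k + 1)) * (B (k + 1) + κ * B k)).re := by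
      rw [map_mul, Complex.conj_natCast, mul_assoc, ← Complex.ofReal_natCast, Complex.re_ofReal_mul]; push_cast; ring
    have e3 : ((k + 1 : ℕ) : ℂ) * c (k + 1) = B (k + 1) - κ * B k := by rw [hBs]; ring
    rw [e1, mul_comm 2 (k + 1 : ℝ), mul_assoc, mul_assoc, mul_left_comm 2, mul_left_comm (k + 1 : ℝ), mul_left_comm (k + 1 : ℝ) , e2, e3]
    have e4 : normSq (B k) = normSq (κ * B k) := by
      rw [Complex.normSq_mul, Complex.normSq_eq_norm_sq κ, hκ]; ring
    rw [e4]
    generalize κ * B k = u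
    generalize B (k + 1) = v
    simp only [Complex.normSq_apply, Complex.mul_re, Complex.conj_re, Complex.conj_im, Complex.sub_re, Complex.sub_im, Complex.add_re, Complex.add_im]
    ring
  have tel : ∀ m, ∑ k ∈ range m, (2 * (σ (k + 1) - lam (k + 1)) * (normSq (B (k + 1)) - 1) - 2 * (σ (k + 1) + lam (k + 1)) * (normSq (B k) - 1))
     = 2 * (σ (m + 1) + lam (m + 1)) * (normSq (B m) - 1) := by
    intro m
    induction m with
    | zero => simp [hB, dbB]
    | succ m ih =>
      rw [sum_range_succ, ih]
      have := hσ (m + 1) (by omega)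
      linear_combination 2 * (normSq (B (m + 1)) - 1) * this
  unfold dbL
  rw [sum_congr rfl fun k _ => term k, sum_add_distrib, tel, h0, h0']
  simp only [add_zero, mul_zero, zero_mul]
  exact sum_nonneg fun k _ => mul_nonneg (hl _ (by omega)) (Complex.normSq_nonneg _)

open Finset in
lemma dbL_affine (σ lam : ℕ → ℝ) (c : ℕ → ℂ) (n : ℕ) : ∃ (l : ℝ) (a : ℕ → ℂ), ∀ d : ℕ → ℂ,
    dbL σ lam c d n = l + (∑ m ∈ range (n + 1), a m * d m).re := by
  refine ⟨∑ k ∈ range n, (-((k + 1 : ℝ) * lam (k + 1)) * ((k + 1 : ℝ) * ‖c (k + 1)‖ ^ 2 - 4 / (k + 1 : ℝ))),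
    fun m => ∑ k ∈ range n, ∑ j ∈ range (k + 2), if k + 1 - j = m then
      ((2 * (k + 1 : ℝ) * σ (k + 1) : ℝ) : ℂ) * ((starRingEnd ℂ) (c (k + 1)) * (if j = 0 then 1 else (j : ℂ) * c j)) else 0, fun d => ?_⟩
  rw [dbL, sum_add_distrib]
  congr 1
  simp only [sum_mul]
  rw [sum_comm, Complex.re_sum]
  refine sum_congr rfl fun k hk => ?_
  have hk' : k < n := by simpa using hk
  rw [sum_comm, ← Complex.re_ofReal_mul, dbD]
  congr 1
  rw [mul_sum, mul_sum]
  refine sum_congr rfl fun j hj => ?_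
  simp only [ite_mul, zero_mul]
  rw [sum_ite_eq, if_pos (show k + 1 - j ∈ range (n + 1) from mem_range.2 (by omega))]
  split_ifs <;> ring

/-! ### Injective holomorphic functions and normal families -/

open scoped Topology
open Filter

theorem inj_nhds_le_map {Ω : Set ℂ} (hΩ : IsOpen Ω) {f : ℂ → ℂ} (hf : DifferentiableOn ℂ f Ω)
    (hi : Set.InjOn f Ω) {z : ℂ} (hz : z ∈ Ω) : 𝓝 (f z) ≤ map f (𝓝 z) := by
  refine (AnalyticAt.eventually_constant_or_nhds_le_map_nhds_aux
    (hf.analyticAt (hΩ.mem_nhds hz))).resolve_left fun h => ?_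
  have h2 : ∀ᶠ w in 𝓝 z, w = z := by
    filter_upwards [h, hΩ.mem_nhds hz] with w hw hw' using hi hw' hz hw
  have h3 : ∀ᶠ w in 𝓝[≠] z, w = z := h2.filter_mono nhdsWithin_le_nhds
  have h4 : ∀ᶠ w in 𝓝[≠] z, w ≠ z := eventually_mem_nhdsWithin
  obtain ⟨w, h, h'⟩ := (h3.and h4).exists
  exact h' h

theorem inj_isOpen_image {Ω s : Set ℂ} (hΩ : IsOpen Ω) {f : ℂ → ℂ} (hf : DifferentiableOn ℂ f Ω)
    (hi : Set.InjOn f Ω) (hs : IsOpen s) (hsub : s ⊆ Ω) : IsOpen (f '' s) := by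
  rw [isOpen_iff_mem_nhds]
  rintro _ ⟨z, hz, rfl⟩
  exact inj_nhds_le_map hΩ hf hi (hsub hz) (image_mem_map (hs.mem_nhds hz))

/-- A left inverse of an injective holomorphic function is continuous. -/
theorem inj_inv_continuousAt {Ω : Set ℂ} (hΩ : IsOpen Ω) {f h : ℂ → ℂ}
    (hf : DifferentiableOn ℂ f Ω) (hi : Set.InjOn f Ω) (hh : ∀ z ∈ Ω, h (f z) = z)
    {z : ℂ} (hz : z ∈ Ω) : ContinuousAt h (f z) := by
  have : Tendsto h (map f (𝓝 z)) (𝓝 z) := by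
    rw [tendsto_map'_iff]
    refine tendsto_id.congr' ?_
    filter_upwards [hΩ.mem_nhds hz] with w hw
    simp [hh w hw]
  rw [ContinuousAt, hh z hz]
  exact this.mono_left (inj_nhds_le_map hΩ hf hi hz)

/-- The inverse of an injective holomorphic function is holomorphic: it is continuous, and
differentiable away from the isolated critical values, which are then removable. -/
theorem inj_inv_differentiableAt {Ω : Set ℂ} (hΩ : IsOpen Ω) {f h : ℂ → ℂ}
    (hf : DifferentiableOn ℂ f Ω) (hi : Set.InjOn f Ω) (hh : ∀ z ∈ Ω, h (f z) = z)
    {z : ℂ} (hz : z ∈ Ω) : DifferentiableAt ℂ h (f z) := by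
  have key : ∀ w ∈ Ω, deriv f w ≠ 0 → DifferentiableAt ℂ h (f w) := by
    intro w hw hd
    have h1 := inj_inv_continuousAt hΩ hf hi hh hw
    have h2 : HasDerivAt f (deriv f w) (h (f w)) := by
      rw [hh w hw]; exact (hf.differentiableAt (hΩ.mem_nhds hw)).hasDerivAt
    refine (HasDerivAt.of_local_left_inverse h1 h2 hd ?_).differentiableAt
    have := inj_nhds_le_map hΩ hf hi hw (image_mem_map (hΩ.mem_nhds hw))
    filter_upwards [this]
    rintro _ ⟨u, hu, rfl⟩
    rw [hh u hu]
  have h1 : ∀ᶠ w in 𝓝[≠] z, deriv f w ≠ 0 := by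
    rcases ((hf.analyticAt (hΩ.mem_nhds hz)).deriv).eventually_eq_zero_or_eventually_ne_zero with
      h | h
    · exfalso
      obtain ⟨r, hr, hr'⟩ := Metric.eventually_nhds_iff_ball.1 (h.and (hΩ.mem_nhds hz))
      have hc : ∀ w ∈ ball z r, f w = f z := by
        intro w hw
        refine isOpen_ball.is_const_of_deriv_eq_zero (convex_ball z r).isPreconnected
          (hf.mono fun u hu => (hr' u hu).2) (fun u hu => (hr' u hu).1) hw (mem_ball_self hr)
      have h3 : ∀ᶠ w in 𝓝[≠] z, w ∈ ball z r := mem_nhdsWithin_of_mem_nhds (ball_mem_nhds z hr)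
      have h4 : ∀ᶠ w in 𝓝[≠] z, w ≠ z := eventually_mem_nhdsWithin
      obtain ⟨w, h, h'⟩ := (h3.and h4).exists
      exact h' (hi (hr' w h).2 hz (hc w h))
    · exact h
  obtain ⟨r, hr, hr'⟩ := Metric.eventually_nhds_iff_ball.1
    ((eventually_nhdsWithin_iff.1 h1).and (hΩ.mem_nhds hz))
  have hO : IsOpen (f '' ball z r) := inj_isOpen_image hΩ hf hi isOpen_ball fun u hu => (hr' u hu).2
  have hm : f '' ball z r ∈ 𝓝 (f z) := hO.mem_nhds ⟨z, mem_ball_self hr, rfl⟩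
  refine ((Complex.differentiableOn_compl_singleton_and_continuousAt_iff hm).1 ⟨?_,
    inj_inv_continuousAt hΩ hf hi hh hz⟩).differentiableAt hm
  rintro _ ⟨⟨u, hu, rfl⟩, hne⟩
  refine (key u (hr' u hu).2 ((hr' u hu).1 ?_)).differentiableWithinAt
  rintro rfl
  exact hne rfl

theorem inj_deriv_ne_zero {Ω : Set ℂ} (hΩ : IsOpen Ω) {f : ℂ → ℂ}
    (hf : DifferentiableOn ℂ f Ω) (hi : Set.InjOn f Ω) {z : ℂ} (hz : z ∈ Ω) : deriv f z ≠ 0 := by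
  have hh : ∀ w ∈ Ω, Function.invFunOn f Ω (f w) = w := fun w hw => hi.leftInvOn_invFunOn hw
  have h1 := inj_inv_differentiableAt hΩ hf hi hh hz
  have h2 := (hf.differentiableAt (hΩ.mem_nhds hz))
  have h3 := h1.hasDerivAt.comp z h2.hasDerivAt
  have h4 : HasDerivAt (Function.invFunOn f Ω ∘ f) 1 z := by
    refine (hasDerivAt_id z).congr_of_eventuallyEq ?_
    filter_upwards [hΩ.mem_nhds hz] with w hw
    simp [hh w hw]
  intro h0
  have := h3.unique h4
  rw [h0] at this
  simp at this

/-- Montel's theorem along an ultrafilter: uniformly bounded holomorphic functions converge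
locally uniformly to a holomorphic function. -/
theorem ultra_limit {ι : Type*} (l : Ultrafilter ι) {Ω : Set ℂ} (hΩ : IsOpen Ω) {F : ι → ℂ → ℂ}
    (hF : ∀ i, DifferentiableOn ℂ (F i) Ω) {M : ℝ} (hM : ∀ i, ∀ z ∈ Ω, ‖F i z‖ ≤ M) :
    ∃ f : ℂ → ℂ, TendstoLocallyUniformlyOn F f l Ω ∧ DifferentiableOn ℂ f Ω := by
  have hex : ∀ z, ∃ y, z ∈ Ω → Tendsto (fun i => F i z) l (𝓝 y) := by
    intro z
    by_cases hz : z ∈ Ω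
    · have : ∃ y ∈ closedBall (0:ℂ) M, ((l.map fun i => F i z : Ultrafilter ℂ) : Filter ℂ) ≤ 𝓝 y := by
        refine (isCompact_closedBall (0:ℂ) M).ultrafilter_le_nhds _ ?_
        rw [Filter.le_principal_iff]
        have : ∀ᶠ i in (l : Filter ι), F i z ∈ closedBall (0:ℂ) M :=
          Filter.Eventually.of_forall fun i => by simpa using hM i z hz
        exact this
      obtain ⟨y, -, hy⟩ := this
      exact ⟨y, fun _ => hy⟩
    · exact ⟨0, fun h => absurd h hz⟩
  choose f hf using hex
  have hlu : TendstoLocallyUniformlyOn F f l Ω := by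
    rw [Metric.tendstoLocallyUniformlyOn_iff]
    intro ε hε z hz
    obtain ⟨r, hr, hr'⟩ := Metric.isOpen_iff.1 hΩ z hz
    -- on `ball z (r/2)` all `F i` are `K`-Lipschitz
    have hM0 : 0 ≤ M := by
      obtain ⟨i⟩ : Nonempty ι := by
        by_contra h
        rw [not_nonempty_iff] at h
        exact l.neBot.ne (Filter.filter_eq_bot_of_isEmpty _)
      exact (norm_nonneg _).trans (hM i z hz)
    set K : ℝ := 2 * M / r + 1 with hK
    have hKpos : 0 < K := by positivity
    have hlip : ∀ i, ∀ w ∈ ball z r, ‖F i w - F i z‖ ≤ K * ‖w - z‖ := by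
      intro i w hw
      have hmt : Set.MapsTo (F i) (ball z r) (closedBall (F i z) (2*M)) := by
        intro u hu
        rw [mem_closedBall, dist_eq_norm]
        calc ‖F i u - F i z‖ ≤ ‖F i u‖ + ‖F i z‖ := norm_sub_le _ _
          _ ≤ 2 * M := by linarith [hM i u (hr' hu), hM i z hz]
      have := Complex.dist_le_div_mul_dist_of_mapsTo_ball ((hF i).mono hr')
        hmt hw
      rw [dist_eq_norm, dist_eq_norm] at this
      refine this.trans ?_
      gcongr
      linarith
    have hlipf : ∀ w ∈ ball z r, ‖f w - f z‖ ≤ K * ‖w - z‖ := by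
      intro w hw
      have h1 := ((hf w (hr' hw)).sub (hf z hz)).norm
      exact le_of_tendsto h1 (Eventually.of_forall fun i => hlip i w hw)
    refine ⟨ball z (min r (ε / (4*K))) , mem_nhdsWithin_of_mem_nhds (ball_mem_nhds z (by positivity)), ?_⟩
    filter_upwards [(hf z hz) (ball_mem_nhds _ (half_pos hε))] with i hi w hw
    have hw1 : w ∈ ball z r := ball_subset_ball (min_le_left _ _) hw
    have hw2 : K * ‖w - z‖ < ε / 4 := by
      have : ‖w - z‖ < ε / (4*K) := by
        have := ball_subset_ball (min_le_right r _) hw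
        rwa [mem_ball, dist_eq_norm] at this
      calc K * ‖w - z‖ < K * (ε / (4*K)) := by gcongr
        _ = ε / 4 := by field_simp
    have hi' : ‖F i z - f z‖ < ε/2 := by
      simpa [dist_eq_norm] using hi
    rw [dist_eq_norm]
    have e : f w - F i w = (f w - f z) - (F i w - F i z) - (F i z - f z) := by ring
    rw [e]
    calc _ ≤ ‖f w - f z‖ + ‖F i w - F i z‖ + ‖F i z - f z‖ :=
          (norm_sub_le _ _).trans (add_le_add_left (norm_sub_le _ _) _)
      _ < ε := by linarith [hlip i w hw1, hlipf w hw1]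
  exact ⟨f, hlu, hlu.differentiableOn (Eventually.of_forall hF) hΩ⟩

/-- Hurwitz: a nonconstant locally uniform limit of injective holomorphic functions is
injective. -/
theorem hurwitz_injOn {ι : Type*} {l : Filter ι} [l.NeBot] {Ω : Set ℂ} (hΩ : IsOpen Ω)
    (hc : IsPreconnected Ω) {F : ι → ℂ → ℂ} {f : ℂ → ℂ}
    (hF : ∀ i, DifferentiableOn ℂ (F i) Ω) (hlu : TendstoLocallyUniformlyOn F f l Ω)
    (hi : ∀ i, Set.InjOn (F i) Ω) {z₀ : ℂ} (hz₀ : z₀ ∈ Ω) (hd : deriv f z₀ ≠ 0) :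
    Set.InjOn f Ω := by
  have hf : DifferentiableOn ℂ f Ω := hlu.differentiableOn (Eventually.of_forall hF) hΩ
  intro a ha b hb hab
  by_contra hne
  have hfa : AnalyticOnNhd ℂ f Ω := hf.analyticOnNhd hΩ
  have h1 : ∀ᶠ z in 𝓝[≠] b, f z ≠ f a := by
    rcases (hfa b hb).eventually_eq_or_eventually_ne (analyticAt_const (v := f a)) with h | h
    · exfalso
      have := hfa.eqOn_of_preconnected_of_eventuallyEq analyticOnNhd_const hc hb h
      have h2 : f =ᶠ[𝓝 z₀] fun _ => f a := by
        filter_upwards [hΩ.mem_nhds hz₀] with w hw using this hw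
      rw [h2.deriv_eq] at hd
      simp at hd
    · exact h
  obtain ⟨r, hr, hr'⟩ := Metric.eventually_nhds_iff_ball.1
    (((eventually_nhdsWithin_iff.1 h1).and (hΩ.mem_nhds hb)).and
      (isOpen_ne.mem_nhds (show b ≠ a from fun h => hne h.symm)))
  set s := r / 2 with hs
  have hs0 : 0 < s := by positivity
  have hsub : closedBall b s ⊆ ball b r := closedBall_subset_ball (by linarith)
  have hcs : closedBall b s ⊆ Ω := fun z hz => (hr' z (hsub hz)).1.2
  obtain ⟨δ, hδ, hδ'⟩ : ∃ δ > 0, ∀ z ∈ sphere b s, δ ≤ ‖f z - f a‖ := by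
    have hcont : ContinuousOn (fun z => ‖f z - f a‖) (sphere b s) :=
      ((hf.continuousOn.mono (sphere_subset_closedBall.trans hcs)).sub continuousOn_const).norm
    obtain ⟨x, hx, hx'⟩ := (isCompact_sphere b s).exists_isMinOn
      (NormedSpace.sphere_nonempty.2 hs0.le) hcont
    refine ⟨‖f x - f a‖, ?_, fun z hz => hx' hz⟩
    rw [gt_iff_lt, norm_pos_iff, sub_ne_zero]
    refine (hr' x (hsub (sphere_subset_closedBall hx))).1.1 ?_
    rintro rfl
    simp at hx
    linarith
  have hcomp : IsCompact (closedBall b s ∪ {a}) := (isCompact_closedBall b s).union isCompact_singleton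
  have hu := (tendstoLocallyUniformlyOn_iff_forall_isCompact hΩ).1 hlu _
    (Set.union_subset hcs (Set.singleton_subset_iff.2 ha)) hcomp
  rw [Metric.tendstoUniformlyOn_iff] at hu
  obtain ⟨i, hi'⟩ := (hu (δ/8) (by positivity)).exists
  have hbd : ∀ z ∈ closedBall b s ∪ {a}, ‖f z - F i z‖ < δ/8 := fun z hz => by
    simpa [dist_eq_norm] using hi' z hz
  have hdc : DiffContOnCl ℂ (F i) (ball b s) := by
    refine DifferentiableOn.diffContOnCl ?_
    rw [closure_ball b hs0.ne']
    exact (hF i).mono hcs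
  have hb1 := hbd b (Or.inl (mem_closedBall_self hs0.le))
  have ha1 := hbd a (Or.inr rfl)
  have hball := hdc.ball_subset_image_closedBall hs0 (ε := δ/2) (fun z hz => by
      have hz1 := hbd z (Or.inl (sphere_subset_closedBall hz))
      have h2 := hδ' z hz
      have e : f z - f a = (f z - F i z) + (F i z - F i b) - (f b - F i b) := by rw [hab]; ring
      have : ‖f z - f a‖ ≤ ‖f z - F i z‖ + ‖F i z - F i b‖ + ‖f b - F i b‖ := by
        rw [e]; exact (norm_sub_le _ _).trans (add_le_add_left (norm_add_le _ _) _)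
      linarith)
    (by
      have h3 : ∃ᶠ z in 𝓝[≠] b, F i z ≠ F i b := by
        refine Eventually.frequently ?_
        filter_upwards [mem_nhdsWithin_of_mem_nhds (hΩ.mem_nhds hb), self_mem_nhdsWithin] with z hz hz'
        exact fun h => hz' (hi i hz hb h)
      exact h3.filter_mono nhdsWithin_le_nhds)
  obtain ⟨u, hu1, hu2⟩ := hball (show F i a ∈ ball (F i b) (δ/2/2) by
    rw [mem_ball, dist_eq_norm]
    have e : F i a - F i b = (f b - F i b) - (f a - F i a) := by rw [hab]; ring
    rw [e]
    calc _ ≤ ‖f b - F i b‖ + ‖f a - F i a‖ := norm_sub_le _ _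
      _ < _ := by linarith)
  have := hi i (hcs hu1) ha hu2
  exact (hr' u (hsub hu1)).2 this

/-! ### The Cauchy–Pompeiu formula -/

section

open MeasureTheory

/-- The Wirtinger operator `∂x + i ∂y` (twice the `∂̄` operator). -/
noncomputable def dbar (u : ℂ → ℂ) (w : ℂ) : ℂ := fderiv ℝ u w 1 + I * fderiv ℝ u w I

theorem dbar_continuous {u : ℂ → ℂ} (hu : ContDiff ℝ 1 u) : Continuous (dbar u) := by
  have h := hu.continuous_fderiv one_ne_zero
  unfold dbar
  exact (h.clm_apply continuous_const).add (continuous_const.mul (h.clm_apply continuous_const))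

theorem dbar_eq_zero_of_eventually {u : ℂ → ℂ} {w c : ℂ} (h : u =ᶠ[𝓝 w] fun _ => c) :
    dbar u w = 0 := by
  simp [dbar, h.fderiv_eq]

theorem dbar_congr {u v : ℂ → ℂ} {w : ℂ} (h : u =ᶠ[𝓝 w] v) : dbar u w = dbar v w := by
  simp [dbar, h.fderiv_eq]

theorem dbar_tsupport (u : ℂ → ℂ) : tsupport (dbar u) ⊆ tsupport u := by
  refine closure_minimal ?_ (isClosed_tsupport u)
  intro w hw
  by_contra h
  exact hw (dbar_eq_zero_of_eventually (notMem_tsupport_iff_eventuallyEq.1 h))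

theorem dbar_hasCompactSupport {u : ℂ → ℂ} (h : HasCompactSupport u) :
    HasCompactSupport (dbar u) :=
  h.of_isClosed_subset (isClosed_tsupport _) (dbar_tsupport u)

theorem integral_fderiv_zero {u : ℂ → ℂ} (hu : ContDiff ℝ 1 u) (hc : HasCompactSupport u) (v : ℂ) :
    ∫ w, fderiv ℝ u w v = 0 := by
  have h0 : HasCompactSupport (fun x => fderiv ℝ u x v) := hc.fderiv_apply ℝ v
  have hcont := (hu.continuous_fderiv one_ne_zero).clm_apply (continuous_const (y := v))
  have := integral_mul_fderiv_eq_neg_fderiv_mul_of_integrable (𝕜 := ℂ) (μ := volume)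
    (f := fun _ => (1:ℂ)) (g := u) (v := v) (by simp)
    (by simpa using hcont.integrable_of_hasCompactSupport h0)
    (by simpa using hu.continuous.integrable_of_hasCompactSupport hc)
    (fun _ _ => differentiableAt_const _) (fun x _ => (hu.differentiable one_ne_zero) x)
  simpa using this

theorem integral_dbar_zero {u : ℂ → ℂ} (hu : ContDiff ℝ 1 u) (hc : HasCompactSupport u) :
    ∫ w, dbar u w = 0 := by
  have h0 : ∀ v, Integrable (fun x => fderiv ℝ u x v) := fun v =>
    ((hu.continuous_fderiv one_ne_zero).clm_apply
      (continuous_const (y := v))).integrable_of_hasCompactSupport (hc.fderiv_apply ℝ v)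
  unfold dbar
  rw [integral_add (h0 1) ((h0 I).const_mul _), integral_const_mul, integral_fderiv_zero hu hc,
    integral_fderiv_zero hu hc]
  simp

theorem dbar_mul_holo {u h : ℂ → ℂ} {w : ℂ} (hu : DifferentiableAt ℝ u w)
    (hh : DifferentiableAt ℂ h w) : dbar (fun x => u x * h x) w = dbar u w * h w := by
  have h1 : HasFDerivAt h ((ContinuousLinearMap.toSpanSingleton ℂ (deriv h w)).restrictScalars ℝ) w :=
    hh.hasDerivAt.hasFDerivAt.restrictScalars ℝ
  have h2 := (hu.hasFDerivAt.mul h1).fderiv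
  unfold dbar
  have e : fderiv ℝ (fun x => u x * h x) w = _ := h2
  rw [e]
  simp [ContinuousLinearMap.toSpanSingleton_apply]
  linear_combination (u w * deriv h w) * I_mul_I

/-- A function continuous on an open set times a cutoff supported there is continuous. -/
theorem continuous_cut {φ k : ℂ → ℂ} {W : Set ℂ} (hφ : Continuous φ) (hW : IsOpen W)
    (hs : tsupport φ ⊆ W) (hk : ContinuousOn k W) : Continuous fun w => φ w * k w := by
  rw [continuous_iff_continuousAt]
  intro w
  by_cases hw : w ∈ tsupport φ
  · exact hφ.continuousAt.mul (hk.continuousAt (hW.mem_nhds (hs hw)))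
  · have : (fun w => φ w * k w) =ᶠ[𝓝 w] fun _ => 0 := by
      filter_upwards [notMem_tsupport_iff_eventuallyEq.1 hw] with x hx
      simp [hx]
    exact continuousAt_const.congr this.symm

theorem contDiff_cut {φ k : ℂ → ℂ} {W : Set ℂ} (hφ : ContDiff ℝ 1 φ) (hW : IsOpen W)
    (hs : tsupport φ ⊆ W) (hk : DifferentiableOn ℂ k W) : ContDiff ℝ 1 fun w => φ w * k w := by
  rw [contDiff_iff_contDiffAt]
  intro w
  by_cases hw : w ∈ tsupport φ
  · have h1 : ContDiffAt ℂ 1 k w :=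
      (hk.analyticAt (hW.mem_nhds (hs hw))).contDiffAt
    exact hφ.contDiffAt.mul (h1.restrict_scalars ℝ)
  · have : (fun w => φ w * k w) =ᶠ[𝓝 w] fun _ => 0 := by
      filter_upwards [notMem_tsupport_iff_eventuallyEq.1 hw] with x hx
      simp [hx]
    exact contDiffAt_const.congr_of_eventuallyEq this

theorem hasCompactSupport_cut {φ k : ℂ → ℂ} (h : HasCompactSupport φ) :
    HasCompactSupport fun w => φ w * k w := h.mul_right

/-- Stokes' theorem for a cutoff times a holomorphic function. -/
theorem integral_dbar_cut {φ k : ℂ → ℂ} {W : Set ℂ} (hφ : ContDiff ℝ 1 φ) (hW : IsOpen W)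
    (hc : HasCompactSupport φ)
    (hs : tsupport φ ⊆ W) (hk : DifferentiableOn ℂ k W) : ∫ w, dbar φ w * k w = 0 := by
  rw [← integral_dbar_zero (contDiff_cut hφ hW hs hk) (hasCompactSupport_cut hc)]
  congr 1
  ext w
  by_cases hw : w ∈ tsupport φ
  · exact (dbar_mul_holo ((hφ.differentiable one_ne_zero) w)
      (hk.differentiableAt (hW.mem_nhds (hs hw)))).symm
  · have h0 := notMem_tsupport_iff_eventuallyEq.1 hw
    have : (fun w => φ w * k w) =ᶠ[𝓝 w] fun _ => 0 := by
      filter_upwards [h0] with x hx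
      simp [hx]
    rw [dbar_eq_zero_of_eventually (c := 0) h0, dbar_eq_zero_of_eventually this, zero_mul]

/-- A radial bump function, equal to `1` on the unit disc. -/
noncomputable def bump0 (w : ℂ) : ℂ := ((1 - Real.smoothTransition (normSq w - 1) : ℝ) : ℂ)

theorem normSq_contDiff : ContDiff ℝ 1 (fun w : ℂ => normSq w) := by
  have : (fun w : ℂ => normSq w) = fun w => ‖w‖^2 := by ext w; exact normSq_eq_norm_sq w
  rw [this]
  exact contDiff_norm_sq ℝ

theorem bump0_contDiff : ContDiff ℝ 1 bump0 := by
  unfold bump0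
  have h : ContDiff ℝ 1 (fun w : ℂ => (1 - Real.smoothTransition (normSq w - 1) : ℝ)) :=
    contDiff_const.sub ((Real.smoothTransition.contDiff (n := 1)).comp
      (normSq_contDiff.sub contDiff_const))
  exact (ofRealCLM.contDiff (n := 1)).comp h

theorem bump0_hasCompactSupport : HasCompactSupport bump0 := by
  refine HasCompactSupport.of_support_subset_isCompact (isCompact_closedBall (0:ℂ) 2) ?_
  intro w hw
  by_contra h
  apply hw
  simp only [mem_closedBall, dist_zero_right, not_le] at h
  have : 1 ≤ normSq w - 1 := by rw [normSq_eq_norm_sq]; nlinarith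
  simp [bump0, Real.smoothTransition.one_of_one_le this]

theorem bump0_eventually : bump0 =ᶠ[𝓝 0] fun _ => 1 := by
  filter_upwards [ball_mem_nhds (0:ℂ) one_pos] with w hw
  have : normSq w - 1 ≤ 0 := by
    rw [normSq_eq_norm_sq]
    simp at hw
    nlinarith [norm_nonneg w]
  simp [bump0, Real.smoothTransition.zero_of_nonpos this]

theorem dbar_bump0 (w : ℂ) :
    dbar bump0 w = -2 * (deriv Real.smoothTransition (normSq w - 1) : ℝ) * w := by
  have h1 : HasFDerivAt (fun w : ℂ => normSq w) (2 • innerSL ℝ w) w := by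
    have : (fun w : ℂ => normSq w) = fun w => ‖w‖^2 := by ext w; exact normSq_eq_norm_sq w
    rw [this]
    exact (hasStrictFDerivAt_norm_sq w).hasFDerivAt
  have h2 : HasDerivAt Real.smoothTransition (deriv Real.smoothTransition (normSq w - 1))
      (normSq w - 1) :=
    (((Real.smoothTransition.contDiff (n := 1)).differentiable one_ne_zero) _).hasDerivAt
  have h3 := (h2.comp_hasFDerivAt w (h1.sub_const 1)).const_sub 1
  have h4 := ofRealCLM.hasFDerivAt.comp w h3
  have h5 : HasFDerivAt bump0 _ w := h4
  unfold dbar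
  rw [h5.fderiv]
  simp [Complex.inner]
  apply Complex.ext <;> simp <;> ring

/-- The constant in the Cauchy-Pompeiu formula. -/
noncomputable def kap0 : ℂ := ∫ w, dbar bump0 w * w⁻¹

theorem kap0_ne_zero : kap0 ≠ 0 := by
  set q : ℂ → ℝ := fun w => 2 * deriv Real.smoothTransition (normSq w - 1) with hq
  have hST := Real.smoothTransition.contDiff (n := 1)
  have hd0 : ∀ x : ℝ, x < 0 → deriv Real.smoothTransition x = 0 := fun x hx => by
    have : Real.smoothTransition =ᶠ[𝓝 x] fun _ => 0 := by
      filter_upwards [Iio_mem_nhds hx] with y hy using Real.smoothTransition.zero_of_nonpos hy.le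
    simp [this.deriv_eq]
  have hd1 : ∀ x : ℝ, 1 < x → deriv Real.smoothTransition x = 0 := fun x hx => by
    have : Real.smoothTransition =ᶠ[𝓝 x] fun _ => 1 := by
      filter_upwards [Ioi_mem_nhds hx] with y hy using Real.smoothTransition.one_of_one_le (le_of_lt hy)
    simp [this.deriv_eq]
  have h1 : kap0 = ((-∫ w, q w : ℝ) : ℂ) := by
    rw [← integral_neg, ← integral_complex_ofReal]
    unfold kap0
    congr 1
    ext w
    rw [dbar_bump0]
    by_cases hw : w = 0
    · subst hw
      simp [hq, hd0]
    · simp only [hq]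
      field_simp
      push_cast
      ring
  have hqc : Continuous q :=
    continuous_const.mul ((hST.continuous_deriv le_rfl).comp
      (normSq_contDiff.continuous.sub continuous_const))
  have hpos : 0 < ∫ w, q w := by
    have hqcs : HasCompactSupport q := by
      refine HasCompactSupport.of_support_subset_isCompact (isCompact_closedBall (0:ℂ) 2) ?_
      intro w hw
      by_contra h
      apply hw
      simp only [mem_closedBall, dist_zero_right, not_le] at h
      have : 1 < normSq w - 1 := by rw [normSq_eq_norm_sq]; nlinarith
      simp [hq, hd1 _ this]
    obtain ⟨x, hx, hx'⟩ := exists_hasDerivAt_eq_slope Real.smoothTransition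
      (deriv Real.smoothTransition) (a := 0) (b := 1) one_pos
      Real.smoothTransition.continuous.continuousOn
      (fun x _ => (hST.differentiable one_ne_zero x).hasDerivAt)
    refine hqc.integral_pos_of_hasCompactSupport_nonneg_nonzero hqcs ?_
      (x := ((Real.sqrt (x+1) : ℝ) : ℂ)) ?_
    · intro w
      have := Real.smoothTransition.monotone.deriv_nonneg (x := normSq w - 1)
      simp only [hq, Pi.zero_apply]
      linarith
    · simp only [hq, normSq_ofReal, Real.mul_self_sqrt (show 0 ≤ x + 1 by linarith [hx.1]),
        add_sub_cancel_right, hx']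
      simp
  rw [h1]
  simpa using (ne_of_gt hpos)

/-- Cauchy-Pompeiu: a holomorphic function is reproduced from the annular region where the
cutoff `χ` varies. -/
theorem pompeiu {V : Set ℂ} (hV : IsOpen V) {g χ : ℂ → ℂ} (hg : DifferentiableOn ℂ g V)
    (hχ : ContDiff ℝ 1 χ) (hc : HasCompactSupport χ) (hs : tsupport χ ⊆ V) {z : ℂ} (hz : z ∈ V)
    (h1 : χ =ᶠ[𝓝 z] fun _ => 1) : ∫ w, dbar χ w * (g w / (w - z)) = kap0 * g z := by
  have hsup : ∀ φ : ℂ → ℂ, φ =ᶠ[𝓝 z] (fun _ => 1) → tsupport (dbar φ) ⊆ tsupport φ \ {z} := by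
    intro φ h1 w hw
    refine ⟨dbar_tsupport φ hw, ?_⟩
    rintro rfl
    refine (notMem_tsupport_iff_eventuallyEq.2 ?_) hw
    filter_upwards [h1.eventuallyEq_nhds] with x hx
    exact dbar_eq_zero_of_eventually hx
  have hzo : IsOpen ({z}ᶜ : Set ℂ) := isOpen_compl_singleton
  have hinvd : DifferentiableOn ℂ (fun w => (w - z)⁻¹) {z}ᶜ := fun w hw =>
    ((differentiableAt_id.sub_const z).inv (sub_ne_zero.2 hw)).differentiableWithinAt
  have hinv : ContinuousOn (fun w => (w - z)⁻¹) {z}ᶜ := hinvd.continuousOn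
  have I1 : ∀ φ : ℂ → ℂ, φ =ᶠ[𝓝 z] (fun _ => 1) → ContDiff ℝ 1 φ → HasCompactSupport φ →
      Integrable fun w => dbar φ w * (w - z)⁻¹ := by
    intro φ h1 h2 h3
    exact (continuous_cut (dbar_continuous h2) hzo ((hsup φ h1).trans fun w hw => hw.2)
      hinv).integrable_of_hasCompactSupport (hasCompactSupport_cut (dbar_hasCompactSupport h3))
  have I2 : Integrable fun w => dbar χ w * (g w / (w - z)) := by
    refine (continuous_cut (W := V \ {z}) (dbar_continuous hχ) (hV.sdiff isClosed_singleton)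
      ((hsup χ h1).trans fun w hw => ⟨hs hw.1, hw.2⟩)
      ?_).integrable_of_hasCompactSupport (hasCompactSupport_cut (dbar_hasCompactSupport hc))
    simp only [div_eq_mul_inv]
    exact (hg.continuousOn.mono Set.sdiff_subset).mul (hinv.mono fun w hw => hw.2)
  have A := integral_dbar_cut hχ hV hc hs
    ((Complex.differentiableOn_dslope (hV.mem_nhds hz)).2 hg)
  have hdz : dbar χ z = 0 := dbar_eq_zero_of_eventually h1
  have A' : ∀ w, dbar χ w * dslope g z w =
      dbar χ w * (g w / (w - z)) - g z * (dbar χ w * (w - z)⁻¹) := by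
    intro w
    by_cases hw : w = z
    · subst hw; simp [hdz]
    · rw [dslope_of_ne _ hw, slope_def_field]
      ring
  simp_rw [A'] at A
  rw [integral_sub I2 ((I1 χ h1 hχ hc).const_mul _), integral_const_mul, sub_eq_zero] at A
  rw [A, mul_comm]
  congr 1
  -- comparison with the radial bump function
  set b : ℂ → ℂ := fun w => bump0 (w - z) with hb
  have hbC : ContDiff ℝ 1 b := bump0_contDiff.comp (contDiff_id.sub contDiff_const)
  have hbc : HasCompactSupport b := by
    have := bump0_hasCompactSupport.comp_homeomorph (Homeomorph.subRight z)
    exact this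
  have hb1 : b =ᶠ[𝓝 z] fun _ => 1 := by
    have : Tendsto (fun w => w - z) (𝓝 z) (𝓝 0) :=
      tendsto_sub_nhds_zero_iff.2 tendsto_id
    exact this.eventually bump0_eventually
  have B := integral_dbar_cut (φ := fun w => χ w - b w) (hχ.sub hbC) hzo (hc.sub hbc) (by
    intro w hw
    rintro rfl
    refine (notMem_tsupport_iff_eventuallyEq.2 ?_) hw
    filter_upwards [h1, hb1] with x hx hx'
    simp [hx, hx']) hinvd
  have hds : ∀ w, dbar (fun w => χ w - b w) w = dbar χ w - dbar b w := by
    intro w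
    unfold dbar
    rw [fderiv_fun_sub ((hχ.differentiable one_ne_zero) w) ((hbC.differentiable one_ne_zero) w)]
    simp
    ring
  simp_rw [hds, sub_mul] at B
  rw [integral_sub (I1 χ h1 hχ hc) (I1 b hb1 hbC hbc), sub_eq_zero] at B
  rw [B, kap0, ← integral_sub_right_eq_self (fun w => dbar bump0 w * w⁻¹) z]
  congr 1
  ext w
  congr 1
  unfold dbar
  rw [hb, fderiv_comp_sub]

end

/-! ### Primitives on domains with connected complement -/

section

open MeasureTheory

/-- `l` is the branch of `log ((w - z) / w)` on `O` that vanishes at `0`. -/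
def IsLgOf (O : Set ℂ) (w : ℂ) (l : ℂ → ℂ) : Prop :=
  DifferentiableOn ℂ l O ∧ l 0 = 0 ∧ ∀ z ∈ O, Complex.exp (l z) = (w - z) / w

theorem IsLgOf.hasDerivAt {O : Set ℂ} (hO : IsOpen O) {w : ℂ} {l : ℂ → ℂ} (h : IsLgOf O w l)
    (hw : w ∉ O) (hw0 : w ≠ 0) {z : ℂ} (hz : z ∈ O) : HasDerivAt l ((z - w)⁻¹) z := by
  have h1 := (h.1.differentiableAt (hO.mem_nhds hz)).hasDerivAt
  have h2 := h1.cexp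
  have h3 : HasDerivAt (fun z => (w - z) / w) (-1 / w) z :=
    ((hasDerivAt_id z).const_sub w).div_const w
  have h4 : HasDerivAt (fun z => Complex.exp (l z)) (-1/w) z := by
    refine h3.congr_of_eventuallyEq ?_
    filter_upwards [hO.mem_nhds hz] with u hu using h.2.2 u hu
  have h5 := h2.unique h4
  rw [h.2.2 z hz] at h5
  have hwz : w - z ≠ 0 := sub_ne_zero.2 fun e => hw (e ▸ hz)
  have hzw : z - w ≠ 0 := sub_ne_zero.2 fun e => hw (e ▸ hz)
  have : deriv l z = (z - w)⁻¹ := by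
    field_simp at h5 ⊢
    linear_combination -h5
  rwa [this] at h1

theorem IsLgOf.unique {O : Set ℂ} (hO : IsOpen O) (hc : IsPreconnected O) (h0 : (0:ℂ) ∈ O)
    {w : ℂ} {l l' : ℂ → ℂ} (h : IsLgOf O w l) (h' : IsLgOf O w l') (hw : w ∉ O) :
    Set.EqOn l l' O := by
  have hw0 : w ≠ 0 := fun e => hw (e ▸ h0)
  refine hO.eqOn_of_deriv_eq hc h.1 h'.1 (fun z hz => ?_) h0 (by rw [h.2.1, h'.2.1])
  rw [(h.hasDerivAt hO hw hw0 hz).deriv, (h'.hasDerivAt hO hw hw0 hz).deriv]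

theorem lg_slit {w w₀ z : ℂ} (h : ‖w - w₀‖ < ‖w₀ - z‖) : (w - z) / (w₀ - z) ∈ slitPlane := by
  have hne : w₀ - z ≠ 0 := by
    intro e; rw [e] at h; simp at h
    exact absurd h (not_lt.2 (norm_nonneg _))
  have e : (w - z) / (w₀ - z) = 1 + (w - w₀) / (w₀ - z) := by field_simp; ring
  rw [e]
  refine mem_slitPlane_of_norm_lt_one ?_
  rw [norm_div, div_lt_one (norm_pos_iff.2 hne)]
  exact h

theorem IsLgOf.shift {O : Set ℂ} (h0 : (0:ℂ) ∈ O)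
    {w w₀ : ℂ} {l : ℂ → ℂ} (h : IsLgOf O w₀ l) (hd : ∀ z ∈ O, ‖w - w₀‖ < ‖w₀ - z‖) :
    IsLgOf O w (fun z => l z + Complex.log ((w - z) / (w₀ - z)) - Complex.log (w / w₀)) := by
  have hne : ∀ z ∈ O, w₀ - z ≠ 0 := fun z hz e => by
    have := hd z hz
    rw [e] at this; simp at this
    exact absurd this (not_lt.2 (norm_nonneg _))
  have hs0 : w / w₀ ∈ slitPlane := by simpa using lg_slit (hd 0 h0)
  have hw0 : w₀ ≠ 0 := by simpa using hne 0 h0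
  have hw : w ≠ 0 := by
    rintro rfl
    simp at hs0
  refine ⟨?_, by simp [h.2.1], fun z hz => ?_⟩
  · refine (h.1.add (DifferentiableOn.clog ?_ fun z hz => lg_slit (hd z hz))).sub_const _
    exact fun z hz => (((differentiableAt_id.const_sub w)).div (differentiableAt_id.const_sub w₀)
      (hne z hz)).differentiableWithinAt
  · have hs := slitPlane_ne_zero (lg_slit (hd z hz))
    rw [Complex.exp_sub, Complex.exp_add, h.2.2 z hz, Complex.exp_log hs,
      Complex.exp_log (slitPlane_ne_zero hs0)]
    have := hne z hz
    field_simp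

theorem isLgOf_large {O : Set ℂ} {w : ℂ} (hw : ∀ z ∈ O, ‖z‖ < ‖w‖) (hw0 : w ≠ 0) :
    IsLgOf O w (fun z => Complex.log ((w - z) / w)) := by
  have hs : ∀ z ∈ O, (w - z) / w ∈ slitPlane := fun z hz => by
    have e : (w - z) / w = 1 + -(z/w) := by field_simp; ring
    rw [e]
    refine mem_slitPlane_of_norm_lt_one ?_
    rw [norm_neg, norm_div, div_lt_one (norm_pos_iff.2 hw0)]
    exact hw z hz
  refine ⟨DifferentiableOn.clog ?_ hs, by simp [hw0], fun z hz =>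
    Complex.exp_log (slitPlane_ne_zero (hs z hz))⟩
  exact fun z hz => ((differentiableAt_id.const_sub w).div_const w).differentiableWithinAt

/-- If the complement of the bounded domain `V` is connected, a holomorphic function on `V` has
a primitive on each connected open `O ∋ 0` relatively compact in `V`: integrate the kernel of the
Cauchy-Pompeiu formula in `z`, which is possible because `log (w - z)` is defined on `O` for all
`w` off `V`, hence for all `w` off some compact subset of `V`. -/
theorem exists_primitive_rel {V O : Set ℂ} (hV : IsOpen V) {R : ℝ} (hR : V ⊆ ball 0 R)
    (hVc : IsPreconnected Vᶜ) (hO : IsOpen O) (hOc : IsPreconnected O) (h0 : (0:ℂ) ∈ O)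
    (hOV : closure O ⊆ V) {g : ℂ → ℂ} (hg : DifferentiableOn ℂ g V) :
    ∃ G : ℂ → ℂ, ∀ z ∈ O, HasDerivAt G (g z) z := by
  have hOV' : O ⊆ V := subset_closure.trans hOV
  have hRpos : 0 < R := by
    have := hR (hOV' h0)
    simpa using this
  set Lg : Set ℂ := {w | w ∉ closure O ∧ ∃ l, IsLgOf O w l} with hLg
  set Ng : Set ℂ := {w | w ∉ closure O ∧ ¬ ∃ l, IsLgOf O w l} with hNg
  have hne : (closure O).Nonempty := ⟨0, subset_closure h0⟩
  have hdist : ∀ w ∉ closure O, 0 < infDist w (closure O) := fun w hw =>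
    (isClosed_closure.notMem_iff_infDist_pos hne).1 hw
  have hdle : ∀ w, ∀ z ∈ O, infDist w (closure O) ≤ ‖w - z‖ := fun w z hz => by
    rw [← dist_eq_norm]
    exact infDist_le_dist_of_mem (subset_closure hz)
  have hLgo : IsOpen Lg := by
    rw [Metric.isOpen_iff]
    rintro w₀ ⟨hw, l, hl⟩
    refine ⟨_, hdist w₀ hw, fun w hwb => ⟨?_, _, hl.shift h0 fun z hz => ?_⟩⟩
    · intro hwc
      have := infDist_le_dist_of_mem (x := w₀) hwc
      rw [mem_ball, dist_comm] at hwb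
      linarith
    · rw [mem_ball, dist_eq_norm] at hwb
      exact hwb.trans_le (hdle _ z hz)
  have hNgo : IsOpen Ng := by
    rw [Metric.isOpen_iff]
    rintro w₀ ⟨hw, hl⟩
    refine ⟨_, half_pos (hdist w₀ hw), fun w hwb => ⟨?_, ?_⟩⟩
    · intro hwc
      have := infDist_le_dist_of_mem (x := w₀) hwc
      rw [mem_ball, dist_comm] at hwb
      linarith [hdist w₀ hw]
    · rintro ⟨l, hl'⟩
      refine hl ⟨_, hl'.shift h0 fun z hz => ?_⟩
      rw [mem_ball, dist_eq_norm] at hwb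
      have h1 := hdle w₀ z hz
      have h2 : ‖w₀ - z‖ ≤ ‖w - z‖ + ‖w - w₀‖ := by
        have : w₀ - z = (w - z) - (w - w₀) := by ring
        rw [this]; exact norm_sub_le _ _
      rw [norm_sub_rev]
      linarith
  have hVLg : Vᶜ ⊆ Lg := by
    refine hVc.subset_left_of_subset_union hLgo hNgo ?_ ?_ ?_
    · rw [Set.disjoint_left]
      rintro w ⟨_, h⟩ ⟨_, h'⟩
      exact h' h
    · intro w hw
      have : w ∉ closure O := fun h => hw (hOV h)
      by_cases h : ∃ l, IsLgOf O w l
      · exact Or.inl ⟨this, h⟩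
      · exact Or.inr ⟨this, h⟩
    · have hRV : (R:ℂ) ∉ V := fun h => by
        have := hR h
        simp [abs_of_pos hRpos] at this
      refine ⟨(R:ℂ), hRV, fun h => hRV (hOV h), _, isLgOf_large (fun z hz => ?_)
        (by exact_mod_cast hRpos.ne')⟩
      have := hR (hOV' hz)
      simpa [abs_of_pos hRpos] using this
  have hKV : Lgᶜ ⊆ V := Set.compl_subset_comm.1 hVLg
  have hKcomp : IsCompact Lgᶜ :=
    (isCompact_closedBall (0:ℂ) R).of_isClosed_subset hLgo.isClosed_compl
      ((hKV.trans hR).trans ball_subset_closedBall)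
  obtain ⟨t, htc, hKt, htV⟩ := exists_compact_between hKcomp hV hKV
  obtain ⟨χ₀, hχ1, hχ0, -⟩ := exists_contMDiffMap_one_nhds_of_subset_interior
    (modelWithCornersSelf ℝ ℂ) (n := 1) hKcomp.isClosed hKt
  set χ : ℂ → ℂ := fun w => ((χ₀ w : ℝ) : ℂ) with hχ
  have hχC : ContDiff ℝ 1 χ := (ofRealCLM.contDiff (n := 1)).comp χ₀.contMDiff.contDiff
  have hts : tsupport χ ⊆ t := by
    refine closure_minimal ?_ htc.isClosed
    intro w hw
    by_contra h
    exact hw (by simp [hχ, hχ0 w h])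
  have hχc : HasCompactSupport χ := htc.of_isClosed_subset (isClosed_tsupport _) hts
  have hχe : ∀ z ∈ Lgᶜ, χ =ᶠ[𝓝 z] fun _ => 1 := fun z hz => by
    have := hχ1.filter_mono (nhds_le_nhdsSet hz)
    filter_upwards [this] with w hw
    simp [hχ, hw]
  have hOL : closure O ⊆ Lgᶜ := fun z hz h => h.1 hz
  have hS : tsupport (dbar χ) ⊆ V ∩ Lg := by
    intro w hw
    refine ⟨htV (hts (dbar_tsupport χ hw)), ?_⟩
    by_contra h
    refine (notMem_tsupport_iff_eventuallyEq.2 ?_) hw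
    filter_upwards [(hχe w h).eventuallyEq_nhds] with x hx
    exact dbar_eq_zero_of_eventually hx
  have hSc : IsCompact (tsupport (dbar χ)) := dbar_hasCompactSupport hχc
  have hch : ∀ w, ∃ l, w ∈ Lg → IsLgOf O w l := fun w => by
    by_cases h : w ∈ Lg
    · obtain ⟨l, hl⟩ := h.2
      exact ⟨l, fun _ => hl⟩
    · exact ⟨0, fun h' => absurd h' h⟩
  choose L hL using hch
  have hLO : ∀ w ∈ Lg, w ∉ O := fun w hw h => hw.1 (subset_closure h)
  have hL0 : ∀ w ∈ Lg, w ≠ 0 := fun w hw h => hLO w hw (h ▸ h0)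
  have hLcont : ∀ z ∈ O, ContinuousOn (fun w => L w z) Lg := by
    intro z hz
    refine continuousOn_of_forall_continuousAt fun w₀ hw₀ => ?_
    have hcz : ContinuousAt (fun w => L w₀ z + Complex.log ((w - z) / (w₀ - z)) -
        Complex.log (w / w₀)) w₀ := by
      have hw1 : w₀ - z ≠ 0 := sub_ne_zero.2 fun e => hLO w₀ hw₀ (e ▸ hz)
      refine (continuousAt_const.add (ContinuousAt.clog ?_ ?_)).sub (ContinuousAt.clog ?_ ?_)
      · exact (continuousAt_id.sub continuousAt_const).div_const _
      · simp [div_self hw1]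
      · exact continuousAt_id.div_const _
      · simp [div_self (hL0 w₀ hw₀)]
    refine hcz.congr ?_
    filter_upwards [ball_mem_nhds w₀ (hdist w₀ hw₀.1), hLgo.mem_nhds hw₀] with w hw hwL
    rw [mem_ball, dist_eq_norm] at hw
    exact ((hL w₀ hw₀).shift h0 fun u hu => hw.trans_le (hdle _ u hu)).unique hO hOc h0 (hL w hwL)
      (hLO w hwL) hz
  obtain ⟨δ, hδ, hδ'⟩ := Metric.exists_pos_forall_lt_edist hSc (isClosed_closure (s := O)) (by
    rw [Set.disjoint_left]
    exact fun w hw hw' => (hS hw).2.1 hw')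
  have hδ2 : ∀ w ∈ tsupport (dbar χ), ∀ z ∈ O, (δ:ℝ) ≤ ‖z - w‖ := by
    intro w hw z hz
    have := hδ' w hw z (subset_closure hz)
    rw [edist_nndist, ENNReal.coe_lt_coe] at this
    rw [norm_sub_rev, ← dist_eq_norm, ← coe_nndist]
    exact_mod_cast this.le
  have hSV : IsOpen (V ∩ Lg) := hV.inter hLgo
  have hdc := dbar_continuous hχC
  have hcs := dbar_hasCompactSupport hχc
  have hgc : ContinuousOn g (V ∩ Lg) := hg.continuousOn.mono Set.inter_subset_left
  have hF1 : ∀ z ∈ O, Integrable fun w => dbar χ w * (g w * L w z) := fun z hz =>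
    (continuous_cut hdc hSV hS (hgc.mul ((hLcont z hz).mono
      Set.inter_subset_right))).integrable_of_hasCompactSupport (hasCompactSupport_cut hcs)
  have hder : ∀ z ∈ O, HasDerivAt (fun z => ∫ w, dbar χ w * (g w * L w z))
      (∫ w, dbar χ w * (g w * (z - w)⁻¹)) z := by
    intro z hz
    refine (hasDerivAt_integral_of_dominated_loc_of_deriv_le (s := O) (hO.mem_nhds hz)
      (bound := fun w => ‖dbar χ w * g w‖ * (1/δ)) ?_ (hF1 z hz)
      (F' := fun z w => dbar χ w * (g w * (z - w)⁻¹)) ?_ ?_ ?_ ?_).2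
    · filter_upwards [hO.mem_nhds hz] with u hu using (hF1 u hu).aestronglyMeasurable
    · refine (continuous_cut hdc hSV hS (hgc.mul ?_)).aestronglyMeasurable
      refine (continuousOn_const.sub continuousOn_id).inv₀ ?_
      intro w hw
      exact sub_ne_zero.2 fun e => hLO w hw.2 ((show z = w from e) ▸ hz)
    · refine Eventually.of_forall fun w u hu => ?_
      by_cases hw : w ∈ tsupport (dbar χ)
      · rw [← mul_assoc, norm_mul, norm_inv, ← one_div]
        have := hδ2 w hw u hu
        gcongr
      · have : dbar χ w = 0 := image_eq_zero_of_notMem_tsupport hw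
        simp [this]
    · exact ((continuous_cut hdc hSV hS hgc).integrable_of_hasCompactSupport
        (hasCompactSupport_cut hcs)).norm.mul_const _
    · refine Eventually.of_forall fun w u hu => ?_
      by_cases hw : w ∈ tsupport (dbar χ)
      · have hwL := (hS hw).2
        exact (((hL w hwL).hasDerivAt hO (hLO w hwL) (hL0 w hwL) hu).const_mul _).const_mul _
      · have : dbar χ w = 0 := image_eq_zero_of_notMem_tsupport hw
        simp [this, hasDerivAt_const]
  refine ⟨fun z => -kap0⁻¹ * ∫ w, dbar χ w * (g w * L w z), fun z hz => ?_⟩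
  have h1 := (hder z hz).const_mul (-kap0⁻¹)
  have h2 := pompeiu hV hg hχC hχc (hts.trans htV) (hOV' hz) (hχe z (hOL (subset_closure hz)))
  have h3 : ∫ w, dbar χ w * (g w * (z - w)⁻¹) = -(kap0 * g z) := by
    rw [← h2, ← integral_neg]
    congr 1
    ext w
    rw [div_eq_mul_inv, ← neg_sub w z, inv_neg]
    ring
  rw [h3, neg_mul_neg, inv_mul_cancel_left₀ kap0_ne_zero] at h1
  exact h1

/-- A domain in the plane is exhausted by an increasing sequence of relatively compact
subdomains. -/
theorem exists_exhaustion {V : Set ℂ} (hV : IsOpen V) {R : ℝ} (hR : V ⊆ ball 0 R)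
    (hVc : IsPreconnected V) (h0 : (0:ℂ) ∈ V) :
    ∃ O : ℕ → Set ℂ, (∀ n, IsOpen (O n) ∧ IsPreconnected (O n) ∧ closure (O n) ⊆ V) ∧
      Monotone O ∧ ∀ z ∈ V, ∃ n, 0 ∈ O n ∧ z ∈ O n := by
  have hVne : (Vᶜ).Nonempty := by
    refine ⟨(R:ℂ), fun h => ?_⟩
    have := hR h
    simp at this
    exact absurd this (not_lt.2 (le_abs_self R))
  set T : ℕ → Set ℂ := fun n => {z | 1/((n:ℝ)+1) < infDist z Vᶜ} with hT
  have hTo : ∀ n, IsOpen (T n) := fun n => isOpen_lt continuous_const (continuous_infDist_pt _)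
  have hTm : Monotone T := by
    intro m n hmn z hz
    simp only [hT, Set.mem_ofPred_eq] at hz ⊢
    refine lt_of_le_of_lt ?_ hz
    gcongr
  have hpos : ∀ z ∈ V, 0 < infDist z Vᶜ := fun z hz =>
    (hV.isClosed_compl.notMem_iff_infDist_pos hVne).1 (fun h => h hz)
  have hmem : ∀ z ∈ V, ∃ n, z ∈ T n := fun z hz => exists_nat_one_div_lt (hpos z hz)
  set O : ℕ → Set ℂ := fun n => connectedComponentIn (T n) 0 with hOdef
  have hOm : Monotone O := fun m n hmn => connectedComponentIn_mono _ (hTm hmn)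
  have hOT : ∀ n, O n ⊆ T n := fun n => connectedComponentIn_subset _ _
  have hOo : ∀ n, IsOpen (O n) := fun n => (hTo n).connectedComponentIn
  refine ⟨O, fun n => ⟨hOo n, isPreconnected_connectedComponentIn, ?_⟩, hOm, ?_⟩
  · have h1 : closure (O n) ⊆ {z | 1/((n:ℝ)+1) ≤ infDist z Vᶜ} :=
      closure_minimal (fun z hz => by
        have : 1/((n:ℝ)+1) < infDist z Vᶜ := hOT n hz
        exact this.le)
        (isClosed_le continuous_const (continuous_infDist_pt _))
    intro z hz
    by_contra h
    have h2 := h1 hz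
    rw [Set.mem_ofPred_eq, infDist_zero_of_mem (show z ∈ Vᶜ from h)] at h2
    have : (0:ℝ) < 1/((n:ℝ)+1) := by positivity
    linarith
  · obtain ⟨n₀, hn₀⟩ := hmem 0 h0
    have h00 : ∀ n, n₀ ≤ n → 0 ∈ O n := fun n hn => mem_connectedComponentIn (hTm hn hn₀)
    suffices hsub : V ⊆ ⋃ n, O n by
      intro z hz
      obtain ⟨n, hn⟩ := Set.mem_iUnion.1 (hsub hz)
      exact ⟨max n n₀, h00 _ (le_max_right _ _), hOm (le_max_left _ _) hn⟩
    refine hVc.subset_of_closure_inter_subset (isOpen_iUnion hOo)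
      ⟨0, h0, Set.mem_iUnion.2 ⟨n₀, h00 n₀ le_rfl⟩⟩ ?_
    rintro z ⟨hz, hzV⟩
    obtain ⟨n₁, hn₁⟩ := hmem z hzV
    obtain ⟨r, hr, hr'⟩ := Metric.isOpen_iff.1 (hTo n₁) z hn₁
    obtain ⟨p, hp, hpO⟩ := mem_closure_iff.1 hz (ball z r) isOpen_ball (mem_ball_self hr)
    obtain ⟨n₂, hn₂⟩ := Set.mem_iUnion.1 hpO
    set m := max n₀ (max n₁ n₂)
    have hm0 : n₀ ≤ m := le_max_left _ _
    have hm1 : n₁ ≤ m := (le_max_left _ _).trans (le_max_right _ _)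
    have hm2 : n₂ ≤ m := (le_max_right _ _).trans (le_max_right _ _)
    have hconn : IsPreconnected (O m ∪ ball z r) :=
      isPreconnected_connectedComponentIn.union p (hOm hm2 hn₂) hp (convex_ball z r).isPreconnected
    have hsub := hconn.subset_connectedComponentIn (F := T m) (Or.inl (h00 m hm0))
      (Set.union_subset (hOT m) (hr'.trans (hTm hm1)))
    exact Set.mem_iUnion.2 ⟨m, hsub (Or.inr (mem_ball_self hr))⟩

/-- On a bounded plane domain with connected complement every holomorphic function has a
primitive. -/
theorem exists_primitive {V : Set ℂ} (hV : IsOpen V) {R : ℝ} (hR : V ⊆ ball 0 R)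
    (hVp : IsPreconnected V) (h0 : (0:ℂ) ∈ V)
    (hVc : IsPreconnected Vᶜ) {g : ℂ → ℂ} (hg : DifferentiableOn ℂ g V) :
    ∃ G : ℂ → ℂ, ∀ z ∈ V, HasDerivAt G (g z) z := by
  obtain ⟨O, hO, hOm, hex⟩ := exists_exhaustion hV hR hVp h0
  have hG : ∀ n, ∃ G : ℂ → ℂ, G 0 = 0 ∧ ((0:ℂ) ∈ O n → ∀ z ∈ O n, HasDerivAt G (g z) z) := by
    intro n
    by_cases h : (0:ℂ) ∈ O n
    · obtain ⟨G, hG⟩ := exists_primitive_rel hV hR hVc (hO n).1 (hO n).2.1 h (hO n).2.2 hg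
      exact ⟨fun z => G z - G 0, by simp, fun _ z hz => (hG z hz).sub_const _⟩
    · exact ⟨0, rfl, fun h' => absurd h' h⟩
  choose G hG0 hG using hG
  have hcomp : ∀ m n, m ≤ n → (0:ℂ) ∈ O m → ∀ z ∈ O m, G m z = G n z := by
    intro m n hmn hm
    refine (hO m).1.eqOn_of_deriv_eq (hO m).2.1
      (fun z hz => (hG m hm z hz).differentiableAt.differentiableWithinAt)
      (fun z hz => (hG n (hOm hmn hm) z (hOm hmn hz)).differentiableAt.differentiableWithinAt)
      (fun z hz => ?_) hm (by rw [hG0, hG0])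
    rw [(hG m hm z hz).deriv, (hG n (hOm hmn hm) z (hOm hmn hz)).deriv]
  have hidx : ∀ z, ∃ n, z ∈ V → 0 ∈ O n ∧ z ∈ O n := fun z => by
    by_cases hz : z ∈ V
    · obtain ⟨n, hn⟩ := hex z hz
      exact ⟨n, fun _ => hn⟩
    · exact ⟨0, fun h => absurd h hz⟩
  choose idx hidx using hidx
  refine ⟨fun z => G (idx z) z, fun z hz => ?_⟩
  have hz1 := hidx z hz
  refine (hG _ hz1.1 z hz1.2).congr_of_eventuallyEq ?_
  filter_upwards [(hO (idx z)).1.mem_nhds hz1.2] with u hu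
  have huV : u ∈ V := (hO (idx z)).2.2 (subset_closure hu)
  have hu1 := hidx u huV
  rcases le_total (idx u) (idx z) with h | h
  · exact hcomp _ _ h hu1.1 u hu1.2
  · exact (hcomp _ _ h hz1.1 u hu).symm

/-- Holomorphic square roots on a bounded plane domain with connected complement. -/
theorem exists_sqrt {V : Set ℂ} (hV : IsOpen V) {R : ℝ} (hR : V ⊆ ball 0 R)
    (hVp : IsPreconnected V) (h0 : (0:ℂ) ∈ V)
    (hVc : IsPreconnected Vᶜ) {F : ℂ → ℂ} (hF : DifferentiableOn ℂ F V) (hne : ∀ z ∈ V, F z ≠ 0) :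
    ∃ S : ℂ → ℂ, DifferentiableOn ℂ S V ∧ ∀ z ∈ V, S z ^ 2 = F z := by
  obtain ⟨G, hG⟩ := exists_primitive hV hR hVp h0 hVc
    (((hF.deriv hV).div hF hne) : DifferentiableOn ℂ (fun z => deriv F z / F z) V)
  have hGd : DifferentiableOn ℂ G V := fun z hz => (hG z hz).differentiableAt.differentiableWithinAt
  have hF' : ∀ z ∈ V, HasDerivAt F (deriv F z) z := fun z hz =>
    (hF.differentiableAt (hV.mem_nhds hz)).hasDerivAt
  have hconst : Set.EqOn (fun z => F z * Complex.exp (-G z)) (fun _ => F 0 * Complex.exp (-G 0)) V := by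
    refine hV.eqOn_of_deriv_eq hVp (hF.mul hGd.neg.cexp) (differentiableOn_const _)
      (fun z hz => ?_) h0 rfl
    have := ((hF' z hz).mul ((hG z hz).neg.cexp)).deriv
    have e : deriv (fun z => F z * Complex.exp (-G z)) z = _ := this
    rw [e]
    have := hne z hz
    simp
    field_simp
    ring
  obtain ⟨c, hc⟩ := IsAlgClosed.exists_pow_nat_eq (F 0 * Complex.exp (-G 0)) (n := 2) two_pos
  refine ⟨fun z => c * Complex.exp (G z / 2), (hGd.div_const 2).cexp.const_mul c, fun z hz => ?_⟩
  have h1 := hconst hz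
  simp only at h1
  rw [mul_pow, hc, ← h1, ← Complex.exp_nat_mul, mul_assoc, ← Complex.exp_add]
  simp
  field_simp
  simp

end

/-! ### The Riemann mapping theorem -/

/-- The disc automorphism exchanging `a` and `0` up to sign. -/
noncomputable def mob (a w : ℂ) : ℂ := (w - a) / (1 - (starRingEnd ℂ) a * w)

theorem mob_denom {a w : ℂ} (ha : ‖a‖ < 1) (hw : ‖w‖ < 1) : 1 - (starRingEnd ℂ) a * w ≠ 0 := by
  intro h
  have h1 : (starRingEnd ℂ) a * w = 1 := by linear_combination -h
  have h2 : ‖(starRingEnd ℂ) a * w‖ = 1 := by rw [h1]; simp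
  rw [norm_mul, RCLike.norm_conj] at h2
  nlinarith [norm_nonneg a, norm_nonneg w]

theorem mob_norm_lt {a w : ℂ} (ha : ‖a‖ < 1) (hw : ‖w‖ < 1) : ‖mob a w‖ < 1 := by
  have hd := mob_denom ha hw
  rw [mob, norm_div, div_lt_one (norm_pos_iff.2 hd)]
  rw [← sq_lt_sq₀ (norm_nonneg _) (norm_nonneg _), ← normSq_eq_norm_sq, ← normSq_eq_norm_sq]
  have e : normSq (1 - (starRingEnd ℂ) a * w) - normSq (w - a) = (1 - normSq a) * (1 - normSq w) := by
    simp [normSq_apply]; ring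
  have h1 : normSq a < 1 := by rw [normSq_eq_norm_sq]; nlinarith [norm_nonneg a]
  have h2 : normSq w < 1 := by rw [normSq_eq_norm_sq]; nlinarith [norm_nonneg w]
  nlinarith

theorem mob_hasDerivAt {a w : ℂ} (ha : ‖a‖ < 1) (hw : ‖w‖ < 1) :
    HasDerivAt (mob a) ((1 - (starRingEnd ℂ) a * a) / (1 - (starRingEnd ℂ) a * w)^2) w := by
  have h := ((hasDerivAt_id w).sub_const a).div
    (((hasDerivAt_id w).const_mul ((starRingEnd ℂ) a)).const_sub 1) (mob_denom ha hw)
  have h' : HasDerivAt (mob a) _ w := h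
  convert! h' using 1
  have := mob_denom ha hw
  simp
  field_simp
  ring

theorem mob_inj {a w w' : ℂ} (ha : ‖a‖ < 1) (hw : ‖w‖ < 1) (hw' : ‖w'‖ < 1)
    (h : mob a w = mob a w') : w = w' := by
  have h1 := mob_denom ha hw
  have h2 := mob_denom ha hw'
  rw [mob, mob, div_eq_div_iff h1 h2] at h
  have h3 : (1 - (starRingEnd ℂ) a * a) * (w - w') = 0 := by linear_combination h
  rcases mul_eq_zero.1 h3 with h4 | h4
  · exact absurd h4 (mob_denom ha ha)
  · exact sub_eq_zero.1 h4

theorem mob_eq_zero {a w : ℂ} (ha : ‖a‖ < 1) (hw : ‖w‖ < 1) (h : mob a w = 0) : w = a := by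
  rw [mob, div_eq_zero_iff] at h
  exact sub_eq_zero.1 (h.resolve_right (mob_denom ha hw))

/-- Competitors in the extremal problem for the Riemann map. -/
structure RmtFam (V : Set ℂ) (q : ℂ → ℂ) : Prop where
  diff : DifferentiableOn ℂ q V
  maps : Set.MapsTo q V (ball 0 1)
  inj : Set.InjOn q V
  zero : q 0 = 0

/-- Koebe's square root trick: a competitor that is not onto can be improved. -/
theorem rmt_improve {V : Set ℂ} (hV : IsOpen V) (hV1 : V ⊆ ball 0 1)
    (hVp : IsPreconnected V) (h0 : (0:ℂ) ∈ V) (hVc : IsPreconnected Vᶜ) {q : ℂ → ℂ}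
    (hq : RmtFam V q) {a : ℂ} (ha : ‖a‖ < 1) (haq : ∀ z ∈ V, q z ≠ a) :
    ∃ p, RmtFam V p ∧ ‖deriv q 0‖ < ‖deriv p 0‖ := by
  have hqn : ∀ z ∈ V, ‖q z‖ < 1 := fun z hz => by simpa using hq.maps hz
  have hmd : DifferentiableOn ℂ (fun z => mob a (q z)) V := fun z hz =>
    ((mob_hasDerivAt ha (hqn z hz)).differentiableAt.comp z
      (hq.diff.differentiableAt (hV.mem_nhds hz))).differentiableWithinAt
  obtain ⟨S, hS, hS2⟩ := exists_sqrt hV hV1 hVp h0 hVc hmd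
    (fun z hz h => haq z hz (mob_eq_zero ha (hqn z hz) h))
  have hSn : ∀ z ∈ V, ‖S z‖ < 1 := fun z hz => by
    have h1 := mob_norm_lt ha (hqn z hz)
    rw [← hS2 z hz, norm_pow] at h1
    nlinarith [norm_nonneg (S z)]
  set b := S 0 with hb
  have hbn : ‖b‖ < 1 := hSn 0 h0
  have hb2 : b^2 = -a := by
    rw [hb, hS2 0 h0, hq.zero]
    simp [mob]
  have ha0 : a ≠ 0 := fun h => haq 0 h0 (by rw [hq.zero, h])
  have hb0 : b ≠ 0 := by
    intro h
    rw [h] at hb2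
    simp at hb2
    exact ha0 hb2
  have hbpos : 0 < ‖b‖ := norm_pos_iff.2 hb0
  have hq' := (hq.diff.differentiableAt (hV.mem_nhds h0)).hasDerivAt
  have hS' := (hS.differentiableAt (hV.mem_nhds h0)).hasDerivAt
  have hinj : Set.InjOn S V := by
    intro z hz w hw h
    refine hq.inj hz hw (mob_inj ha (hqn z hz) (hqn w hw) ?_)
    rw [← hS2 z hz, ← hS2 w hw, h]
  have hq0 : deriv q 0 ≠ 0 := inj_deriv_ne_zero hV hq.diff hq.inj h0
  refine ⟨fun z => mob b (S z), ⟨fun z hz => ((mob_hasDerivAt hbn (hSn z hz)).differentiableAt.comp z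
      (hS.differentiableAt (hV.mem_nhds hz))).differentiableWithinAt, fun z hz => by
        simpa using mob_norm_lt hbn (hSn z hz), fun z hz w hw h =>
        hinj hz hw (mob_inj hbn (hSn z hz) (hSn w hw) h), by simp [mob, ← hb]⟩, ?_⟩
  -- the two derivatives are related by differentiating `S² = mob a ∘ q`
  have hm : HasDerivAt (mob a) ((1 - (starRingEnd ℂ) a * a) / (1 - (starRingEnd ℂ) a * q 0)^2) (q 0) :=
    mob_hasDerivAt ha (hqn 0 h0)
  have e1 := hm.comp (0:ℂ) hq'
  have e2 : HasDerivAt (mob a ∘ q) _ 0 := (hS'.pow 2).congr_of_eventuallyEq (by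
    filter_upwards [hV.mem_nhds h0] with z hz
    simp [hS2 z hz])
  have e3 := e1.unique e2
  have hp := ((mob_hasDerivAt hbn (hSn 0 h0)).comp (0:ℂ) hS').deriv
  have hp' : deriv (fun z => mob b (S z)) 0 = _ := hp
  rw [hp']
  have hcb : (starRingEnd ℂ) b * b = ((‖b‖^2 : ℝ) : ℂ) := by
    rw [mul_comm, mul_conj, normSq_eq_norm_sq]
  have hca : (starRingEnd ℂ) a * a = ((‖b‖^4 : ℝ) : ℂ) := by
    rw [mul_comm, mul_conj, normSq_eq_norm_sq]
    have : ‖a‖ = ‖b‖^2 := by rw [← norm_pow, hb2, norm_neg]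
    rw [this]; congr 1; ring
  rw [hq.zero, hca] at e3
  simp only [mul_zero, sub_zero, one_pow, div_one] at e3
  rw [← hb] at e3 ⊢
  rw [hcb]
  have n3 : (1 - ‖b‖^4) * ‖deriv q 0‖ = 2 * ‖b‖ * ‖deriv S 0‖ := by
    have := congrArg norm e3
    rw [norm_mul, norm_mul] at this
    have h4 : ‖((1:ℂ) - ((‖b‖^4 : ℝ) : ℂ))‖ = 1 - ‖b‖^4 := by
      have : (1:ℂ) - ((‖b‖^4 : ℝ) : ℂ) = ((1 - ‖b‖^4 : ℝ) : ℂ) := by push_cast; ring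
      rw [this, norm_real, Real.norm_of_nonneg]
      have := pow_le_one₀ (norm_nonneg b) hbn.le (n := 4)
      linarith
    rw [h4] at this
    rw [this]
    simp
  have hx : (0:ℝ) < 1 - ‖b‖^2 := by nlinarith
  have hnorm : ‖((1:ℂ) - ((‖b‖^2 : ℝ) : ℂ)) / (1 - ((‖b‖^2 : ℝ) : ℂ))^2 * deriv S 0‖
      = ‖deriv S 0‖ / (1 - ‖b‖^2) := by
    have : (1:ℂ) - ((‖b‖^2 : ℝ) : ℂ) = ((1 - ‖b‖^2 : ℝ) : ℂ) := by push_cast; ring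
    rw [this, norm_mul, norm_div, norm_pow, norm_real, Real.norm_of_nonneg hx.le]
    field_simp
  rw [hnorm, lt_div_iff₀ hx]
  have hqpos : 0 < ‖deriv q 0‖ := norm_pos_iff.2 hq0
  have n4 : (1 - ‖b‖^2) * (2 * ‖b‖ * ‖deriv q 0‖) < (1 - ‖b‖^4) * ‖deriv q 0‖ := by
    have h5 : (1 - ‖b‖^4) * ‖deriv q 0‖ - (1 - ‖b‖^2) * (2 * ‖b‖ * ‖deriv q 0‖)
      = (1 - ‖b‖^2) * ‖deriv q 0‖ * (1 - ‖b‖)^2 := by ring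
    have h6 : 0 < (1 - ‖b‖^2) * ‖deriv q 0‖ * (1 - ‖b‖)^2 := by
      have : 0 < 1 - ‖b‖ := by linarith
      positivity
    linarith
  rw [n3] at n4
  have : 2 * ‖b‖ * (‖deriv q 0‖ * (1 - ‖b‖^2)) < 2 * ‖b‖ * ‖deriv S 0‖ := by linarith
  exact lt_of_mul_lt_mul_left this (by positivity)

theorem norm_lt_one_of_open_image {Ω : Set ℂ} (hΩ : IsOpen Ω) {f : ℂ → ℂ}
    (hf : DifferentiableOn ℂ f Ω) (hi : Set.InjOn f Ω) (hb : ∀ z ∈ Ω, ‖f z‖ ≤ 1) :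
    Set.MapsTo f Ω (ball 0 1) := by
  intro z hz
  have h1 : f '' Ω ⊆ interior (closedBall 0 1) :=
    interior_maximal (by rintro _ ⟨w, hw, rfl⟩; simpa using hb w hw)
      (inj_isOpen_image hΩ hf hi hΩ subset_rfl)
  rw [interior_closedBall _ one_ne_zero] at h1
  exact h1 ⟨z, hz, rfl⟩

theorem exists_seq_tendsto_sSup' {S : Set ℝ} (hne : S.Nonempty) (hb : BddAbove S) :
    ∃ u : ℕ → ℝ, (∀ n, u n ∈ S) ∧ Tendsto u atTop (𝓝 (sSup S)) := by
  obtain ⟨u, -, hu, hu'⟩ := exists_seq_tendsto_sSup hne hb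
  exact ⟨u, hu', hu⟩

/-- Riemann mapping theorem for a subdomain of the disc with connected complement. -/
theorem riemann_map {V : Set ℂ} (hV : IsOpen V) (hV1 : V ⊆ ball 0 1)
    (hVp : IsPreconnected V) (h0 : (0:ℂ) ∈ V) (hVc : IsPreconnected Vᶜ) :
    ∃ (φ : ℂ → ℂ) (a : ℝ), 0 < a ∧ DifferentiableOn ℂ φ (ball 0 1) ∧ Set.InjOn φ (ball 0 1) ∧
      φ '' ball 0 1 = V ∧ φ 0 = 0 ∧ deriv φ 0 = a := by
  obtain ⟨r, hr, hrV⟩ := Metric.isOpen_iff.1 hV 0 h0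
  set S : Set ℝ := {x | ∃ q, RmtFam V q ∧ ‖deriv q 0‖ = x} with hS
  have hid : RmtFam V id := ⟨differentiableOn_id, fun z hz => hV1 hz, Set.injOn_id _, rfl⟩
  have hb : BddAbove S := by
    refine ⟨2 / r, ?_⟩
    rintro _ ⟨q, hq, rfl⟩
    refine Complex.norm_deriv_le_div_of_mapsTo_ball (R₁ := r) (R₂ := 2) (hq.diff.mono hrV) ?_ hr
    intro z hz
    have := hq.maps (hrV hz)
    rw [hq.zero]
    simp at this ⊢
    linarith
  have h1S : (1:ℝ) ∈ S := ⟨id, hid, by simp⟩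
  obtain ⟨u, huS, hu⟩ := exists_seq_tendsto_sSup' ⟨1, h1S⟩ hb
  have hs1 : 1 ≤ sSup S := le_csSup hb h1S
  choose Q hQ hQu using huS
  set l : Ultrafilter ℕ := hyperfilter ℕ
  have hl : (l : Filter ℕ) ≤ atTop := Nat.hyperfilter_le_atTop
  obtain ⟨q, hlu, hqd⟩ := ultra_limit l hV (fun n => (hQ n).diff) (M := 1)
    (fun n z hz => by simpa using (mem_ball_zero_iff.1 ((hQ n).maps hz)).le)
  have hpt : ∀ z ∈ V, Tendsto (fun n => Q n z) l (𝓝 (q z)) := fun z hz => hlu.tendsto_at hz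
  have hder : Tendsto (fun n => deriv (Q n) 0) l (𝓝 (deriv q 0)) :=
    (hlu.deriv (Eventually.of_forall fun n => (hQ n).diff) hV).tendsto_at h0
  have hqs : ‖deriv q 0‖ = sSup S := by
    refine tendsto_nhds_unique hder.norm ?_
    have := hu.mono_left hl
    exact this.congr fun n => (hQu n).symm
  have hq0 : deriv q 0 ≠ 0 := by
    intro h
    rw [h] at hqs
    simp at hqs
    linarith
  have hqi : Set.InjOn q V := hurwitz_injOn hV hVp (fun n => (hQ n).diff) hlu (fun n => (hQ n).inj) h0 hq0
  have hqz : q 0 = 0 := by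
    refine tendsto_nhds_unique (hpt 0 h0) ?_
    simp [(hQ _).zero]
  have hqF : RmtFam V q := by
    refine ⟨hqd, norm_lt_one_of_open_image hV hqd hqi fun z hz => ?_, hqi, hqz⟩
    exact le_of_tendsto (hpt z hz).norm (Eventually.of_forall fun n =>
      (mem_ball_zero_iff.1 ((hQ n).maps hz)).le)
  have hsurj : ∀ a ∈ ball (0:ℂ) 1, ∃ z ∈ V, q z = a := by
    intro a ha
    by_contra! hcon
    obtain ⟨p, hp, hlt⟩ := rmt_improve hV hV1 hVp h0 hVc hqF (by simpa using ha) hcon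
    have := le_csSup hb (show ‖deriv p 0‖ ∈ S from ⟨p, hp, rfl⟩)
    linarith
  set h := Function.invFunOn q V with hh
  have hhl : ∀ z ∈ V, h (q z) = z := fun z hz => hqi.leftInvOn_invFunOn hz
  have hhd : ∀ w ∈ ball (0:ℂ) 1, DifferentiableAt ℂ h w := by
    intro w hw
    obtain ⟨z, hz, rfl⟩ := hsurj w hw
    exact inj_inv_differentiableAt hV hqd hqi hhl hz
  set c := deriv q 0 with hc
  have hcn : (0:ℝ) < ‖c‖ := norm_pos_iff.2 hq0
  set ω : ℂ := c / ‖c‖ with hω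
  have hωn : ‖ω‖ = 1 := by rw [hω, norm_div, norm_real, norm_norm, div_self hcn.ne']
  have hω0 : ω ≠ 0 := norm_ne_zero_iff.1 (by rw [hωn]; norm_num)
  have hmul : ∀ z ∈ ball (0:ℂ) 1, ω * z ∈ ball (0:ℂ) 1 := fun z hz => by
    simpa [hωn] using hz
  have hh0 : h 0 = 0 := by
    have := hhl 0 h0
    rwa [hqz] at this
  have hdh : HasDerivAt h c⁻¹ 0 := by
    have h1 := (hhd 0 (mem_ball_self one_pos)).hasDerivAt
    have h2 : HasDerivAt h (deriv h 0) (q 0) := by rw [hqz]; exact h1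
    have h3 := h2.comp (0:ℂ) (hqd.differentiableAt (hV.mem_nhds h0)).hasDerivAt
    have h4 : HasDerivAt (h ∘ q) 1 0 := by
      refine (hasDerivAt_id (0:ℂ)).congr_of_eventuallyEq ?_
      filter_upwards [hV.mem_nhds h0] with w hw
      simp [hhl w hw]
    have h5 := h3.unique h4
    rwa [eq_inv_of_mul_eq_one_left h5] at h1
  refine ⟨fun z => h (ω * z), ‖c‖⁻¹, by positivity, ?_, ?_, ?_, by simp [hh0], ?_⟩
  · intro z hz
    exact ((hhd _ (hmul z hz)).comp z (differentiableAt_id.const_mul ω)).differentiableWithinAt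
  · intro z hz w hw hzw
    obtain ⟨z', hz', e1⟩ := hsurj _ (hmul z hz)
    obtain ⟨w', hw', e2⟩ := hsurj _ (hmul w hw)
    simp only at hzw
    rw [← e1, ← e2, hhl z' hz', hhl w' hw'] at hzw
    rw [hzw] at e1
    exact mul_left_cancel₀ hω0 (e1.symm.trans e2)
  · ext v
    constructor
    · rintro ⟨z, hz, rfl⟩
      obtain ⟨z', hz', e1⟩ := hsurj _ (hmul z hz)
      simp only
      rw [← e1, hhl z' hz']
      exact hz'
    · intro hv
      refine ⟨ω⁻¹ * q v, ?_, ?_⟩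
      · have := hqF.maps hv
        simpa [hωn] using this
      · simp only
        rw [mul_inv_cancel_left₀ hω0, hhl v hv]
  · have h1 : HasDerivAt h c⁻¹ (ω * 0) := by simpa using hdh
    have := (h1.comp (0:ℂ) ((hasDerivAt_id (0:ℂ)).const_mul ω)).deriv
    have e : deriv (fun z => h (ω * z)) 0 = _ := this
    rw [e, hω]
    have : (‖c‖:ℂ) ≠ 0 := by exact_mod_cast hcn.ne'
    push_cast
    field_simp

/-! ### Domains between a univalent image and the disk -/

/-- A bounded set that is open and closed in `ℂ` is empty. -/
lemma clopen_bounded_empty {X : Set ℂ} (ho : IsOpen X) (hc : IsClosed X)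
    (hb : X ⊆ closedBall 0 1) : X = ∅ := by
  rcases isClopen_iff.mp ⟨hc, ho⟩ with h | h
  · exact h
  · exfalso
    have : (2:ℂ) ∈ X := h ▸ Set.mem_univ _
    have := hb this
    simp at this

lemma isPreconnected_polar {I : Set ℝ} (hI : IsPreconnected I) (hp : ∀ t ∈ I, 0 ≤ t) :
    IsPreconnected {z : ℂ | ‖z‖ ∈ I} := by
  have h : {z : ℂ | ‖z‖ ∈ I} =
      (fun p : ℝ × ℝ => (p.1 : ℂ) * Complex.exp (p.2 * Complex.I)) '' (I ×ˢ Set.univ) := by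
    ext z
    constructor
    · intro hz
      exact ⟨(‖z‖, z.arg), ⟨hz, Set.mem_univ _⟩, Complex.norm_mul_exp_arg_mul_I z⟩
    · rintro ⟨⟨t, θ⟩, ⟨ht, -⟩, rfl⟩
      simp only [Set.mem_ofPred_eq, norm_mul, Complex.norm_exp_ofReal_mul_I, mul_one,
        Complex.norm_real, Real.norm_eq_abs]
      rwa [abs_of_nonneg (hp t ht)]
  rw [h]
  exact (hI.prod isPreconnected_univ).image _ (by fun_prop)

/-- The complement in the closed disc of a univalent image of the disc does not split into a
compact part near the boundary circle and a nonempty compact remainder. -/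
lemma no_split {η : ℂ → ℂ} (hd : DifferentiableOn ℂ η (ball 0 1))
    (hi : Set.InjOn η (ball 0 1)) (hm : Set.MapsTo η (ball 0 1) (ball 0 1))
    {Q E : Set ℂ} (hQ : IsClosed Q) (hE : IsClosed E) (hdis : Disjoint Q E)
    (hs : sphere 0 1 ⊆ Q) (hun : Q ∪ E = closedBall 0 1 \ (η '' ball 0 1)) (hne : E.Nonempty) :
    False := by
  set U := η '' ball 0 1 with hU
  have hUo : IsOpen U := inj_isOpen_image isOpen_ball hd hi isOpen_ball subset_rfl
  have hEb : E ⊆ closedBall 0 1 := fun x hx => (hun.subset (Or.inr hx)).1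
  have hEU : ∀ x ∈ E, x ∉ U := fun x hx => (hun.subset (Or.inr hx)).2
  have hQU : ∀ x ∈ Q, x ∉ U := fun x hx => (hun.subset (Or.inl hx)).2
  have hEc : IsCompact E := (isCompact_closedBall (0:ℂ) 1).of_isClosed_subset hE hEb
  have hEnQ : ∀ x ∈ E, x ∉ Q := fun x hx hq => Set.disjoint_left.mp hdis hq hx
  set X : Set ℂ := ball 0 1 \ Q with hX
  have hXo : IsOpen X := isOpen_ball.sdiff hQ
  have hEX : E ⊆ X := by
    intro x hx
    refine ⟨?_, hEnQ x hx⟩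
    rcases (mem_closedBall.mp (hEb hx)).lt_or_eq with h | h
    · exact h
    · exact absurd (hs h) (hEnQ x hx)
  have hXsub : ∀ x ∈ X, x ∈ U ∨ x ∈ E := by
    intro x hx
    by_contra! hcon
    have : x ∈ Q ∪ E := hun ▸ ⟨ball_subset_closedBall hx.1, hcon.1⟩
    exact this.elim hx.2 hcon.2
  obtain ⟨K, hK, hEK, hKX⟩ := exists_compact_between hEc hXo hEX
  have hfr : K \ interior K ⊆ U := by
    intro x hx
    rcases hXsub x (hKX hx.1) with h | h
    · exact h
    · exact absurd (hEK h) hx.2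
  have hfrc : IsCompact (K \ interior K) := hK.diff isOpen_interior
  -- the compact set `K \ interior K` lies in the image of a smaller closed disc
  obtain ⟨r, hr0, hr1, hr⟩ : ∃ r : ℝ, 0 ≤ r ∧ r < 1 ∧ K \ interior K ⊆ η '' closedBall 0 r := by
    obtain ⟨i, hi'⟩ := hfrc.elim_directed_cover
      (fun n : ℕ => η '' ball 0 (1 - 1/((n:ℝ)+1)))
      (fun n => inj_isOpen_image isOpen_ball hd hi isOpen_ball
        (ball_subset_ball (by
          have : 0 < 1/((n:ℝ)+1) := by positivity
          linarith)))
      (by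
        intro x hx
        obtain ⟨z, hz, rfl⟩ := hfr hx
        have hz' : ‖z‖ < 1 := by simpa using hz
        obtain ⟨n, hn⟩ := exists_nat_one_div_lt (sub_pos.mpr hz')
        exact Set.mem_iUnion.mpr ⟨n, z, by simp only [mem_ball_zero_iff]; linarith, rfl⟩)
      (by
        apply directed_of_isDirected_le
        intro m n hmn
        apply Set.image_mono
        apply ball_subset_ball
        have : 1/((n:ℝ)+1) ≤ 1/((m:ℝ)+1) := by
          apply one_div_le_one_div_of_le (by positivity)
          have : (m:ℝ) ≤ n := by exact_mod_cast hmn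
          linarith
        linarith)
    refine ⟨1 - 1/((i:ℝ)+1), ?_, ?_, hi'.trans (Set.image_mono ball_subset_closedBall)⟩
    · have : 1/((i:ℝ)+1) ≤ 1 := by
        rw [div_le_one (by positivity)]
        have : (0:ℝ) ≤ i := Nat.cast_nonneg i
        linarith
      linarith
    · have : 0 < 1/((i:ℝ)+1) := by positivity
      linarith
  have hcr : closedBall (0:ℂ) r ⊆ ball 0 1 := closedBall_subset_ball hr1
  have hηc : IsCompact (η '' closedBall 0 r) :=
    (isCompact_closedBall 0 r).image_of_continuousOn (hd.continuousOn.mono hcr)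
  set A := η '' {z : ℂ | ‖z‖ ∈ Set.Ioo r 1} with hA
  have hAnn : {z : ℂ | ‖z‖ ∈ Set.Ioo r 1} ⊆ ball 0 1 := fun z hz => by
    simpa using hz.2
  have hAc : IsPreconnected A :=
    (isPreconnected_polar isPreconnected_Ioo (fun t ht => hr0.trans ht.1.le)).image _
      (hd.continuousOn.mono hAnn)
  have hUdec : ∀ x ∈ U, x ∈ η '' closedBall 0 r ∨ x ∈ A := by
    rintro x ⟨z, hz, rfl⟩
    by_cases h : ‖z‖ ≤ r
    · exact Or.inl ⟨z, by simpa using h, rfl⟩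
    · exact Or.inr ⟨z, ⟨not_le.mp h, by simpa using hz⟩, rfl⟩
  have hAdis : ∀ x ∈ A, x ∉ η '' closedBall 0 r := by
    rintro x ⟨z, hz, rfl⟩ ⟨w, hw, hwz⟩
    have := hi (hcr hw) (hAnn hz) hwz
    subst this
    have h1 : ‖w‖ ≤ r := by simpa using hw
    exact absurd hz.1 (not_lt.mpr h1)
  have hAK : A ⊆ interior K ∪ Kᶜ := by
    intro x hx
    by_cases h : x ∈ interior K
    · exact Or.inl h
    · exact Or.inr fun hxK => hAdis x hx (hr ⟨hxK, h⟩)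
  have hmeet : (A ∩ interior K).Nonempty := by
    by_contra hcon
    rw [Set.not_nonempty_iff_eq_empty] at hcon
    have hEeq : E = interior K \ (η '' closedBall 0 r) := by
      apply Set.Subset.antisymm
      · intro x hx
        refine ⟨hEK hx, fun h => hEU x hx (Set.image_mono hcr h)⟩
      · rintro x ⟨hx, hx'⟩
        rcases hXsub x (hKX (interior_subset hx)) with h | h
        · rcases hUdec x h with h | h
          · exact absurd h hx'
          · exact absurd (show x ∈ A ∩ interior K from ⟨h, hx⟩) (by rw [hcon]; simp)
        · exact h
    have : IsOpen E := by
      rw [hEeq]; exact isOpen_interior.sdiff hηc.isClosed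
    rw [clopen_bounded_empty this hE hEb] at hne
    simp at hne
  have hAK' : A ⊆ interior K :=
    hAc.subset_left_of_subset_union isOpen_interior hK.isClosed.isOpen_compl
      (Set.disjoint_left.mpr fun x hx hx' => hx' (interior_subset hx)) hAK hmeet
  have hXeq : X = η '' closedBall 0 r ∪ K := by
    apply Set.Subset.antisymm
    · intro x hx
      rcases hXsub x hx with h | h
      · rcases hUdec x h with h | h
        · exact Or.inl h
        · exact Or.inr (interior_subset (hAK' h))
      · exact Or.inr (interior_subset (hEK h))
    · rintro x (h | h)
      · have hxU : x ∈ U := Set.image_mono hcr h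
        refine ⟨?_, fun hq => hQU x hq hxU⟩
        obtain ⟨z, hz, rfl⟩ := hxU
        exact hm hz
      · exact hKX h
  have hXc : IsClosed X := by rw [hXeq]; exact (hηc.union hK).isClosed
  have := clopen_bounded_empty hXo hXc (Set.sdiff_subset.trans ball_subset_closedBall)
  obtain ⟨e, he⟩ := hne
  exact absurd (hEX he) (by rw [this]; simp)

lemma isPreconnected_compl_ball : IsPreconnected (ball (0:ℂ) 1)ᶜ := by
  have h : (ball (0:ℂ) 1)ᶜ = {z : ℂ | ‖z‖ ∈ Set.Ici (1:ℝ)} := by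
    ext z; simp
  rw [h]
  exact isPreconnected_polar isPreconnected_Ici (fun t ht => zero_le_one.trans ht)

/-- Between a univalent image `U` of the disc into the disc and the disc itself there is,
when `U` misses a point of the disc, a domain with connected complement which is strictly
larger than `U` and strictly smaller than the disc. -/
lemma exists_domain_between {η : ℂ → ℂ} (hd : DifferentiableOn ℂ η (ball 0 1))
    (hi : Set.InjOn η (ball 0 1)) (hm : Set.MapsTo η (ball 0 1) (ball 0 1)) (h0 : η 0 = 0)
    {e : ℂ} (he : e ∈ ball (0:ℂ) 1) (heU : e ∉ η '' ball 0 1) :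
    ∃ V : Set ℂ, IsOpen V ∧ V ⊆ ball 0 1 ∧ IsPreconnected V ∧ IsPreconnected Vᶜ ∧
      η '' ball 0 1 ⊆ V ∧ e ∈ V ∧ V ≠ ball 0 1 := by
  set U := η '' ball 0 1 with hU
  have hUo : IsOpen U := inj_isOpen_image isOpen_ball hd hi isOpen_ball subset_rfl
  have hUb : U ⊆ ball 0 1 := hm.image_subset
  have h0U : (0:ℂ) ∈ U := ⟨0, by simp, h0⟩
  have hUp : IsPreconnected U :=
    (isConnected_ball one_pos).isPreconnected.image _ hd.continuousOn
  obtain ⟨ρ, heρ, hρ1⟩ := exists_between (show ‖e‖ < 1 by simpa using he)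
  have hρ0 : 0 < ρ := (norm_nonneg e).trans_lt heρ
  set W := U ∪ ball 0 ρ with hW
  have hWo : IsOpen W := hUo.union isOpen_ball
  have hWb : W ⊆ ball 0 1 := Set.union_subset hUb (ball_subset_ball hρ1.le)
  have hWp : IsPreconnected W := by
    refine hUp.union 0 h0U (by simpa using hρ0) (isConnected_ball hρ0).isPreconnected
  set Q : Set ℂ := closedBall 0 1 \ W with hQ
  have hQc : IsCompact Q := (isCompact_closedBall 0 1).diff hWo
  have hsQ : sphere 0 1 ⊆ Q := by
    intro x hx
    refine ⟨sphere_subset_closedBall hx, fun h => ?_⟩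
    have h1 := mem_ball_zero_iff.mp (hWb h)
    have h2 := mem_sphere_zero_iff_norm.mp hx
    linarith
  have h1s : (1:ℂ) ∈ sphere (0:ℂ) 1 := by simp
  have h1Q : (1:ℂ) ∈ Q := hsQ h1s
  set C := connectedComponentIn Q 1 with hC
  have hCp : IsPreconnected C := isPreconnected_connectedComponentIn
  have hCQ : C ⊆ Q := connectedComponentIn_subset Q 1
  have hCcl : IsClosed C := by
    apply isClosed_of_closure_subset
    apply hCp.closure.subset_connectedComponentIn (subset_closure (mem_connectedComponentIn h1Q))
    exact closure_minimal hCQ hQc.isClosed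
  have hsC : sphere 0 1 ⊆ C :=
    (isPreconnected_sphere (by simp) (0:ℂ) 1).subset_connectedComponentIn h1s hsQ
  set V : Set ℂ := ball 0 1 \ C with hV
  have hWV : W ⊆ V := fun x hx => ⟨hWb hx, fun h => (hCQ h).2 hx⟩
  have h0W : (0:ℂ) ∈ W := Or.inl h0U
  have hVo : IsOpen V := isOpen_ball.sdiff hCcl
  refine ⟨V, hVo, Set.sdiff_subset, ?_, ?_, fun x hx => hWV (Or.inl hx),
    hWV (Or.inr (by simpa using heρ)), ?_⟩
  · have hsub : V ⊆ connectedComponentIn V 0 := by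
      intro x hx
      by_contra hxn
      set O := connectedComponentIn V x with hO
      have hxO : x ∈ O := mem_connectedComponentIn hx
      have hOV : O ⊆ V := connectedComponentIn_subset V x
      have hOp : IsPreconnected O := isPreconnected_connectedComponentIn
      have hOo : IsOpen O := hVo.connectedComponentIn
      have hW0 : W ⊆ connectedComponentIn V 0 := hWp.subset_connectedComponentIn h0W hWV
      have hOW : ∀ y ∈ O, y ∉ W := by
        intro y hy hyW
        have e1 := connectedComponentIn_eq hy
        have e2 := connectedComponentIn_eq (hW0 hyW)
        rw [e2, ← e1] at hxn
        exact hxn hxO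
      have hOQ : closure O ⊆ Q :=
        closure_minimal (fun y hy => ⟨ball_subset_closedBall (hOV hy).1, hOW y hy⟩) hQc.isClosed
      by_cases hmeet : (closure O ∩ C).Nonempty
      · obtain ⟨y, hy1, hy2⟩ := hmeet
        have hun := IsPreconnected.union y hy1 hy2 hOp.closure hCp
        have := hun.subset_connectedComponentIn (Or.inr (mem_connectedComponentIn h1Q))
          (Set.union_subset hOQ hCQ)
        exact hx.2 (this (Or.inl (subset_closure hxO)))
      · rw [Set.not_nonempty_iff_eq_empty] at hmeet
        have hcV : closure O ⊆ V := by
          intro y hy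
          have hyC : y ∉ C := fun h => by
            have : y ∈ closure O ∩ C := ⟨hy, h⟩
            rw [hmeet] at this; simp at this
          refine ⟨?_, hyC⟩
          rcases (mem_closedBall.mp (hOQ hy).1).lt_or_eq with h | h
          · exact h
          · exact absurd (hsC h) hyC
        have hcO : closure O ⊆ O :=
          hOp.closure.subset_connectedComponentIn (subset_closure hxO) hcV
        have := clopen_bounded_empty hOo (isClosed_of_closure_subset hcO)
          (fun y hy => (hOQ (subset_closure hy)).1)
        rw [this] at hxO; simp at hxO
    have : V = connectedComponentIn V 0 :=
      Set.Subset.antisymm hsub (connectedComponentIn_subset V 0)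
    rw [this]; exact isPreconnected_connectedComponentIn
  · have : Vᶜ = C ∪ (ball (0:ℂ) 1)ᶜ := by
      rw [hV, Set.sdiff_eq, Set.compl_inter, compl_compl, Set.union_comm]
    rw [this]
    exact hCp.union 1 (hsC h1s) (by simp) isPreconnected_compl_ball
  · intro hVb
    have hCs : ∀ x ∈ C, ‖x‖ = 1 := by
      intro x hx
      by_contra hne
      have h1 : ‖x‖ ≤ 1 := by simpa using (hCQ hx).1
      have : x ∈ ball (0:ℂ) 1 := by simpa using lt_of_le_of_ne h1 hne
      rw [← hVb] at this
      exact this.2 hx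
    obtain ⟨ρ', hρρ', hρ'1⟩ := exists_between hρ1
    have : CompactSpace Q := isCompact_iff_compactSpace.mp hQc
    -- a relatively clopen piece of `Q` around the circle, of points of norm exceeding `ρ'`
    obtain ⟨⟨S, hSc, h1S⟩, hS⟩ : ∃ s : { s : Set Q // IsClopen s ∧ (⟨1, h1Q⟩ : Q) ∈ s },
        (s : Set Q) ⊆ {x : Q | ρ' < ‖(x:ℂ)‖} := by
      have : Nonempty { s : Set Q // IsClopen s ∧ (⟨1, h1Q⟩ : Q) ∈ s } :=
        ⟨⟨Set.univ, isClopen_univ, Set.mem_univ _⟩⟩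
      apply exists_subset_nhds_of_isCompact'
      · rintro ⟨s, hs, hs1⟩ ⟨t, ht, ht1⟩
        exact ⟨⟨s ∩ t, hs.inter ht, hs1, ht1⟩, Set.inter_subset_left, Set.inter_subset_right⟩
      · exact fun s => s.2.1.isClosed.isCompact
      · exact fun s => s.2.1.isClosed
      · intro x hx
        rw [← connectedComponent_eq_iInter_isClopen] at hx
        have hxC : (x:ℂ) ∈ C := by
          rw [hC, connectedComponentIn_eq_image h1Q]
          exact ⟨x, hx, rfl⟩
        have ho : IsOpen {x : Q | ρ' < ‖(x:ℂ)‖} :=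
          isOpen_lt continuous_const (by fun_prop)
        exact ho.mem_nhds (by simp only [Set.mem_ofPred_eq, hCs x hxC]; exact hρ'1)
    set Q1 : Set ℂ := Subtype.val '' S with hQ1
    set Q2 : Set ℂ := Subtype.val '' Sᶜ with hQ2
    have hQ1c : IsClosed Q1 := (hSc.isClosed.isCompact.image continuous_subtype_val).isClosed
    have hQ2c : IsClosed Q2 :=
      (hSc.compl.isClosed.isCompact.image continuous_subtype_val).isClosed
    have hQ1ρ : ∀ x ∈ Q1, ρ' < ‖x‖ := by
      rintro x ⟨y, hy, rfl⟩; exact hS hy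
    have hQ12 : ∀ x ∈ Q2, x ∉ Q1 := by
      rintro x ⟨y, hy, rfl⟩ ⟨y', hy', h⟩
      rw [Subtype.ext h] at hy'; exact hy hy'
    have hdec : ∀ x ∈ Q, x ∈ Q1 ∨ x ∈ Q2 := by
      intro x hx
      by_cases h : (⟨x, hx⟩ : Q) ∈ S
      · exact Or.inl ⟨_, h, rfl⟩
      · exact Or.inr ⟨_, h, rfl⟩
    have hQ1Q : Q1 ⊆ Q := by rintro x ⟨y, hy, rfl⟩; exact y.2
    have hQ2Q : Q2 ⊆ Q := by rintro x ⟨y, hy, rfl⟩; exact y.2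
    refine no_split hd hi hm (Q := Q1) (E := (closedBall 0 ρ' \ U) ∪ Q2) hQ1c
      ((((isCompact_closedBall 0 ρ').diff hUo).isClosed).union hQ2c) ?_ ?_ ?_ ?_
    · rw [Set.disjoint_left]
      rintro x hx (⟨h, -⟩ | h)
      · have h1 : ‖x‖ ≤ ρ' := by simpa using h
        linarith [hQ1ρ x hx]
      · exact hQ12 x h hx
    · -- the circle is connected and meets the clopen piece `S`
      intro x hx
      have hx' : (⟨x, hsQ hx⟩ : Q) ∈ connectedComponent (⟨1, h1Q⟩ : Q) := by
        have := hsC hx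
        rw [hC, connectedComponentIn_eq_image h1Q] at this
        obtain ⟨y, hy, hyx⟩ := this
        have hxy : (⟨x, hsQ hx⟩ : Q) = y := Subtype.ext hyx.symm
        rw [hxy]; exact hy
      rw [connectedComponent_eq_iInter_isClopen] at hx'
      exact ⟨_, Set.mem_iInter.mp hx' ⟨S, hSc, h1S⟩, rfl⟩
    · apply Set.Subset.antisymm
      · rintro x (hx | hx | hx)
        · exact ⟨(hQ1Q hx).1, fun h => (hQ1Q hx).2 (Or.inl h)⟩
        · exact ⟨closedBall_subset_closedBall hρ'1.le hx.1, hx.2⟩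
        · exact ⟨(hQ2Q hx).1, fun h => (hQ2Q hx).2 (Or.inl h)⟩
      · rintro x ⟨hx1, hx2⟩
        by_cases h : ‖x‖ ≤ ρ'
        · exact Or.inr (Or.inl ⟨by simpa using h, hx2⟩)
        · have hxQ : x ∈ Q := by
            refine ⟨hx1, ?_⟩
            rintro (h' | h')
            · exact hx2 h'
            · have : ‖x‖ < ρ := by simpa using h'
              linarith
          rcases hdec x hxQ with h' | h'
          · exact Or.inl h'
          · exact Or.inr (Or.inr h')
    · exact ⟨e, Or.inl ⟨by simp only [mem_closedBall_zero_iff]; linarith, heU⟩⟩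

/-! ### Factorization of bounded univalent functions -/

/-- `UU a ψ`: the function `ψ` is a univalent self-map of the unit disc fixing the origin, with
derivative `a > 0` there. -/
structure UU (a : ℝ) (ψ : ℂ → ℂ) : Prop where
  pos : 0 < a
  diff : DifferentiableOn ℂ ψ (ball 0 1)
  inj : Set.InjOn ψ (ball 0 1)
  maps : Set.MapsTo ψ (ball 0 1) (ball 0 1)
  zero : ψ 0 = 0
  der : deriv ψ 0 = a

lemma zero_mem_disc : (0:ℂ) ∈ ball (0:ℂ) 1 := by simp

namespace UU

variable {a b : ℝ} {ψ φ : ℂ → ℂ}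

lemma maps' (h : UU a ψ) : Set.MapsTo ψ (ball 0 1) (closedBall (ψ 0) 1) := by
  rw [h.zero]; exact h.maps.mono_right ball_subset_closedBall

lemma le_one (h : UU a ψ) : a ≤ 1 := by
  have := Complex.norm_deriv_le_one_of_mapsTo_ball h.diff h.maps' one_pos
  rwa [h.der, Complex.norm_real, Real.norm_of_nonneg h.pos.le] at this

lemma differentiableAt (h : UU a ψ) {z : ℂ} (hz : z ∈ ball (0:ℂ) 1) : DifferentiableAt ℂ ψ z :=
  h.diff.differentiableAt (isOpen_ball.mem_nhds hz)

lemma norm_le (h : UU a ψ) {z : ℂ} (hz : z ∈ ball (0:ℂ) 1) : ‖ψ z‖ ≤ ‖z‖ :=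
  Complex.norm_le_norm_of_mapsTo_ball h.diff (h.maps.mono_right ball_subset_closedBall) h.zero
    (by simpa using hz)

lemma eq_id (h : UU 1 ψ) : Set.EqOn ψ id (ball 0 1) := by
  have := Complex.affine_of_mapsTo_ball_of_norm_dslope_eq_div (R₂ := 1) (z₀ := 0) h.diff h.maps'
    zero_mem_disc (by rw [dslope_same, h.der]; simp)
  intro z hz
  rw [this hz, dslope_same, h.der, h.zero]; simp

lemma comp (h : UU a ψ) (h' : UU b φ) : UU (a * b) (ψ ∘ φ) where
  pos := mul_pos h.pos h'.pos
  diff := h.diff.comp h'.diff h'.maps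
  inj := h.inj.comp h'.inj h'.maps
  maps := h.maps.comp h'.maps
  zero := by simp [h.zero, h'.zero]
  der := by
    rw [deriv_comp _ (by rw [h'.zero]; exact h.differentiableAt zero_mem_disc)
      (h'.differentiableAt zero_mem_disc), h'.zero, h.der, h'.der]
    push_cast; ring

lemma congr (h : UU a ψ) (he : Set.EqOn φ ψ (ball 0 1)) : UU a φ where
  pos := h.pos
  diff := h.diff.congr he
  inj := h.inj.congr he.symm
  maps := h.maps.congr he.symm
  zero := by rw [he zero_mem_disc, h.zero]
  der := by
    rw [← h.der]
    exact (he.eventuallyEq_of_mem (isOpen_ball.mem_nhds zero_mem_disc)).deriv_eq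

lemma deriv_unique (h : UU a ψ) (h' : UU b ψ) : a = b := by
  have := h.der.symm.trans h'.der
  exact_mod_cast this

lemma id' : UU 1 id where
  pos := one_pos
  diff := differentiableOn_id
  inj := Set.injOn_id _
  maps := Set.mapsTo_id _
  zero := rfl
  der := by simp

/-- Subordination: a smaller image gives a factorization. -/
lemma factor (h : UU a ψ) (h' : UU b φ) (hs : ψ '' ball 0 1 ⊆ φ '' ball 0 1) :
    ∃ χ, UU (a / b) χ ∧ Set.EqOn ψ (φ ∘ χ) (ball 0 1) := by
  set k := Function.invFunOn φ (ball 0 1) with hk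
  have hk1 : ∀ z ∈ ball (0:ℂ) 1, k (φ z) = z := fun z hz => h'.inj.leftInvOn_invFunOn hz
  have hmem : ∀ z ∈ ball (0:ℂ) 1, ∃ w ∈ ball (0:ℂ) 1, φ w = ψ z := fun z hz => hs ⟨z, hz, rfl⟩
  have hkm : ∀ z ∈ ball (0:ℂ) 1, k (ψ z) ∈ ball (0:ℂ) 1 := fun z hz =>
    Function.invFunOn_mem (hmem z hz)
  have hke : ∀ z ∈ ball (0:ℂ) 1, φ (k (ψ z)) = ψ z := fun z hz =>
    Function.invFunOn_eq (hmem z hz)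
  have hkd : ∀ z ∈ ball (0:ℂ) 1, DifferentiableAt ℂ k (ψ z) := by
    intro z hz
    have := inj_inv_differentiableAt isOpen_ball h'.diff h'.inj hk1 (hkm z hz)
    rwa [hke z hz] at this
  have hd : ∀ z ∈ ball (0:ℂ) 1, DifferentiableAt ℂ (k ∘ ψ) z := fun z hz =>
    (hkd z hz).comp z (h.differentiableAt hz)
  have hz0 : (k ∘ ψ) 0 = 0 := by
    have := hk1 0 zero_mem_disc
    rw [h'.zero] at this
    simp [h.zero, this]
  refine ⟨k ∘ ψ, ⟨div_pos h.pos h'.pos, fun z hz => (hd z hz).differentiableWithinAt, ?_, ?_,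
    hz0, ?_⟩, fun z hz => (hke z hz).symm⟩
  · intro x hx y hy hxy
    apply h.inj hx hy
    rw [← hke x hx, ← hke y hy]
    exact congrArg φ hxy
  · exact fun z hz => hkm z hz
  · have he : ψ =ᶠ[𝓝 0] φ ∘ (k ∘ ψ) := by
      filter_upwards [isOpen_ball.mem_nhds zero_mem_disc] with z hz
      exact (hke z hz).symm
    have := he.deriv_eq
    rw [deriv_comp _ (by rw [hz0]; exact h'.differentiableAt zero_mem_disc)
      (hd 0 zero_mem_disc), hz0, h.der, h'.der] at this
    have hb : (b:ℂ) ≠ 0 := by exact_mod_cast h'.pos.ne'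
    push_cast
    rw [this]
    field_simp

/-- A map other than the identity factors through a map strictly between it and the identity. -/
lemma between (h : UU a ψ) (ha : a < 1) :
    ∃ φ b χ, UU b φ ∧ UU (a / b) χ ∧ Set.EqOn ψ (φ ∘ χ) (ball 0 1) ∧ a < b ∧ b < 1 := by
  have hne : ∃ e ∈ ball (0:ℂ) 1, e ∉ ψ '' ball 0 1 := by
    by_contra! hcon
    obtain ⟨χ, hχ, -⟩ := id'.factor h (by rw [Set.image_id]; exact hcon)
    have := hχ.le_one
    rw [div_le_one h.pos] at this
    linarith
  obtain ⟨e, he, heU⟩ := hne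
  obtain ⟨V, hVo, hVb, hVp, hVc, hUV, heV, hVne⟩ :=
    exists_domain_between h.diff h.inj h.maps h.zero he heU
  obtain ⟨φ, b, hb, hφd, hφi, hφV, hφ0, hφ'⟩ :=
    riemann_map hVo hVb hVp (hUV ⟨0, zero_mem_disc, h.zero⟩) hVc
  have hφ : UU b φ := ⟨hb, hφd, hφi, fun z hz => hVb (hφV ▸ ⟨z, hz, rfl⟩), hφ0, hφ'⟩
  obtain ⟨χ, hχ, hχe⟩ := h.factor hφ (by rw [hφV]; exact hUV)
  refine ⟨φ, b, χ, hφ, hχ, hχe, ?_, ?_⟩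
  · have h1 := hχ.le_one
    rw [div_le_one hb] at h1
    refine lt_of_le_of_ne h1 fun hab => ?_
    subst hab
    rw [div_self hb.ne'] at hχ
    rw [← hφV] at heV
    obtain ⟨z, hz, rfl⟩ := heV
    apply heU
    refine ⟨z, hz, ?_⟩
    rw [hχe hz, Function.comp, hχ.eq_id hz, id]
  · refine lt_of_le_of_ne hφ.le_one fun hb1 => ?_
    subst hb1
    apply hVne
    rw [← hφV, hφ.eq_id.image_eq, Set.image_id]

/-- Compactness of the family, along ultrafilters. -/
lemma limit (l : Ultrafilter ℕ) {u : ℕ → ℝ} {Ψ : ℕ → ℂ → ℂ} (h : ∀ n, UU (u n) (Ψ n)) {s : ℝ}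
    (hs : 0 < s) (hu : Tendsto u l (𝓝 s)) :
    ∃ χ, UU s χ ∧ TendstoLocallyUniformlyOn Ψ χ l (ball 0 1) := by
  obtain ⟨χ, hlu, hd⟩ := ultra_limit l isOpen_ball (fun n => (h n).diff) (M := 1)
    (fun n z hz => (mem_ball_zero_iff.mp ((h n).maps hz)).le)
  have hder : deriv χ 0 = s := by
    have h1 := (hlu.deriv (Eventually.of_forall fun n => (h n).diff) isOpen_ball).tendsto_at
      zero_mem_disc
    have h2 : Tendsto (fun n => ((u n : ℝ) : ℂ)) l (𝓝 (s:ℂ)) :=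
      (Complex.continuous_ofReal.tendsto s).comp hu
    refine tendsto_nhds_unique h1 (h2.congr fun n => ?_)
    simp [(h n).der]
  have hinj : Set.InjOn χ (ball 0 1) :=
    hurwitz_injOn isOpen_ball (isConnected_ball one_pos).isPreconnected (fun n => (h n).diff) hlu
      (fun n => (h n).inj) zero_mem_disc (by rw [hder]; exact_mod_cast hs.ne')
  have h0 : χ 0 = 0 := by
    refine tendsto_nhds_unique (hlu.tendsto_at zero_mem_disc) ?_
    simp only [(h _).zero]
    exact tendsto_const_nhds
  have hb : ∀ z ∈ ball (0:ℂ) 1, ‖χ z‖ ≤ 1 := by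
    intro z hz
    refine le_of_tendsto (hlu.tendsto_at hz).norm (Eventually.of_forall fun n => ?_)
    exact (mem_ball_zero_iff.mp ((h n).maps hz)).le
  exact ⟨χ, ⟨hs, hd, hinj, norm_lt_one_of_open_image isOpen_ball hd hinj hb, h0, hder⟩, hlu⟩

/-- The derivatives at `0` of the left factors of `ψ` form a closed set. -/
lemma factor_closed (h : UU a ψ) {u : ℕ → ℝ} {s : ℝ} (hu : Tendsto u atTop (𝓝 s))
    (hf : ∀ n, ∃ χ η, UU (u n) χ ∧ UU (a / u n) η ∧ Set.EqOn ψ (χ ∘ η) (ball 0 1)) :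
    ∃ χ η, UU s χ ∧ UU (a / s) η ∧ Set.EqOn ψ (χ ∘ η) (ball 0 1) := by
  choose χ η hχ hη he using hf
  have hua : ∀ n, a ≤ u n := fun n => by
    have := (hη n).le_one
    rwa [div_le_one (hχ n).pos] at this
  have hs : 0 < s := h.pos.trans_le (ge_of_tendsto' hu hua)
  have hu' : Tendsto u (hyperfilter ℕ) (𝓝 s) := hu.mono_left Nat.hyperfilter_le_atTop
  obtain ⟨X, hX, hXl⟩ := limit (hyperfilter ℕ) hχ hs hu'
  obtain ⟨Y, hY, hYl⟩ := limit (hyperfilter ℕ) hη (div_pos h.pos hs)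
    (Tendsto.div tendsto_const_nhds hu' hs.ne')
  refine ⟨X, Y, hX, hY, fun z hz => ?_⟩
  have hz' := hY.maps hz
  have h1 := hXl.tendsto_comp (hX.diff.continuousOn _ hz') hz'
    (tendsto_nhdsWithin_iff.mpr ⟨hYl.tendsto_at hz, Eventually.of_forall fun n => (hη n).maps hz⟩)
  refine tendsto_nhds_unique ?_ h1
  refine tendsto_const_nhds.congr fun n => ?_
  exact he n hz

/-- Every value between `a` and `1` is the derivative at `0` of a left factor of `ψ`. -/
theorem interpolate (h : UU a ψ) {c : ℝ} (hac : a ≤ c) (hc1 : c ≤ 1) :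
    ∃ χ η, UU c χ ∧ UU (a / c) η ∧ Set.EqOn ψ (χ ∘ η) (ball 0 1) := by
  set S : Set ℝ := {x | x ≤ c ∧ ∃ χ η, UU x χ ∧ UU (a / x) η ∧ Set.EqOn ψ (χ ∘ η) (ball 0 1)}
  have haS : a ∈ S := ⟨hac, ψ, id, h, by rw [div_self h.pos.ne']; exact id', fun z _ => rfl⟩
  have hSb : BddAbove S := ⟨c, fun x hx => hx.1⟩
  obtain ⟨u, huS, hu⟩ := exists_seq_tendsto_sSup' ⟨a, haS⟩ hSb
  obtain ⟨X, Y, hX, hY, hXY⟩ := h.factor_closed hu fun n => (huS n).2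
  set s := sSup S with hs
  have hsc : s ≤ c := csSup_le ⟨a, haS⟩ fun x hx => hx.1
  set R : Set ℝ := {x | c ≤ x ∧ ∃ χ η, UU x χ ∧ UU (s / x) η ∧ Set.EqOn X (χ ∘ η) (ball 0 1)}
  have h1R : (1:ℝ) ∈ R := ⟨hc1, id, X, id', by simpa using hX, fun z _ => rfl⟩
  have hRb : BddBelow R := ⟨c, fun x hx => hx.1⟩
  obtain ⟨v, -, hv, hvR⟩ := exists_seq_tendsto_sInf ⟨1, h1R⟩ hRb
  obtain ⟨Z, T, hZ, hT, hZT⟩ := hX.factor_closed hv fun n => (hvR n).2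
  set t := sInf R with ht
  have hct : c ≤ t := le_csInf ⟨1, h1R⟩ fun x hx => hx.1
  have ht0 := hZ.pos
  have hs0 := hX.pos
  rcases hsc.eq_or_lt with h1 | h1
  · rw [← h1]; exact ⟨X, Y, hX, hY, hXY⟩
  exfalso
  obtain ⟨φ, b, χ, hφ, hχ, he, hb1, hb2⟩ := hT.between (by rw [div_lt_one ht0]; linarith)
  have hb0 := hφ.pos
  have hst : s < t * b := by rwa [div_lt_iff₀ ht0, mul_comm] at hb1
  have htb : t * b < t := by nlinarith
  have hXeq : Set.EqOn X ((Z ∘ φ) ∘ χ) (ball 0 1) := by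
    intro z hz
    rw [hZT hz, Function.comp, he hz]; rfl
  have hχ' : UU (s / (t * b)) χ := by rwa [div_div] at hχ
  rcases le_total (t * b) c with h2 | h2
  · have : t * b ∈ S := by
      refine ⟨h2, Z ∘ φ, χ ∘ Y, hZ.comp hφ, ?_, ?_⟩
      · have := hχ'.comp hY
        convert! this using 1
        field_simp
      · intro z hz
        rw [hXY hz, Function.comp, hXeq (hY.maps hz)]; rfl
    linarith [le_csSup hSb this]
  · have : t * b ∈ R := ⟨h2, Z ∘ φ, χ, hZ.comp hφ, hχ', hXeq⟩
    linarith [csInf_le hRb this]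

end UU

/-! ### Carathéodory functions -/

/-- The `m`-th Taylor coefficient of `P` at the origin. -/
noncomputable def tc (P : ℂ → ℂ) (m : ℕ) : ℂ := iteratedDeriv m P 0 / (m.factorial : ℂ)

lemma tc_zero (P : ℂ → ℂ) : tc P 0 = P 0 := by simp [tc]

section circle

variable {P : ℂ → ℂ} {r : ℝ}

lemma diffContOnCl_disc (hP : DifferentiableOn ℂ P (ball 0 1)) (hr1 : r < 1) :
    DiffContOnCl ℂ P (ball 0 r) := by
  apply DifferentiableOn.diffContOnCl
  apply hP.mono
  exact closure_ball_subset_closedBall.trans (closedBall_subset_ball hr1)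

lemma avg_coeff (hP : DifferentiableOn ℂ P (ball 0 1)) (hr : 0 < r) (hr1 : r < 1) (m : ℕ) :
    circleAverage (fun z => P z * z⁻¹ ^ m) 0 r = tc P m := by
  rw [circleAverage_eq_circleIntegral hr.ne']
  have h := (diffContOnCl_disc hP hr1).circleIntegral_one_div_sub_center_pow_smul hr m
  have h2 : (∮ z in C(0, r), (z - 0)⁻¹ • (P z * z⁻¹ ^ m)) =
      ∮ z in C(0, r), (1 / (z - 0) ^ (m + 1)) • P z := by
    congr 1; ext z
    simp only [sub_zero, smul_eq_mul, one_div, pow_succ, mul_inv, inv_pow]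
    ring
  rw [h2, h, tc]
  simp only [smul_eq_mul]
  have : (2 * (π:ℂ) * I) ≠ 0 := by simp [Real.pi_ne_zero]
  field_simp

lemma avg_pos_pow (hP : DifferentiableOn ℂ P (ball 0 1)) (hr : 0 < r) (hr1 : r < 1) {m : ℕ}
    (hm : m ≠ 0) : circleAverage (fun z => P z * z ^ m) 0 r = 0 := by
  have := (diffContOnCl_disc (P := fun z => P z * z ^ m)
    (hP.mul (by fun_prop)) hr1)
  have h2 := DiffContOnCl.circleAverage (c := 0) (R := r) (by rwa [abs_of_pos hr])
  rw [h2]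
  simp [hm]

lemma circleInt_of (hr : 0 < r) {f : ℂ → ℂ} (hf : ContinuousOn f (sphere 0 r)) :
    CircleIntegrable f 0 r := hf.circleIntegrable hr.le

lemma avg_re_mul (hP : DifferentiableOn ℂ P (ball 0 1)) (hr : 0 < r) (hr1 : r < 1) {m : ℕ}
    (hm : m ≠ 0) :
    circleAverage (fun z => ((P z).re : ℂ) * (2 * ((r:ℂ) * z⁻¹) ^ m)) 0 r
      = (r:ℂ) ^ m * tc P m := by
  have hPc : ContinuousOn P (sphere 0 r) := hP.continuousOn.mono
    (sphere_subset_closedBall.trans (closedBall_subset_ball hr1))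
  have hne : ∀ z ∈ sphere (0:ℂ) r, z ≠ 0 := by
    rintro z hz rfl
    simp at hz; linarith
  have hinv : ContinuousOn (fun z : ℂ => z⁻¹) (sphere 0 r) := continuousOn_id.inv₀ hne
  have key : Set.EqOn (fun z => ((P z).re : ℂ) * (2 * ((r:ℂ) * z⁻¹) ^ m))
      (fun z => (r:ℂ) ^ m • (P z * z⁻¹ ^ m) +
        ((r:ℂ) ^ m)⁻¹ • (starRingEnd ℂ) (P z * z ^ m)) (sphere 0 |r|) := by
    intro z hz
    rw [abs_of_pos hr] at hz
    have hz0 := hne z hz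
    have hr0 : (r:ℂ) ≠ 0 := by exact_mod_cast hr.ne'
    have hzz : (starRingEnd ℂ) z = r ^ 2 * z⁻¹ := by
      have h1 : z * (starRingEnd ℂ) z = (r:ℂ) ^ 2 := by
        rw [Complex.mul_conj, Complex.normSq_eq_norm_sq]
        have : ‖z‖ = r := by simpa using hz
        rw [this]; push_cast; rfl
      field_simp
      rw [mul_comm]; exact h1
    have hre : ((P z).re : ℂ) = (P z + (starRingEnd ℂ) (P z)) / 2 := by
      rw [Complex.add_conj]; push_cast; ring
    simp only [smul_eq_mul, map_mul, map_pow, hzz, hre, mul_pow]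
    field_simp
    ring
  rw [circleAverage_congr_sphere key, circleAverage_fun_add, circleAverage_fun_smul,
    circleAverage_fun_smul, avg_coeff hP hr hr1]
  · have h3 : circleAverage (fun z => (starRingEnd ℂ) (P z * z ^ m)) 0 r = 0 := by
      have hci : CircleIntegrable (fun z => P z * z ^ m) 0 r :=
        circleInt_of hr (hPc.mul (by fun_prop))
      have := ContinuousLinearMap.circleAverage_comp_comm
        (Complex.conjCLE : ℂ →L[ℝ] ℂ) hci
      rw [avg_pos_pow hP hr hr1 hm] at this
      simpa [Function.comp_def] using this
    rw [h3]; simp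
  · exact circleInt_of hr (by fun_prop)
  · apply circleInt_of hr
    have h4 : ContinuousOn (fun z => P z * z ^ m) (sphere 0 r) := by fun_prop
    have h5 : ContinuousOn (fun z => (starRingEnd ℂ) (P z * z ^ m)) (sphere 0 r) :=
      Complex.continuous_conj.comp_continuousOn h4
    fun_prop

lemma avg_re (hP : DifferentiableOn ℂ P (ball 0 1)) (hr : 0 < r) (hr1 : r < 1) :
    circleAverage (fun z => ((P z).re : ℂ)) 0 r = ((P 0).re : ℂ) := by
  have hPc : ContinuousOn P (sphere 0 r) := hP.continuousOn.mono
    (sphere_subset_closedBall.trans (closedBall_subset_ball hr1))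
  have h := DiffContOnCl.circleAverage (c := 0) (R := r) (f := P)
    (by rw [abs_of_pos hr]; exact diffContOnCl_disc hP hr1)
  have := ContinuousLinearMap.circleAverage_comp_comm
    (Complex.ofRealCLM ∘L Complex.reCLM : ℂ →L[ℝ] ℂ) (circleInt_of hr hPc)
  rw [h] at this
  simpa [Function.comp_def] using this

end circle

/-- A real-affine functional of finitely many Taylor coefficients which is nonnegative on the
extreme points `(1 + κ z) / (1 - κ z)` is nonnegative on all functions `P` with `P 0 = 1` and
nonnegative real part. -/
lemma caratheodory_affine (l : ℝ) (a : ℕ → ℂ) (n : ℕ)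
    (hk : ∀ κ : ℂ, ‖κ‖ = 1 →
      0 ≤ l + (∑ m ∈ Finset.range (n + 1), a m * (if m = 0 then 1 else 2 * κ ^ m)).re)
    {P : ℂ → ℂ} (hP : DifferentiableOn ℂ P (ball 0 1)) (hP0 : P 0 = 1)
    (hre : ∀ z ∈ ball (0:ℂ) 1, 0 ≤ (P z).re) :
    0 ≤ l + (∑ m ∈ Finset.range (n + 1), a m * tc P m).re := by
  have hr : ∀ r : ℝ, 0 < r → r < 1 →
      0 ≤ l + (∑ m ∈ Finset.range (n + 1), a m * ((r:ℂ) ^ m * tc P m)).re := by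
    intro r hr hr1
    have hPc : ContinuousOn P (sphere 0 r) := hP.continuousOn.mono
      (sphere_subset_closedBall.trans (closedBall_subset_ball hr1))
    have hne : ∀ z ∈ sphere (0:ℂ) r, z ≠ 0 := by
      rintro z hz rfl
      simp at hz; linarith
    have hinv : ContinuousOn (fun z : ℂ => z⁻¹) (sphere 0 r) := continuousOn_id.inv₀ hne
    have hrec : ContinuousOn (fun z => ((P z).re : ℂ)) (sphere 0 r) :=
      (Complex.continuous_ofReal.comp Complex.continuous_re).comp_continuousOn hPc
    have hterm : ∀ m, ContinuousOn (fun z => ((P z).re : ℂ) *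
        (if m = 0 then 1 else 2 * ((r:ℂ) * z⁻¹) ^ m)) (sphere 0 r) := by
      intro m
      apply hrec.mul
      split_ifs
      · exact continuousOn_const
      · exact continuousOn_const.mul ((continuousOn_const.mul hinv).pow m)
    set H : ℂ → ℂ := fun z => (l:ℂ) • ((P z).re : ℂ) + ∑ m ∈ Finset.range (n + 1),
      a m • (((P z).re : ℂ) * (if m = 0 then 1 else 2 * ((r:ℂ) * z⁻¹) ^ m)) with hH
    have hterm' : ∀ m ∈ Finset.range (n + 1), ContinuousOn (fun z => a m • (((P z).re : ℂ) *
        (if m = 0 then 1 else 2 * ((r:ℂ) * z⁻¹) ^ m))) (sphere 0 r) :=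
      fun m _ => (hterm m).const_smul (a m)
    have hrec' : ContinuousOn (fun z => (l:ℂ) • ((P z).re : ℂ)) (sphere 0 r) :=
      hrec.const_smul (l:ℂ)
    have hsum' := continuousOn_finsetSum _ hterm'
    have hHc : ContinuousOn H (sphere 0 r) := hrec'.add hsum'
    have havg : circleAverage H 0 r
        = l + ∑ m ∈ Finset.range (n + 1), a m * ((r:ℂ) ^ m * tc P m) := by
      rw [hH, circleAverage_fun_add (circleInt_of hr hrec') (circleInt_of hr hsum'),
        circleAverage_fun_sum (fun m hm => circleInt_of hr (hterm' m hm)),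
        circleAverage_fun_smul, avg_re hP hr hr1, hP0]
      congr 1
      · simp
      · refine Finset.sum_congr rfl fun m _ => ?_
        rw [circleAverage_fun_smul, smul_eq_mul]
        congr 1
        by_cases hm : m = 0
        · subst hm
          simp [avg_re hP hr hr1, tc_zero, hP0]
        · simp only [hm, if_false]
          exact avg_re_mul hP hr hr1 hm
    have h1 := ContinuousLinearMap.circleAverage_comp_comm Complex.reCLM (circleInt_of hr hHc)
    rw [havg] at h1
    have h2 : 0 ≤ circleAverage (Complex.reCLM ∘ H) 0 r := by
      apply circleAverage_nonneg_of_nonneg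
      intro z hz
      rw [abs_of_pos hr] at hz
      have hzr : ‖z‖ = r := by simpa using hz
      have hzb : z ∈ ball (0:ℂ) 1 := by simp only [mem_ball_zero_iff]; linarith
      have hκ := hk ((r:ℂ) * z⁻¹) (by
        rw [norm_mul, norm_inv, hzr, Complex.norm_real, Real.norm_of_nonneg hr.le]
        field_simp)
      have hHz : H z = ((P z).re : ℂ) * ((l:ℂ) + ∑ m ∈ Finset.range (n + 1),
          a m * (if m = 0 then 1 else 2 * ((r:ℂ) * z⁻¹) ^ m)) := by
        simp only [hH, smul_eq_mul, mul_add, Finset.mul_sum]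
        congr 1
        · ring
        · exact Finset.sum_congr rfl fun m _ => by ring
      simp only [Function.comp, Complex.reCLM_apply, hHz, Complex.re_ofReal_mul,
        Complex.add_re, Complex.ofReal_re]
      exact mul_nonneg (hre z hzb) hκ
    rw [h1] at h2
    simpa using h2
  have hcont : Tendsto (fun r : ℝ => l + (∑ m ∈ Finset.range (n + 1),
      a m * ((r:ℂ) ^ m * tc P m)).re) (𝓝[<] 1)
      (𝓝 (l + (∑ m ∈ Finset.range (n + 1), a m * (((1:ℝ):ℂ) ^ m * tc P m)).re)) := by
    apply Tendsto.mono_left _ nhdsWithin_le_nhds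
    apply Continuous.tendsto
    fun_prop
  have := ge_of_tendsto hcont (by
    filter_upwards [Ioo_mem_nhdsLT (show (0:ℝ) < 1 by norm_num)] with r hr'
    exact hr r hr'.1 hr'.2)
  simpa using this

/-- By `dbL_affine` and `caratheodory_affine` the form `dbL` is nonnegative on all Carathéodory
functions, since by `dbL_kappa` it is so on `(1 + κ z) / (1 - κ z)`. -/
lemma dbL_nonneg (σ lam : ℕ → ℝ) (n : ℕ)
    (hσ : ∀ k, 1 ≤ k → σ k = σ (k + 1) + lam k + lam (k + 1))
    (h0 : σ (n + 1) = 0) (h0' : lam (n + 1) = 0) (hl : ∀ k, 1 ≤ k → 0 ≤ lam k) (c : ℕ → ℂ)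
    {P : ℂ → ℂ} (hP : DifferentiableOn ℂ P (ball 0 1)) (hP0 : P 0 = 1)
    (hre : ∀ z ∈ ball (0:ℂ) 1, 0 ≤ (P z).re) :
    0 ≤ dbL σ lam c (tc P) n := by
  obtain ⟨l, a, h⟩ := dbL_affine σ lam c n
  rw [h]
  apply caratheodory_affine l a n _ hP hP0 hre
  intro κ hκ
  rw [← h]
  exact dbL_kappa σ lam n hσ h0 h0' hl c κ hκ

/-! ### Systems of de Branges weights -/

open Polynomial in
lemma wA_neg (N : ℕ) : ∀ k : ℤ, wA N (-k) = wA N k := by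
  induction N using Nat.twoStepInduction with
  | zero => intro k; simp [wA]
  | one =>
    intro k
    simp only [wA, neg_eq_zero, neg_inj]
    have : (-k = 1 ∨ k = 1) ↔ (k = 1 ∨ k = -1) := by omega
    simp only [this]
  | more N h0 h1 =>
    intro k
    rw [wA_rec, wA_rec, h0, h1, show -k - 1 = -(k + 1) by ring, show -k + 1 = -(k - 1) by ring,
      h1, h1]
    ring

open Polynomial in
lemma wA_tab1 : wA 1 0 = 2 - 2 * X ∧ wA 1 1 = X ∧ wA 1 2 = 0 := by
  refine ⟨?_, ?_, ?_⟩ <;> simp [wA]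
  ring

open Polynomial in
lemma wA_tab2 : wA 2 0 = 3 - 8 * X + 6 * X ^ 2 ∧
    wA 2 1 = 4 * X - 4 * X ^ 2 ∧
    wA 2 2 = X ^ 2 ∧
    wA 2 3 = 0 := by
  refine ⟨?_, ?_, ?_, ?_⟩
  · rw [wA_rec 0 0, show (0:ℤ) - 1 = -1 by norm_num, wA_neg, show (0:ℤ) + 1 = 1 by norm_num]
    simp only [wA]
    norm_num
    try ring
  · rw [wA_rec 0 1, show (1:ℤ) - 1 = 0 by norm_num, show (1:ℤ) + 1 = 2 by norm_num]
    simp only [wA]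
    norm_num
    try ring
  · rw [wA_rec 0 2, show (2:ℤ) - 1 = 1 by norm_num, show (2:ℤ) + 1 = 3 by norm_num]
    simp only [wA]
    norm_num
    try ring
  · exact wA_support 2 3 (by norm_num)

open Polynomial in
lemma wA_tab3 : wA 3 0 = 4 - 20 * X + 36 * X ^ 2 - 20 * X ^ 3 ∧
    wA 3 1 = 10 * X - 24 * X ^ 2 + 15 * X ^ 3 ∧
    wA 3 2 = 6 * X ^ 2 - 6 * X ^ 3 ∧
    wA 3 3 = X ^ 3 ∧
    wA 3 4 = 0 := by
  obtain ⟨p0, p1, p2, p3⟩ := wA_tab2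
  obtain ⟨q0, q1, q2⟩ := wA_tab1
  refine ⟨?_, ?_, ?_, ?_, ?_⟩
  · rw [wA_rec 1 0, show (0:ℤ) - 1 = -1 by norm_num, wA_neg, show (0:ℤ) + 1 = 1 by norm_num]
    simp only [Nat.reduceAdd, p0, p1, q0]
    ring
  · rw [wA_rec 1 1, show (1:ℤ) - 1 = 0 by norm_num, show (1:ℤ) + 1 = 2 by norm_num]
    simp only [Nat.reduceAdd, p0, p1, p2, q1]
    ring
  · rw [wA_rec 1 2, show (2:ℤ) - 1 = 1 by norm_num, show (2:ℤ) + 1 = 3 by norm_num]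
    simp only [Nat.reduceAdd, p1, p2, p3, q2]
    ring
  · rw [wA_rec 1 3, show (3:ℤ) - 1 = 2 by norm_num, show (3:ℤ) + 1 = 4 by norm_num]
    simp only [Nat.reduceAdd, p2, p3, wA_support 2 4 (by norm_num), wA_support 1 3 (by norm_num)]
    ring
  · exact wA_support 3 4 (by norm_num)

open Polynomial in
lemma wA_tab4 : wA 4 0 = 5 - 40 * X + 126 * X ^ 2 - 160 * X ^ 3 + 70 * X ^ 4 ∧
    wA 4 1 = 20 * X - 84 * X ^ 2 + 120 * X ^ 3 - 56 * X ^ 4 ∧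
    wA 4 2 = 21 * X ^ 2 - 48 * X ^ 3 + 28 * X ^ 4 ∧
    wA 4 3 = 8 * X ^ 3 - 8 * X ^ 4 ∧
    wA 4 4 = X ^ 4 ∧
    wA 4 5 = 0 := by
  obtain ⟨p0, p1, p2, p3, p4⟩ := wA_tab3
  obtain ⟨q0, q1, q2, q3⟩ := wA_tab2
  refine ⟨?_, ?_, ?_, ?_, ?_, ?_⟩
  · rw [wA_rec 2 0, show (0:ℤ) - 1 = -1 by norm_num, wA_neg, show (0:ℤ) + 1 = 1 by norm_num]
    simp only [Nat.reduceAdd, p0, p1, q0]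
    ring
  · rw [wA_rec 2 1, show (1:ℤ) - 1 = 0 by norm_num, show (1:ℤ) + 1 = 2 by norm_num]
    simp only [Nat.reduceAdd, p0, p1, p2, q1]
    ring
  · rw [wA_rec 2 2, show (2:ℤ) - 1 = 1 by norm_num, show (2:ℤ) + 1 = 3 by norm_num]
    simp only [Nat.reduceAdd, p1, p2, p3, q2]
    ring
  · rw [wA_rec 2 3, show (3:ℤ) - 1 = 2 by norm_num, show (3:ℤ) + 1 = 4 by norm_num]
    simp only [Nat.reduceAdd, p2, p3, p4, q3]
    ring
  · rw [wA_rec 2 4, show (4:ℤ) - 1 = 3 by norm_num, show (4:ℤ) + 1 = 5 by norm_num]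
    simp only [Nat.reduceAdd, p3, p4, wA_support 3 5 (by norm_num), wA_support 2 4 (by norm_num)]
    ring
  · exact wA_support 4 5 (by norm_num)

open Polynomial in
lemma wA_tab5 : wA 5 0 = 6 - 70 * X + 336 * X ^ 2 - 720 * X ^ 3 + 700 * X ^ 4 - 252 * X ^ 5 ∧
    wA 5 1 = 35 * X - 224 * X ^ 2 + 540 * X ^ 3 - 560 * X ^ 4 + 210 * X ^ 5 ∧
    wA 5 2 = 56 * X ^ 2 - 216 * X ^ 3 + 280 * X ^ 4 - 120 * X ^ 5 ∧
    wA 5 3 = 36 * X ^ 3 - 80 * X ^ 4 + 45 * X ^ 5 ∧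
    wA 5 4 = 10 * X ^ 4 - 10 * X ^ 5 ∧
    wA 5 5 = X ^ 5 := by
  obtain ⟨p0, p1, p2, p3, p4, p5⟩ := wA_tab4
  obtain ⟨q0, q1, q2, q3, q4⟩ := wA_tab3
  refine ⟨?_, ?_, ?_, ?_, ?_, ?_⟩
  · rw [wA_rec 3 0, show (0:ℤ) - 1 = -1 by norm_num, wA_neg, show (0:ℤ) + 1 = 1 by norm_num]
    simp only [Nat.reduceAdd, p0, p1, q0]
    ring
  · rw [wA_rec 3 1, show (1:ℤ) - 1 = 0 by norm_num, show (1:ℤ) + 1 = 2 by norm_num]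
    simp only [Nat.reduceAdd, p0, p1, p2, q1]
    ring
  · rw [wA_rec 3 2, show (2:ℤ) - 1 = 1 by norm_num, show (2:ℤ) + 1 = 3 by norm_num]
    simp only [Nat.reduceAdd, p1, p2, p3, q2]
    ring
  · rw [wA_rec 3 3, show (3:ℤ) - 1 = 2 by norm_num, show (3:ℤ) + 1 = 4 by norm_num]
    simp only [Nat.reduceAdd, p2, p3, p4, q3]
    ring
  · rw [wA_rec 3 4, show (4:ℤ) - 1 = 3 by norm_num, show (4:ℤ) + 1 = 5 by norm_num]
    simp only [Nat.reduceAdd, p3, p4, p5, q4]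
    ring
  · rw [wA_rec 3 5, show (5:ℤ) - 1 = 4 by norm_num, show (5:ℤ) + 1 = 6 by norm_num]
    simp only [Nat.reduceAdd, p4, p5, wA_support 4 6 (by norm_num), wA_support 3 5 (by norm_num)]
    ring

open Polynomial in
lemma wA_tab6 : wA 6 0 = 7 - 112 * X + 756 * X ^ 2 - 2400 * X ^ 3 + 3850 * X ^ 4 - 3024 * X ^ 5 + 924 * X ^ 6 ∧
    wA 6 1 = 56 * X - 504 * X ^ 2 + 1800 * X ^ 3 - 3080 * X ^ 4 + 2520 * X ^ 5 - 792 * X ^ 6 ∧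
    wA 6 2 = 126 * X ^ 2 - 720 * X ^ 3 + 1540 * X ^ 4 - 1440 * X ^ 5 + 495 * X ^ 6 ∧
    wA 6 3 = 120 * X ^ 3 - 440 * X ^ 4 + 540 * X ^ 5 - 220 * X ^ 6 ∧
    wA 6 4 = 55 * X ^ 4 - 120 * X ^ 5 + 66 * X ^ 6 := by
  obtain ⟨p0, p1, p2, p3, p4, p5⟩ := wA_tab5
  obtain ⟨q0, q1, q2, q3, q4, q5⟩ := wA_tab4
  refine ⟨?_, ?_, ?_, ?_, ?_⟩
  · rw [wA_rec 4 0, show (0:ℤ) - 1 = -1 by norm_num, wA_neg, show (0:ℤ) + 1 = 1 by norm_num]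
    simp only [Nat.reduceAdd, p0, p1, q0]
    ring
  · rw [wA_rec 4 1, show (1:ℤ) - 1 = 0 by norm_num, show (1:ℤ) + 1 = 2 by norm_num]
    simp only [Nat.reduceAdd, p0, p1, p2, q1]
    ring
  · rw [wA_rec 4 2, show (2:ℤ) - 1 = 1 by norm_num, show (2:ℤ) + 1 = 3 by norm_num]
    simp only [Nat.reduceAdd, p1, p2, p3, q2]
    ring
  · rw [wA_rec 4 3, show (3:ℤ) - 1 = 2 by norm_num, show (3:ℤ) + 1 = 4 by norm_num]
    simp only [Nat.reduceAdd, p2, p3, p4, q3]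
    ring
  · rw [wA_rec 4 4, show (4:ℤ) - 1 = 3 by norm_num, show (4:ℤ) + 1 = 5 by norm_num]
    simp only [Nat.reduceAdd, p3, p4, p5, q4]
    ring

open Polynomial in
lemma wA_tab7 : wA 7 0 = 8 - 168 * X + 1512 * X ^ 2 - 6600 * X ^ 3 + 15400 * X ^ 4 - 19656 * X ^ 5 + 12936 * X ^ 6 - 3432 * X ^ 7 ∧
    wA 7 1 = 84 * X - 1008 * X ^ 2 + 4950 * X ^ 3 - 12320 * X ^ 4 + 16380 * X ^ 5 - 11088 * X ^ 6 + 3003 * X ^ 7 ∧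
    wA 7 2 = 252 * X ^ 2 - 1980 * X ^ 3 + 6160 * X ^ 4 - 9360 * X ^ 5 + 6930 * X ^ 6 - 2002 * X ^ 7 ∧
    wA 7 3 = 330 * X ^ 3 - 1760 * X ^ 4 + 3510 * X ^ 5 - 3080 * X ^ 6 + 1001 * X ^ 7 := by
  obtain ⟨p0, p1, p2, p3, p4⟩ := wA_tab6
  obtain ⟨q0, q1, q2, q3, q4, q5⟩ := wA_tab5
  refine ⟨?_, ?_, ?_, ?_⟩
  · rw [wA_rec 5 0, show (0:ℤ) - 1 = -1 by norm_num, wA_neg, show (0:ℤ) + 1 = 1 by norm_num]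
    simp only [Nat.reduceAdd, p0, p1, q0]
    ring
  · rw [wA_rec 5 1, show (1:ℤ) - 1 = 0 by norm_num, show (1:ℤ) + 1 = 2 by norm_num]
    simp only [Nat.reduceAdd, p0, p1, p2, q1]
    ring
  · rw [wA_rec 5 2, show (2:ℤ) - 1 = 1 by norm_num, show (2:ℤ) + 1 = 3 by norm_num]
    simp only [Nat.reduceAdd, p1, p2, p3, q2]
    ring
  · rw [wA_rec 5 3, show (3:ℤ) - 1 = 2 by norm_num, show (3:ℤ) + 1 = 4 by norm_num]
    simp only [Nat.reduceAdd, p2, p3, p4, q3]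
    ring

open Polynomial in
lemma wA_tab8 : wA 8 0 = 9 - 240 * X + 2772 * X ^ 2 - 15840 * X ^ 3 + 50050 * X ^ 4 - 91728 * X ^ 5 + 97020 * X ^ 6 - 54912 * X ^ 7 + 12870 * X ^ 8 ∧
    wA 8 1 = 120 * X - 1848 * X ^ 2 + 11880 * X ^ 3 - 40040 * X ^ 4 + 76440 * X ^ 5 - 83160 * X ^ 6 + 48048 * X ^ 7 - 11440 * X ^ 8 ∧
    wA 8 2 = 462 * X ^ 2 - 4752 * X ^ 3 + 20020 * X ^ 4 - 43680 * X ^ 5 + 51975 * X ^ 6 - 32032 * X ^ 7 + 8008 * X ^ 8 := by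
  obtain ⟨p0, p1, p2, p3⟩ := wA_tab7
  obtain ⟨q0, q1, q2, q3, q4⟩ := wA_tab6
  refine ⟨?_, ?_, ?_⟩
  · rw [wA_rec 6 0, show (0:ℤ) - 1 = -1 by norm_num, wA_neg, show (0:ℤ) + 1 = 1 by norm_num]
    simp only [Nat.reduceAdd, p0, p1, q0]
    ring
  · rw [wA_rec 6 1, show (1:ℤ) - 1 = 0 by norm_num, show (1:ℤ) + 1 = 2 by norm_num]
    simp only [Nat.reduceAdd, p0, p1, p2, q1]
    ring
  · rw [wA_rec 6 2, show (2:ℤ) - 1 = 1 by norm_num, show (2:ℤ) + 1 = 3 by norm_num]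
    simp only [Nat.reduceAdd, p1, p2, p3, q2]
    ring

open Polynomial in
lemma wA_tab9 : wA 9 1 = 165 * X - 3168 * X ^ 2 + 25740 * X ^ 3 - 112112 * X ^ 4 + 286650 * X ^ 5 - 443520 * X ^ 6 + 408408 * X ^ 7 - 205920 * X ^ 8 + 43758 * X ^ 9 := by
  obtain ⟨p0, p1, p2⟩ := wA_tab8
  obtain ⟨q0, q1, q2, q3⟩ := wA_tab7
  rw [wA_rec 7 1, show (1:ℤ) - 1 = 0 by norm_num, show (1:ℤ) + 1 = 2 by norm_num]
  simp only [Nat.reduceAdd, p0, p1, p2, q1]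
  ring


open Polynomial in
/-- A system of weights of length `n`: the polynomials `S k` in `x = exp (-t)` solve the
de Branges system `x S_k' = k Λ_k`, `S_k = S_{k+1} + Λ_k + Λ_{k+1}`, with `Λ_k ≥ 0` on `[0, 1]`. -/
structure Wt (n : ℕ) (S Λ : ℕ → ℝ[X]) : Prop where
  der : ∀ k, 1 ≤ k → X * derivative (S k) = (k : ℝ[X]) * Λ k
  step : ∀ k, 1 ≤ k → S k = S (k + 1) + Λ k + Λ (k + 1)
  S_zero : ∀ k, n < k → S k = 0
  L_zero : ∀ k, n < k → Λ k = 0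
  nonneg : ∀ k, 1 ≤ k → ∀ x : ℝ, 0 ≤ x → x ≤ 1 → 0 ≤ (Λ k).eval x

lemma Wt.S_nonneg {n : ℕ} {S Λ : ℕ → Polynomial ℝ} (h : Wt n S Λ) {x : ℝ} (h0 : 0 ≤ x)
    (h1 : x ≤ 1) : ∀ k, 1 ≤ k → 0 ≤ (S k).eval x := by
  have key : ∀ j k, 1 ≤ k → n < k + j → 0 ≤ (S k).eval x := by
    intro j
    induction j with
    | zero => intro k hk hn; rw [h.S_zero k hn]; simp
    | succ j ih =>
      intro k hk hn
      rw [h.step k hk, Polynomial.eval_add, Polynomial.eval_add]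
      have := ih (k + 1) (by omega) (by omega)
      have := h.nonneg k hk x h0 h1
      have := h.nonneg (k + 1) (by omega) x h0 h1
      linarith
  exact fun k hk => key (n + 1) k hk (by omega)

open Polynomial in
/-- The weights belonging to the `N`-th Milin functional. -/
noncomputable def wS (N k : ℕ) : ℝ[X] :=
  ∑ j ∈ Finset.Ico k (N + 1), (wA N j + wA N (j + 1))

lemma wS_zero {N k : ℕ} (h : N < k) : wS N k = 0 := by
  rw [wS, Finset.Ico_eq_empty (by omega), Finset.sum_empty]

lemma wA_zero_of_lt {N k : ℕ} (h : N < k) : wA N k = 0 := by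
  apply wA_support
  rw [abs_of_nonneg (by positivity)]
  exact_mod_cast h

lemma wS_step (N k : ℕ) : wS N k = wS N (k + 1) + wA N k + wA N (k + 1) := by
  rcases Nat.lt_or_ge N k with h | h
  · have h2 : wA N ((k:ℤ) + 1) = 0 := by
      have := wA_zero_of_lt (show N < k + 1 by omega)
      simpa using this
    rw [wS_zero h, wS_zero (by omega), wA_zero_of_lt h, h2]; simp
  · rw [wS, Finset.sum_eq_sum_Ico_succ_bot (by omega), ← wS]; ring

open Polynomial in
lemma wS_der (N k : ℕ) : X * derivative (wS N k) = (k : ℝ[X]) * wA N k := by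
  rcases Nat.lt_or_ge N k with h | h
  · rw [wS_zero h, wA_zero_of_lt h]; simp
  · have : X * derivative (wS N k) = ∑ j ∈ Finset.Ico k (N + 1),
        ((j : ℝ[X]) * wA N j - ((j + 1 : ℕ) : ℝ[X]) * wA N ((j + 1 : ℕ) : ℤ)) := by
      rw [wS, derivative_sum, Finset.mul_sum]
      refine Finset.sum_congr rfl fun j _ => ?_
      rw [derivative_add, wA_deriv]
      push_cast; ring
    rw [this, Finset.sum_Ico_eq_sum_range]
    have h2 := Finset.sum_range_sub' (fun i => ((k + i : ℕ) : ℝ[X]) * wA N ((k + i : ℕ) : ℤ))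
      (N + 1 - k)
    rw [show k + (N + 1 - k) = N + 1 by omega, wA_zero_of_lt (Nat.lt_succ_self N)] at h2
    simpa [add_assoc] using h2

lemma wS_one (N k : ℕ) : (wS N k).eval 1 = ((N + 1 - k : ℕ) : ℝ) := by
  rw [wS, Polynomial.eval_finsetSum]
  rw [Finset.sum_congr rfl (g := fun _ => (1:ℝ))]
  · simp
  · intro j hj
    rw [Finset.mem_Ico] at hj
    rw [Polynomial.eval_add, wA_one, if_pos]
    constructor <;> omega

lemma wt_single (N : ℕ) : Wt N (wS N) (fun k => wA N k) where
  der k _ := wS_der N k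
  step k _ := by push_cast; exact wS_step N k
  S_zero k h := wS_zero h
  L_zero k h := wA_zero_of_lt h
  nonneg k _ x h0 h1 := wA_nonneg N k x h0 h1

/-- The coefficients, scaled by `5000`, of the combination of Milin functionals whose weights
still satisfy the positivity requirement although the first coefficient is negative. -/
def cI : ℕ → ℤ
  | 1 => -56
  | 2 => 29
  | 3 => 29
  | 4 => 22
  | 5 => 16
  | 6 => 11
  | 7 => 8
  | 8 => 6
  | 9 => 5
  | _ => 0

lemma cI_nonneg {N : ℕ} (h : 2 ≤ N) : 0 ≤ cI N := by
  unfold cI; split <;> omega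

open Polynomial in
/-- The first weight function of the combination is, after division by `x`, a polynomial of
degree `8` whose Bernstein coefficients of order `13` are nonnegative. -/
lemma special_one_nonneg (x : ℝ) (h0 : 0 ≤ x) (h1 : x ≤ 1) :
    0 ≤ ∑ N ∈ Finset.Icc 1 9, (cI N : ℝ) * (wA N 1).eval x := by
  obtain ⟨-, a1, -⟩ := wA_tab1
  obtain ⟨-, a2, -⟩ := wA_tab2
  obtain ⟨-, a3, -⟩ := wA_tab3
  obtain ⟨-, a4, -⟩ := wA_tab4
  obtain ⟨-, a5, -⟩ := wA_tab5
  obtain ⟨-, a6, -⟩ := wA_tab6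
  obtain ⟨-, a7, -⟩ := wA_tab7
  obtain ⟨-, a8, -⟩ := wA_tab8
  have a9 := wA_tab9
  have hy : 0 ≤ 1 - x := by linarith
  have key : ∑ N ∈ Finset.Icc 1 9, (cI N : ℝ) * (wA N 1).eval x = x * (
      4183 * (1 - x) ^ 13 + 7599 * x * (1 - x) ^ 12 + 36009 * x ^ 2 * (1 - x) ^ 11 +
      147471 * x ^ 3 * (1 - x) ^ 10 + 229160 * x ^ 4 * (1 - x) ^ 9 +
      175770 * x ^ 5 * (1 - x) ^ 8 + 164682 * x ^ 6 * (1 - x) ^ 7 +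
      206214 * x ^ 7 * (1 - x) ^ 6 + 128133 * x ^ 8 * (1 - x) ^ 5 +
      24985 * x ^ 9 * (1 - x) ^ 4 + 3177 * x ^ 10 * (1 - x) ^ 3 +
      3303 * x ^ 11 * (1 - x) ^ 2 + 2 * x ^ 13) := by
    rw [show Finset.Icc 1 9 = {1, 2, 3, 4, 5, 6, 7, 8, 9} from rfl]
    simp only [cI]
    simp
    rw [a1, a2, a3, a4, a5, a6, a7, a8, a9]
    simp
    ring
  rw [key]
  positivity

open Polynomial in
lemma wt_special : Wt 9 (fun k => ∑ N ∈ Finset.Icc 1 9, C (cI N : ℝ) * wS N k)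
    (fun k => ∑ N ∈ Finset.Icc 1 9, C (cI N : ℝ) * wA N k) where
  der k hk := by
    rw [derivative_sum, Finset.mul_sum, Finset.mul_sum]
    refine Finset.sum_congr rfl fun N _ => ?_
    rw [derivative_C_mul]
    linear_combination (C (cI N : ℝ)) * wS_der N k
  step k hk := by
    rw [← Finset.sum_add_distrib, ← Finset.sum_add_distrib]
    refine Finset.sum_congr rfl fun N _ => ?_
    push_cast
    linear_combination (C (cI N : ℝ)) * wS_step N k
  S_zero k hk := by
    apply Finset.sum_eq_zero
    intro N hN
    rw [wS_zero (by rw [Finset.mem_Icc] at hN; omega), mul_zero]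
  L_zero k hk := by
    apply Finset.sum_eq_zero
    intro N hN
    rw [wA_zero_of_lt (by rw [Finset.mem_Icc] at hN; omega), mul_zero]
  nonneg k hk x h0 h1 := by
    rw [eval_finsetSum]
    simp only [eval_mul, eval_C]
    rcases hk.eq_or_lt with h | h
    · subst h; exact_mod_cast special_one_nonneg x h0 h1
    · apply Finset.sum_nonneg
      intro N hN
      rw [Finset.mem_Icc] at hN
      rcases hN.1.eq_or_lt with h' | h'
      · subst h'
        rw [wA_zero_of_lt h]; simp
      · exact mul_nonneg (by exact_mod_cast cI_nonneg h') (wA_nonneg N k x h0 h1)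

/-! ### Taylor coefficients and growth estimates -/

lemma poly_taylor (p : Polynomial ℝ) : ∃ C : ℝ, 0 ≤ C ∧ ∀ x : ℝ, 0 ≤ x → x ≤ 1 → ∀ h : ℝ, 0 ≤ h →
    |p.eval (x * Real.exp (-h)) - p.eval x + h * (x * p.derivative.eval x)| ≤ C * h ^ 2 := by
  induction p using Polynomial.induction_on' with
  | add p q hp hq =>
    obtain ⟨C, hC, h1⟩ := hp
    obtain ⟨D, hD, h2⟩ := hq
    refine ⟨C + D, by positivity, fun x h0 hx h hh => ?_⟩
    have e1 := h1 x h0 hx h hh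
    have e2 := h2 x h0 hx h hh
    simp only [Polynomial.eval_add, Polynomial.derivative_add]
    rw [abs_le] at *
    constructor <;> linarith [e1.1, e1.2, e2.1, e2.2]
  | monomial m a =>
    refine ⟨|a| * (m:ℝ) ^ 2, by positivity, fun x h0 hx h hh => ?_⟩
    have key : ∀ y : ℝ, 0 ≤ y → |Real.exp (-y) - 1 + y| ≤ y ^ 2 := by
      intro y hy
      have h1 : 0 ≤ Real.exp (-y) - 1 + y := by linarith [Real.add_one_le_exp (-y)]
      rw [abs_of_nonneg h1]
      rcases le_total y 1 with hy1 | hy1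
      · have := Real.abs_exp_sub_one_sub_id_le (x := -y) (by rw [abs_neg, abs_of_nonneg hy]; exact hy1)
        have := (abs_le.mp this).2
        nlinarith
      · have : Real.exp (-y) ≤ 1 := Real.exp_le_one_iff.mpr (by linarith)
        nlinarith
    have e : (Polynomial.monomial m a).eval (x * Real.exp (-h)) - (Polynomial.monomial m a).eval x +
        h * (x * (Polynomial.monomial m a).derivative.eval x)
        = a * x ^ m * (Real.exp (-(m * h)) - 1 + m * h) := by
      rw [Polynomial.derivative_monomial]
      simp only [Polynomial.eval_monomial, mul_pow]
      rw [← Real.exp_nat_mul, show (m:ℝ) * -h = -(m * h) by ring]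
      rcases Nat.eq_zero_or_pos m with rfl | hm
      · simp
      · have : x ^ m = x * x ^ (m - 1) := by
          rw [← pow_succ']; congr 1; omega
        rw [this]; ring
    rw [e, abs_mul, abs_mul, abs_of_nonneg (pow_nonneg h0 m)]
    have h2 := key (m * h) (by positivity)
    have h3 : x ^ m ≤ 1 := pow_le_one₀ h0 hx
    calc |a| * x ^ m * |Real.exp (-(m * h)) - 1 + m * h| ≤ |a| * 1 * (m * h) ^ 2 := by gcongr
      _ = _ := by ring

lemma contDiffAt_disc {f : ℂ → ℂ} (hf : DifferentiableOn ℂ f (ball 0 1)) {n : WithTop ℕ∞} :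
    ContDiffAt ℂ n f 0 :=
  (hf.analyticAt (isOpen_ball.mem_nhds zero_mem_disc)).contDiffAt

lemma tc_add {f g : ℂ → ℂ} (hf : DifferentiableOn ℂ f (ball 0 1))
    (hg : DifferentiableOn ℂ g (ball 0 1)) (k : ℕ) : tc (fun z => f z + g z) k = tc f k + tc g k := by
  rw [tc, iteratedDeriv_fun_add (contDiffAt_disc hf) (contDiffAt_disc hg), add_div]; rfl

lemma tc_sub {f g : ℂ → ℂ} (hf : DifferentiableOn ℂ f (ball 0 1))
    (hg : DifferentiableOn ℂ g (ball 0 1)) (k : ℕ) : tc (fun z => f z - g z) k = tc f k - tc g k := by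
  rw [tc, iteratedDeriv_fun_sub (contDiffAt_disc hf) (contDiffAt_disc hg), sub_div]; rfl

lemma tc_const_mul (c : ℂ) (f : ℂ → ℂ) (k : ℕ) : tc (fun z => c * f z) k = c * tc f k := by
  rw [tc, iteratedDeriv_const_mul_field, mul_div_assoc]; rfl

lemma tc_const (c : ℂ) {k : ℕ} (hk : k ≠ 0) : tc (fun _ => c) k = 0 := by
  rw [tc, iteratedDeriv_const]; simp [hk]

lemma tc_mul {f g : ℂ → ℂ} (hf : DifferentiableOn ℂ f (ball 0 1))
    (hg : DifferentiableOn ℂ g (ball 0 1)) (k : ℕ) :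
    tc (fun z => f z * g z) k = ∑ j ∈ Finset.range (k + 1), tc f j * tc g (k - j) := by
  rw [tc, iteratedDeriv_fun_mul (contDiffAt_disc hf) (contDiffAt_disc hg), Finset.sum_div]
  refine Finset.sum_congr rfl fun j hj => ?_
  have hjk : j ≤ k := by rw [Finset.mem_range] at hj; omega
  have h1 : ((k.choose j : ℕ) : ℂ) = k.factorial / (j.factorial * (k - j).factorial) := by
    rw [Nat.choose_eq_factorial_div_factorial hjk, Nat.cast_div (Nat.factorial_mul_factorial_dvd_factorial hjk)]
    · push_cast; rfl
    · exact_mod_cast Nat.mul_ne_zero j.factorial_ne_zero (k - j).factorial_ne_zero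
  have h2 : ((k.factorial : ℕ) : ℂ) ≠ 0 := by exact_mod_cast k.factorial_ne_zero
  have h3 : ((j.factorial : ℕ) : ℂ) ≠ 0 := by exact_mod_cast j.factorial_ne_zero
  have h4 : (((k - j).factorial : ℕ) : ℂ) ≠ 0 := by exact_mod_cast (k - j).factorial_ne_zero
  rw [h1, tc, tc]
  field_simp

lemma tc_deriv (f : ℂ → ℂ) (k : ℕ) : tc (deriv f) k = (k + 1) * tc f (k + 1) := by
  rw [tc, tc, iteratedDeriv_succ', Nat.factorial_succ]
  have h3 : ((k.factorial : ℕ) : ℂ) ≠ 0 := by exact_mod_cast k.factorial_ne_zero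
  have h2 : ((k:ℂ) + 1) ≠ 0 := by exact_mod_cast k.succ_ne_zero
  push_cast
  field_simp

lemma tc_id_one : tc (fun z => z) 1 = 1 := by
  rw [tc, iteratedDeriv_one]; simp

lemma tc_id_other {k : ℕ} (hk : k ≠ 1) : tc (fun z => z) k = 0 := by
  rcases k with _ | _ | k
  · simp [tc]
  · exact absurd rfl hk
  · rw [tc, iteratedDeriv_succ', iteratedDeriv_succ']
    have h1 : deriv (fun z : ℂ => z) = fun _ => 1 := by ext z; simp
    have h2 : deriv (deriv (fun z : ℂ => z)) = fun _ => 0 := by rw [h1]; ext z; simp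
    rw [h2, iteratedDeriv_const]; simp

lemma tc_X_mul {f : ℂ → ℂ} (hf : DifferentiableOn ℂ f (ball 0 1)) (k : ℕ) : tc (fun z => z * f z) (k + 1) = tc f k := by
  rw [tc_mul (by fun_prop) hf, Finset.sum_eq_single 1]
  · rw [tc_id_one]; simp
  · intro j _ hj; rw [tc_id_other hj, zero_mul]
  · intro h; simp at h

lemma tc_norm_le {f : ℂ → ℂ} (hf : DifferentiableOn ℂ f (ball 0 1)) {C r : ℝ} (hr : 0 < r) (hr1 : r < 1) (hC : ∀ z : ℂ, ‖z‖ = r → ‖f z‖ ≤ C) (k : ℕ) :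
    ‖tc f k‖ ≤ C / r ^ k := by
  have := norm_iteratedDeriv_le_of_forall_mem_sphere_norm_le k hr (diffContOnCl_disc hf hr1)
    (C := C) (fun z hz => hC z (by simpa using hz))
  rw [tc, norm_div, Complex.norm_natCast, div_le_iff₀ (by exact_mod_cast k.factorial_pos)]
  refine this.trans_eq ?_
  ring

lemma deriv_differentiableOn {f : ℂ → ℂ} (hf : DifferentiableOn ℂ f (ball 0 1)) :
    DifferentiableOn ℂ (deriv f) (ball 0 1) := hf.deriv isOpen_ball

/-- The coefficients of `(1 + z G') P`. -/
lemma tc_dbD {G P : ℂ → ℂ} (hG : DifferentiableOn ℂ G (ball 0 1))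
    (hP : DifferentiableOn ℂ P (ball 0 1)) (k : ℕ) :
    tc (fun z => (1 + z * deriv G z) * P z) k = dbD (tc G) (tc P) k := by
  have hd := deriv_differentiableOn hG
  have hd' : DifferentiableOn ℂ (fun z => z * deriv G z) (ball 0 1) := by fun_prop
  rw [tc_mul (by fun_prop) hP, dbD]
  refine Finset.sum_congr rfl fun j _ => ?_
  congr 1
  rw [tc_add (by fun_prop) hd']
  rcases j with _ | j
  · simp [tc_zero]
  · rw [tc_const _ (Nat.succ_ne_zero j), tc_X_mul hd, tc_deriv]; simp

/-- The Borel–Carathéodory bound. -/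
lemma norm_le_of_re_le {G : ℂ → ℂ} {T : ℝ} (hT : 0 < T) (hG : DifferentiableOn ℂ G (ball 0 1))
    (hG0 : G 0 = 0) (hGT : ∀ z ∈ ball (0:ℂ) 1, (G z).re ≤ T) {z : ℂ} {r : ℝ} (hr1 : r < 1)
    (hz : ‖z‖ ≤ r) : ‖G z‖ ≤ 2 * T * r / (1 - r) := by
  have := borelCaratheodory_zero hT hG hGT one_pos (z := z)
    (by simp only [mem_ball_zero_iff]; linarith) hG0
  refine this.trans ?_
  have : 0 ≤ r := (norm_nonneg z).trans hz
  gcongr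

lemma deriv_le_of_bound {f : ℂ → ℂ} (hf : DifferentiableOn ℂ f (ball 0 1)) {r s M : ℝ}
    (hrs : r < s) (hs : s < 1) (hM : ∀ z : ℂ, ‖z‖ ≤ s → ‖f z‖ ≤ M) {z : ℂ} (hz : ‖z‖ ≤ r) :
    ‖deriv f z‖ ≤ M / (s - r) := by
  apply norm_deriv_le_of_forall_mem_sphere_norm_le (sub_pos.mpr hrs)
  · apply DifferentiableOn.diffContOnCl
    apply hf.mono
    refine closure_ball_subset_closedBall.trans fun w hw => ?_
    rw [mem_closedBall, dist_eq_norm] at hw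
    rw [mem_ball_zero_iff]
    have := norm_le_norm_add_norm_sub' w z
    linarith
  · intro w hw
    rw [mem_sphere, dist_eq_norm] at hw
    apply hM
    have := norm_le_norm_add_norm_sub' w z
    linarith

lemma second_order {f : ℂ → ℂ} (hf : DifferentiableOn ℂ f (ball 0 1)) {r M : ℝ} (hr : r < 1)
    (hM : ∀ z : ℂ, ‖z‖ ≤ r → ‖deriv (deriv f) z‖ ≤ M) {z w : ℂ} (hz : ‖z‖ ≤ r) (hw : ‖w‖ ≤ r) :
    ‖f w - f z - deriv f z * (w - z)‖ ≤ M * ‖w - z‖ ^ 2 := by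
  have hsub : ∀ ζ ∈ segment ℝ z w, ‖ζ‖ ≤ r := by
    intro ζ hζ
    have := (convex_closedBall (0:ℂ) r).segment_subset (x := z) (y := w) (by simpa using hz)
      (by simpa using hw) hζ
    simpa using this
  have hin : ∀ ζ : ℂ, ‖ζ‖ ≤ r → ζ ∈ ball (0:ℂ) 1 := fun ζ h => by
    rw [mem_ball_zero_iff]; linarith
  have hda : ∀ ζ : ℂ, ‖ζ‖ ≤ r → DifferentiableAt ℂ f ζ := fun ζ h =>
    hf.differentiableAt (isOpen_ball.mem_nhds (hin ζ h))
  have hdda : ∀ ζ : ℂ, ‖ζ‖ ≤ r → DifferentiableAt ℂ (deriv f) ζ := fun ζ h =>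
    (deriv_differentiableOn hf).differentiableAt (isOpen_ball.mem_nhds (hin ζ h))
  have h1 : ∀ ζ ∈ segment ℝ z w, ‖deriv f ζ - deriv f z‖ ≤ M * ‖w - z‖ := by
    intro ζ hζ
    have hM0 : 0 ≤ M := (norm_nonneg _).trans (hM z hz)
    have := (convex_segment z w).norm_image_sub_le_of_norm_deriv_le (f := deriv f)
      (fun x hx => hdda x (hsub x hx)) (fun x hx => hM x (hsub x hx)) (left_mem_segment ℝ z w) hζ
    refine this.trans ?_
    have : ‖ζ - z‖ ≤ ‖w - z‖ := by
      obtain ⟨a, b, ha, hb, hab, rfl⟩ := hζ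
      have e : a • z + b • w - z = b • (w - z) := by
        have : a = 1 - b := by linarith
        subst this
        simp only [sub_smul, one_smul, smul_sub]; ring
      rw [e, norm_smul, Real.norm_of_nonneg hb]
      have := norm_nonneg (w - z)
      nlinarith
    gcongr
  have h2 := (convex_segment z w).norm_image_sub_le_of_norm_hasDerivWithin_le
    (f := fun ζ => f ζ - deriv f z * ζ) (f' := fun ζ => deriv f ζ - deriv f z)
    (C := M * ‖w - z‖) (fun x hx => by
      have h3 := (hda x (hsub x hx)).hasDerivAt.sub ((hasDerivAt_id x).const_mul (deriv f z))
      simp only [mul_one] at h3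
      exact h3.hasDerivWithinAt) h1 (left_mem_segment ℝ z w) (right_mem_segment ℝ z w)
  have e : f w - f z - deriv f z * (w - z) = f w - deriv f z * w - (f z - deriv f z * z) := by ring
  rw [e, pow_two, ← mul_assoc]
  exact h2

/-! ### One step of a subordination chain -/

/-- The data of one step of length `h` along a chain of subordinations: `G` and `F` are the
logarithms `log (g z / z)` and `log (f z / z)` of functions linked by
`f = e ^ h * g ∘ (z * exp (-h * P))`, with `P` a Carathéodory function. -/
structure LStep (T h : ℝ) (G P F : ℂ → ℂ) : Prop where
  T_pos : 0 < T
  h_nonneg : 0 ≤ h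
  h_le : h ≤ 1 / 3
  G_diff : DifferentiableOn ℂ G (ball 0 1)
  P_diff : DifferentiableOn ℂ P (ball 0 1)
  F_diff : DifferentiableOn ℂ F (ball 0 1)
  G_zero : G 0 = 0
  G_re : ∀ z ∈ ball (0:ℂ) 1, (G z).re ≤ T
  P_zero : P 0 = 1
  P_re : ∀ z ∈ ball (0:ℂ) 1, 0 ≤ (P z).re
  eq : ∀ z ∈ ball (0:ℂ) 1, F z = G (z * Complex.exp (-(h * P z))) - h * P z + h

lemma mem_disc_of_le {z : ℂ} {r : ℝ} (hr : r < 1) (hz : ‖z‖ ≤ r) : z ∈ ball (0:ℂ) 1 := by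
  rw [mem_ball_zero_iff]; linarith

namespace LStep

variable {T h : ℝ} {G P F : ℂ → ℂ}

lemma P_bound (s : LStep T h G P F) {z : ℂ} (hz : ‖z‖ ≤ 1 / 2) : ‖P z‖ ≤ 3 := by
  have hP := s.P_diff
  have := norm_le_of_re_le (G := fun z => 1 - P z) one_pos (by fun_prop) (by simp [s.P_zero])
    (fun z hz => by simpa using s.P_re z hz) (by norm_num) hz
  have h2 : ‖P z‖ ≤ ‖(1:ℂ)‖ + ‖1 - P z‖ := by
    calc ‖P z‖ = ‖1 - (1 - P z)‖ := by congr 1; ring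
      _ ≤ _ := norm_sub_le _ _
  rw [norm_one] at h2
  norm_num at this
  linarith

lemma G_bound (s : LStep T h G P F) {z : ℂ} (hz : ‖z‖ ≤ 3 / 4) : ‖G z‖ ≤ 6 * T := by
  have := norm_le_of_re_le s.T_pos s.G_diff s.G_zero s.G_re (by norm_num) hz
  norm_num at this
  linarith

lemma G'_bound (s : LStep T h G P F) {z : ℂ} (hz : ‖z‖ ≤ 5 / 8) : ‖deriv G z‖ ≤ 48 * T := by
  have := deriv_le_of_bound s.G_diff (r := 5 / 8) (s := 3 / 4) (by norm_num) (by norm_num)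
    (fun z hz => s.G_bound hz) hz
  norm_num at this
  linarith

lemma G''_bound (s : LStep T h G P F) {z : ℂ} (hz : ‖z‖ ≤ 1 / 2) :
    ‖deriv (deriv G) z‖ ≤ 384 * T := by
  have := deriv_le_of_bound (deriv_differentiableOn s.G_diff) (r := 1 / 2) (s := 5 / 8)
    (by norm_num) (by norm_num) (fun z hz => s.G'_bound hz) hz
  norm_num at this
  linarith

lemma rem_bound (s : LStep T h G P F) {z : ℂ} (hz : ‖z‖ ≤ 1 / 2) :
    ‖F z - G z + h * ((1 + z * deriv G z) * P z - 1)‖ ≤ 3800 * T * h ^ 2 := by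
  have hz1 := mem_disc_of_le (by norm_num) hz
  have hT := s.T_pos
  have hh := s.h_nonneg
  have hh' := s.h_le
  obtain ⟨u, hu⟩ : ∃ u : ℂ, u = -(h * P z) := ⟨_, rfl⟩
  obtain ⟨w, hw⟩ : ∃ w : ℂ, w = z * Complex.exp u := ⟨_, rfl⟩
  have hun : ‖u‖ ≤ 3 * h := by
    rw [hu, norm_neg, norm_mul, Complex.norm_of_nonneg hh]
    nlinarith [s.P_bound hz]
  have hu1 : ‖u‖ ≤ 1 := by linarith
  have hwn : ‖w‖ ≤ 1 / 2 := by
    rw [hw, norm_mul, Complex.norm_exp]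
    have : Real.exp u.re ≤ 1 := by
      rw [Real.exp_le_one_iff, hu]
      simp only [neg_re, re_ofReal_mul]
      nlinarith [s.P_re z hz1]
    nlinarith [norm_nonneg z, Real.exp_pos u.re]
  have hwz : ‖w - z‖ ≤ 3 * h := by
    have e : w - z = z * (Complex.exp u - 1) := by rw [hw]; ring
    rw [e, norm_mul]
    have := Complex.norm_exp_sub_one_le hu1
    nlinarith [norm_nonneg z, norm_nonneg (Complex.exp u - 1), norm_nonneg u]
  have hwzu : ‖w - z - z * u‖ ≤ 5 * h ^ 2 := by
    have e : w - z - z * u = z * (Complex.exp u - 1 - u) := by rw [hw]; ring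
    rw [e, norm_mul]
    have := Complex.norm_exp_sub_one_sub_id_le hu1
    have h3 : ‖u‖ ^ 2 ≤ (3 * h) ^ 2 := by gcongr
    nlinarith [norm_nonneg z, norm_nonneg (Complex.exp u - 1 - u), norm_nonneg u]
  have e : F z - G z + h * ((1 + z * deriv G z) * P z - 1) =
      (G w - G z - deriv G z * (w - z)) + deriv G z * (w - z - z * u) := by
    rw [s.eq z hz1, ← hu, ← hw]
    have : (h:ℂ) * P z = -u := by rw [hu]; ring
    linear_combination (z * deriv G z) * this
  rw [e]
  have h1 := second_order s.G_diff (by norm_num) (fun z hz => s.G''_bound hz) hz hwn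
  have h2 := s.G'_bound (z := z) (by linarith)
  calc _ ≤ ‖G w - G z - deriv G z * (w - z)‖ + ‖deriv G z‖ * ‖w - z - z * u‖ :=
        (norm_add_le _ _).trans (by rw [norm_mul])
    _ ≤ 384 * T * (3 * h) ^ 2 + 48 * T * (5 * h ^ 2) := by
        gcongr
        exact h1.trans (by gcongr)
    _ ≤ 3800 * T * h ^ 2 := by nlinarith [mul_nonneg hT.le (sq_nonneg h)]

lemma tc_eq (s : LStep T h G P F) {k : ℕ} (hk : k ≠ 0) :
    ‖tc F k - tc G k + h * dbD (tc G) (tc P) k‖ ≤ 3800 * T * h ^ 2 * 2 ^ k := by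
  have hF := s.F_diff
  have hG := s.G_diff
  have hP := s.P_diff
  have hd := deriv_differentiableOn hG
  have hM : DifferentiableOn ℂ (fun z => (1 + z * deriv G z) * P z) (ball 0 1) := by fun_prop
  have hR : DifferentiableOn ℂ
      (fun z => F z - G z + h * ((1 + z * deriv G z) * P z - 1)) (ball 0 1) := by fun_prop
  have e : tc (fun z => F z - G z + h * ((1 + z * deriv G z) * P z - 1)) k =
      tc F k - tc G k + h * dbD (tc G) (tc P) k := by
    rw [tc_add (f := fun z => F z - G z) (g := fun z => h * ((1 + z * deriv G z) * P z - 1))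
      (by fun_prop) (by fun_prop), tc_sub hF hG, tc_const_mul,
      tc_sub (f := fun z => (1 + z * deriv G z) * P z) (g := fun _ => 1) hM (by fun_prop),
      tc_const _ hk, tc_dbD hG hP, sub_zero]
  rw [← e]
  refine (tc_norm_le hR (r := 1 / 2) (by norm_num) (by norm_num)
    (fun z hz => s.rem_bound hz.le) k).trans_eq ?_
  rw [one_div, inv_pow, div_inv_eq_mul]

lemma tc_G_bound (s : LStep T h G P F) (k : ℕ) : ‖tc G k‖ ≤ 6 * T * 2 ^ k := by
  refine (tc_norm_le s.G_diff (r := 1 / 2) (by norm_num) (by norm_num)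
    (fun z hz => s.G_bound (by linarith)) k).trans_eq ?_
  rw [one_div, inv_pow, div_inv_eq_mul]

lemma dbD_bound (s : LStep T h G P F) (k : ℕ) :
    ‖dbD (tc G) (tc P) k‖ ≤ (3 + 72 * T) * 2 ^ k := by
  have hG := s.G_diff
  have hP := s.P_diff
  have hd := deriv_differentiableOn hG
  rw [← tc_dbD hG hP]
  refine (tc_norm_le (C := 3 + 72 * T) (r := 1 / 2) (by fun_prop) (by norm_num) (by norm_num)
    (fun z hz => ?_) k).trans_eq ?_
  · rw [norm_mul]
    have h1 := s.G'_bound (z := z) (by linarith)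
    have h2 := s.P_bound hz.le
    have h3 : ‖1 + z * deriv G z‖ ≤ 1 + 24 * T := by
      refine (norm_add_le _ _).trans ?_
      rw [norm_one, norm_mul, hz]; linarith
    have := s.T_pos
    calc _ ≤ (1 + 24 * T) * 3 := by gcongr
      _ = _ := by ring
  · rw [one_div, inv_pow, div_inv_eq_mul]

end LStep

/-- The weighted Milin functional `∑ (k ‖c_k‖² - 4 / k) S_k(x)`, `1 ≤ k ≤ n`. -/
noncomputable def Phi (n : ℕ) (S : ℕ → Polynomial ℝ) (x : ℝ) (c : ℕ → ℂ) : ℝ :=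
  ∑ k ∈ Finset.range n,
    (((k:ℝ) + 1) * ‖c (k + 1)‖ ^ 2 - 4 / ((k:ℝ) + 1)) * (S (k + 1)).eval x

/-- Term-by-term comparison of `‖c - h d + ρ‖²` with its first-order expansion. -/
lemma sq_expand_le {c d e : ℂ} {h A B R : ℝ} (hh : 0 ≤ h) (hh1 : h ≤ 1) (hc : ‖c‖ ≤ A)
    (hd : ‖d‖ ≤ B) (hR : ‖e - c + h * d‖ ≤ R * h ^ 2) :
    ‖e‖ ^ 2 ≤ ‖c‖ ^ 2 - 2 * h * ((starRingEnd ℂ) c * d).re + (B ^ 2 + 2 * (A + B) * R + R ^ 2) * h ^ 2 := by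
  have hR0 : 0 ≤ R * h ^ 2 := (norm_nonneg _).trans hR
  have h1 : ‖c - h * d‖ ^ 2 = ‖c‖ ^ 2 - 2 * h * ((starRingEnd ℂ) c * d).re + h ^ 2 * ‖d‖ ^ 2 := by
    rw [← Complex.normSq_eq_norm_sq, ← Complex.normSq_eq_norm_sq, ← Complex.normSq_eq_norm_sq]
    simp only [Complex.normSq_apply, sub_re, sub_im, mul_re, mul_im, ofReal_re, ofReal_im, conj_re,
      conj_im]
    ring
  have h2 : ‖e‖ ≤ ‖c - h * d‖ + R * h ^ 2 := by
    calc ‖e‖ = ‖(c - h * d) + (e - c + h * d)‖ := by congr 1; ring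
      _ ≤ _ := (norm_add_le _ _).trans (by gcongr)
  have h3 : ‖c - h * d‖ ≤ A + B := by
    refine (norm_sub_le _ _).trans ?_
    rw [norm_mul, Complex.norm_of_nonneg hh]
    nlinarith [norm_nonneg d]
  have hA : 0 ≤ ‖c - h * d‖ := norm_nonneg _
  have h4 : ‖e‖ ^ 2 ≤ (‖c - h * d‖ + R * h ^ 2) ^ 2 := by gcongr
  have h5 : ‖d‖ ^ 2 ≤ B ^ 2 := by gcongr
  have h6 : ‖c - h * d‖ * (R * h ^ 2) ≤ (A + B) * (R * h ^ 2) := by gcongr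
  have h7 : (R * h ^ 2) ^ 2 ≤ R ^ 2 * h ^ 2 := by
    have : h ^ 2 ≤ 1 := by nlinarith
    nlinarith [mul_nonneg (sq_nonneg R) (sq_nonneg h)]
  nlinarith [sq_nonneg h, mul_le_mul_of_nonneg_left h5 (sq_nonneg h)]

lemma poly_bound (p : Polynomial ℝ) : ∃ C : ℝ, 0 ≤ C ∧ ∀ x : ℝ, 0 ≤ x → x ≤ 1 → p.eval x ≤ C := by
  obtain ⟨C, hC⟩ := (isCompact_Icc (a := (0:ℝ)) (b := 1)).exists_bound_of_continuousOn
    p.continuous.continuousOn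
  refine ⟨|C|, abs_nonneg _, fun x h0 h1 => ?_⟩
  exact (le_abs_self _).trans ((hC x ⟨h0, h1⟩).trans (le_abs_self C))

/-- Along one step of length `h` the weighted Milin functional increases by at most `O(h²)`, with a
constant depending only on the weights and on `T`: the first-order term is minus `h` times `dbL`. -/
theorem Phi_step {n : ℕ} {S Λ : ℕ → Polynomial ℝ} (W : Wt n S Λ) {T : ℝ} (hT : 0 < T) :
    ∃ C : ℝ, 0 ≤ C ∧ ∀ (h : ℝ) (G P F : ℂ → ℂ), LStep T h G P F → ∀ x : ℝ, 0 ≤ x → x ≤ 1 →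
      Phi n S x (tc F) ≤ Phi n S (x * Real.exp (-h)) (tc G) + C * h ^ 2 := by
  choose C1 hC1 hC1' using fun k => poly_taylor (S k)
  choose C2 hC2 hC2' using fun k => poly_bound (S k)
  obtain ⟨A, hA⟩ : ∃ A : ℕ → ℝ, A = fun k => 6 * T * 2 ^ k := ⟨_, rfl⟩
  obtain ⟨B, hB⟩ : ∃ B : ℕ → ℝ, B = fun k => (3 + 72 * T) * 2 ^ k := ⟨_, rfl⟩
  obtain ⟨R, hR⟩ : ∃ R : ℕ → ℝ, R = fun k => 3800 * T * 2 ^ k := ⟨_, rfl⟩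
  have hA0 : ∀ k, 0 ≤ A k := fun k => by rw [hA]; positivity
  have hB0 : ∀ k, 0 ≤ B k := fun k => by rw [hB]; positivity
  have hR0 : ∀ k, 0 ≤ R k := fun k => by rw [hR]; positivity
  obtain ⟨Q, hQ⟩ : ∃ Q : ℕ → ℝ, Q = fun k => B k ^ 2 + 2 * (A k + B k) * R k + R k ^ 2 := ⟨_, rfl⟩
  have hQ0 : ∀ k, 0 ≤ Q k := fun k => by
    have := hA0 k; have := hB0 k; have := hR0 k
    rw [hQ]; positivity
  refine ⟨∑ k ∈ Finset.range n, (((k:ℝ) + 1) * Q (k + 1) * C2 (k + 1) +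
    (((k:ℝ) + 1) * A (k + 1) ^ 2 + 4 / ((k:ℝ) + 1)) * C1 (k + 1)), ?_, ?_⟩
  · refine Finset.sum_nonneg fun k _ => ?_
    have := hQ0 (k + 1); have := hC2 (k + 1); have := hC1 (k + 1)
    positivity
  intro h G P F s x hx0 hx1
  have hpos := dbL_nonneg (fun k => (S k).eval x) (fun k => (Λ k).eval x) n
    (fun k hk => by rw [W.step k hk]; simp) (by rw [W.S_zero _ (by omega)]; simp)
    (by rw [W.L_zero _ (by omega)]; simp) (fun k hk => W.nonneg k hk x hx0 hx1) (tc G)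
    s.P_diff s.P_zero s.P_re
  have hh := s.h_nonneg
  have hpos' := mul_nonneg hh hpos
  rw [dbL, Finset.mul_sum] at hpos'
  suffices hs : Phi n S x (tc F) + _ ≤ Phi n S (x * Real.exp (-h)) (tc G) + _ from
    (le_add_of_nonneg_right hpos').trans hs
  rw [Phi, Phi, Finset.sum_mul, ← Finset.sum_add_distrib, ← Finset.sum_add_distrib]
  refine Finset.sum_le_sum fun k _ => ?_
  have hS := W.S_nonneg hx0 hx1 (k + 1) (by omega)
  have hS' := hC2' (k + 1) x hx0 hx1
  have ht := hC1' (k + 1) x hx0 hx1 h hh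
  have hder : x * ((S (k + 1)).derivative.eval x) = ((k:ℝ) + 1) * (Λ (k + 1)).eval x := by
    have := congrArg (Polynomial.eval x) (W.der (k + 1) (by omega))
    simpa using this
  rw [hder] at ht
  have hsq := sq_expand_le (c := tc G (k + 1)) (d := dbD (tc G) (tc P) (k + 1)) (e := tc F (k + 1))
    hh (by linarith [s.h_le]) (A := A (k + 1)) (B := B (k + 1)) (R := R (k + 1))
    (by rw [hA]; exact s.tc_G_bound _) (by rw [hB]; exact s.dbD_bound _)
    (by rw [hR]; refine (s.tc_eq (Nat.succ_ne_zero k)).trans_eq ?_; rw [Nat.succ_eq_add_one]; ring)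
  have hQk : B (k + 1) ^ 2 + 2 * (A (k + 1) + B (k + 1)) * R (k + 1) + R (k + 1) ^ 2 = Q (k + 1) := by
    rw [hQ]
  rw [hQk] at hsq
  have hcA : ‖tc G (k + 1)‖ ^ 2 ≤ A (k + 1) ^ 2 := by
    have := s.tc_G_bound (k + 1)
    have hA' : A (k + 1) = 6 * T * 2 ^ (k + 1) := by rw [hA]
    rw [hA']; gcongr
  have hq := hQ0 (k + 1)
  have hc2 : 0 ≤ ‖tc G (k + 1)‖ ^ 2 := sq_nonneg _
  generalize (S (k + 1)).eval x = σ at *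
  generalize (S (k + 1)).eval (x * Real.exp (-h)) = σ' at *
  generalize (Λ (k + 1)).eval x = l at *
  generalize ‖tc G (k + 1)‖ ^ 2 = c2 at *
  generalize ((starRingEnd ℂ) (tc G (k + 1)) * dbD (tc G) (tc P) (k + 1)).re = rr at *
  generalize ‖tc F (k + 1)‖ ^ 2 = f2 at *
  generalize A (k + 1) ^ 2 = a2 at *
  generalize Q (k + 1) = q at *
  generalize C1 (k + 1) = c1 at *
  generalize C2 (k + 1) = cc at *
  have hm : (0:ℝ) < (k:ℝ) + 1 := by positivity
  have hv : 0 ≤ 4 / ((k:ℝ) + 1) := by positivity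
  generalize 4 / ((k:ℝ) + 1) = v at *
  generalize (k:ℝ) + 1 = m at *
  have i1 : m * σ * f2 ≤ m * σ * (c2 - 2 * h * rr + q * h ^ 2) :=
    mul_le_mul_of_nonneg_left hsq (mul_nonneg hm.le hS)
  have i2 : m * q * h ^ 2 * σ ≤ m * q * h ^ 2 * cc :=
    mul_le_mul_of_nonneg_left hS' (mul_nonneg (mul_nonneg hm.le hq) (sq_nonneg h))
  have i3 : |m * c2 - v| ≤ m * a2 + v := by
    rw [abs_le]
    constructor <;> nlinarith [mul_le_mul_of_nonneg_left hcA hm.le, mul_nonneg hm.le hc2]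
  have i4 : |(m * c2 - v) * (σ' - σ + h * (m * l))| ≤ (m * a2 + v) * (c1 * h ^ 2) := by
    rw [abs_mul]
    exact mul_le_mul i3 ht (abs_nonneg _) ((abs_nonneg _).trans i3)
  have i5 := (abs_le.1 i4).1
  nlinarith [i1, i2, i5]

/-! ### Milin-type inequalities for the class 𝒮 -/

lemma tc_comp_mul (f : ℂ → ℂ) (c : ℂ) (k : ℕ) : tc (fun z => f (c * z)) k = c ^ k * tc f k := by
  have key : ∀ n, iteratedDeriv n (fun z => f (c * z)) = fun z => c ^ n * iteratedDeriv n f (c * z) := by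
    intro n
    induction n with
    | zero => ext z; simp
    | succ n ih =>
      ext z
      rw [iteratedDeriv_succ, ih, deriv_const_mul_field, deriv_comp_mul_left, iteratedDeriv_succ,
        smul_eq_mul, pow_succ, mul_assoc]
  simp only [tc, key, mul_zero, mul_div_assoc]

lemma tc_congr {f g : ℂ → ℂ} (h : Set.EqOn f g (ball 0 1)) (k : ℕ) : tc f k = tc g k := by
  rw [tc, tc, (h.eventuallyEq_of_mem (isOpen_ball.mem_nhds zero_mem_disc)).iteratedDeriv_eq]

/-- A nonvanishing holomorphic function on the disk has a holomorphic logarithm. -/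
lemma exists_log {q : ℂ → ℂ} (hq : DifferentiableOn ℂ q (ball 0 1)) (hne : ∀ z ∈ ball (0:ℂ) 1, q z ≠ 0) :
    ∃ G : ℂ → ℂ, DifferentiableOn ℂ G (ball 0 1) ∧ G 0 = 0 ∧
      ∀ z ∈ ball (0:ℂ) 1, q z = q 0 * Complex.exp (G z) := by
  have hd := deriv_differentiableOn hq
  have hl : DifferentiableOn ℂ (fun z => deriv q z / q z) (ball 0 1) := hd.div hq hne
  obtain ⟨G, hG0, hG⟩ := hl.isExactOn_ball.with_val_at 0 0
  have hGd : DifferentiableOn ℂ G (ball 0 1) :=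
    fun z hz => (hG z hz).differentiableAt.differentiableWithinAt
  refine ⟨G, hGd, hG0, fun z hz => ?_⟩
  have hF' : ∀ z ∈ ball (0:ℂ) 1, HasDerivAt q (deriv q z) z := fun z hz =>
    (hq.differentiableAt (isOpen_ball.mem_nhds hz)).hasDerivAt
  have hconst : Set.EqOn (fun z => q z * Complex.exp (-G z)) (fun _ => q 0) (ball 0 1) := by
    refine isOpen_ball.eqOn_of_deriv_eq (convex_ball (0:ℂ) 1).isPreconnected (hq.mul hGd.neg.cexp)
      (differentiableOn_const _) (fun z hz => ?_) zero_mem_disc (by simp [hG0])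
    have := ((hF' z hz).mul ((hG z hz).neg.cexp)).deriv
    have e : deriv (fun z => q z * Complex.exp (-G z)) z = _ := this
    rw [e]
    have := hne z hz
    simp
    field_simp
    ring
  have h1 := hconst hz
  simp only at h1
  rw [← h1, mul_assoc, ← Complex.exp_add]; simp

/-- `G` is the branch of `log (f z / (a z))` on the disk which vanishes at the origin. -/
structure LogOf (a : ℂ) (f G : ℂ → ℂ) : Prop where
  diff : DifferentiableOn ℂ G (ball 0 1)
  zero : G 0 = 0
  eq : ∀ z ∈ ball (0:ℂ) 1, f z = a * z * Complex.exp (G z)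

lemma exists_logOf {a : ℂ} {f : ℂ → ℂ} (ha : a ≠ 0) (hf : DifferentiableOn ℂ f (ball 0 1))
    (hi : Set.InjOn f (ball 0 1)) (h0 : f 0 = 0) (hd : deriv f 0 = a) : ∃ G, LogOf a f G := by
  have hs : ∀ z, z * dslope f 0 z = f z := by
    intro z
    have := sub_smul_dslope f 0 z
    simpa [h0] using this
  obtain ⟨G, hG, hG0, hGe⟩ := exists_log (q := dslope f 0)
    ((Complex.differentiableOn_dslope (isOpen_ball.mem_nhds zero_mem_disc)).2 hf) (by
      intro z hz h
      by_cases hz0 : z = 0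
      · subst hz0; rw [dslope_same, hd] at h; exact ha h
      · have h2 := hs z
        rw [h, mul_zero, ← h0] at h2
        exact hz0 (hi hz zero_mem_disc h2.symm))
  refine ⟨G, hG, hG0, fun z hz => ?_⟩
  rw [← hs z, hGe z hz, dslope_same, hd]; ring

/-- Two logarithms of the same function which agree at the origin are equal. -/
lemma log_unique {F G : ℂ → ℂ} (hF : DifferentiableOn ℂ F (ball 0 1))
    (hG : DifferentiableOn ℂ G (ball 0 1)) (hF0 : F 0 = 0) (hG0 : G 0 = 0)
    (h : ∀ z ∈ ball (0:ℂ) 1, z ≠ 0 → Complex.exp (F z) = Complex.exp (G z)) :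
    Set.EqOn F G (ball 0 1) := by
  have h' : ∀ z ∈ ball (0:ℂ) 1, Complex.exp (F z - G z) = 1 := by
    intro z hz
    by_cases hz0 : z = 0
    · subst hz0; simp [hF0, hG0]
    · rw [Complex.exp_sub, h z hz hz0, div_self (Complex.exp_ne_zero _)]
  refine isOpen_ball.eqOn_of_deriv_eq (convex_ball (0:ℂ) 1).isPreconnected hF hG
    (fun z hz => ?_) zero_mem_disc (by rw [hF0, hG0])
  have hFz := (hF.differentiableAt (isOpen_ball.mem_nhds hz)).hasDerivAt
  have hGz := (hG.differentiableAt (isOpen_ball.mem_nhds hz)).hasDerivAt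
  have h1 := (hFz.sub hGz).cexp
  have h2 : HasDerivAt (fun z => Complex.exp ((F - G) z)) 0 z := by
    refine (hasDerivAt_const z (1:ℂ)).congr_of_eventuallyEq ?_
    filter_upwards [isOpen_ball.mem_nhds hz] with w hw
    exact h' w hw
  have h3 := h1.unique h2
  have h4 : (F - G) z = F z - G z := rfl
  rw [h4, h' z hz, one_mul] at h3
  exact sub_eq_zero.1 h3

lemma UU.exists_log {a : ℝ} {ψ : ℂ → ℂ} (h : UU a ψ) : ∃ G, LogOf a ψ G :=
  exists_logOf (by exact_mod_cast h.pos.ne') h.diff h.inj h.zero h.der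

lemma UU.log_re {a : ℝ} {ψ G : ℂ → ℂ} (h : UU a ψ) (hG : LogOf a ψ G) {z : ℂ}
    (hz : z ∈ ball (0:ℂ) 1) : (G z).re ≤ -Real.log a := by
  by_cases hz0 : z = 0
  · rw [hz0, hG.zero, zero_re]
    have := Real.log_nonpos h.pos.le h.le_one
    linarith
  have h1 := h.norm_le hz
  rw [hG.eq z hz, norm_mul, norm_mul, Complex.norm_exp, Complex.norm_of_nonneg h.pos.le] at h1
  have hz' : 0 < ‖z‖ := norm_pos_iff.2 hz0
  have h2 : a * Real.exp (G z).re ≤ 1 := by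
    by_contra hc
    push Not at hc
    nlinarith
  have h3 : Real.exp (G z).re ≤ Real.exp (-Real.log a) := by
    rw [Real.exp_neg, Real.exp_log h.pos, ← one_div, le_div_iff₀ h.pos]; linarith
  exact Real.exp_le_exp.1 h3

/-- Splitting a bounded univalent function as `χ ∘ η` produces a step of the chain. -/
lemma LStep.of_factor {T h c a : ℝ} (hh : 0 < h) (hh1 : h ≤ 1 / 3) (hT : 0 < T)
    (hcT : -Real.log c ≤ T) (hac : a = c * Real.exp (-h)) {ψ χ η F G : ℂ → ℂ}
    (hχ : UU c χ) (hη : UU (Real.exp (-h)) η) (he : Set.EqOn ψ (χ ∘ η) (ball 0 1))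
    (hF : LogOf a ψ F) (hG : LogOf c χ G) : ∃ P, LStep T h G P F := by
  obtain ⟨L, hL⟩ := hη.exists_log
  have hhc : (h:ℂ) ≠ 0 := by exact_mod_cast hh.ne'
  have hηW : ∀ z ∈ ball (0:ℂ) 1, z * Complex.exp (-(h * ((h - L z) / h))) = η z := by
    intro z hz
    rw [mul_div_cancel₀ _ hhc, neg_sub, Complex.exp_sub, hL.eq z hz]
    push_cast
    rw [Complex.exp_neg]
    field_simp
  have hcomp : DifferentiableOn ℂ (fun z => G (η z)) (ball 0 1) := hG.diff.comp hη.diff hη.maps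
  have hFe : Set.EqOn F (fun z => G (η z) + L z) (ball 0 1) := by
    refine log_unique hF.diff (hcomp.add hL.diff) hF.zero (by simp [hη.zero, hG.zero, hL.zero]) ?_
    intro z hz hz0
    have h1 := hF.eq z hz
    rw [he hz, Function.comp, hG.eq _ (hη.maps hz), Complex.exp_add] at *
    rw [hL.eq z hz] at h1 ⊢
    have hc : (c:ℂ) ≠ 0 := by exact_mod_cast hχ.pos.ne'
    have hE : Complex.exp (-(h:ℂ)) ≠ 0 := Complex.exp_ne_zero _
    rw [hac] at h1
    push_cast at h1 ⊢
    have h2 : ((c:ℂ) * Complex.exp (-(h:ℂ)) * z) ≠ 0 := by simp [hc, hz0]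
    apply mul_left_cancel₀ h2
    rw [← h1]; ring
  refine ⟨fun z => (h - L z) / h, hT, hh.le, hh1, hG.diff, ?_, hF.diff, hG.zero, ?_, ?_, ?_, ?_⟩
  · have := hL.diff
    fun_prop
  · exact fun z hz => (hχ.log_re hG hz).trans hcT
  · simp [hL.zero, hhc]
  · intro z hz
    have h1 := hη.log_re hL hz
    rw [Real.log_exp, neg_neg] at h1
    rw [Complex.div_ofReal_re]
    apply div_nonneg _ hh.le
    simpa using h1
  · intro z hz
    rw [hηW z hz, hFe hz, mul_div_cancel₀ _ hhc]; ring

lemma Phi_zero_nonpos {n : ℕ} {S Λ : ℕ → Polynomial ℝ} (W : Wt n S Λ) {c : ℕ → ℂ} (hc : ∀ k, c k = 0)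
    {x : ℝ} (h0 : 0 ≤ x) (h1 : x ≤ 1) : Phi n S x c ≤ 0 := by
  rw [Phi]
  refine Finset.sum_nonpos fun k _ => ?_
  have := W.S_nonneg h0 h1 (k + 1) (by omega)
  have h2 : 0 ≤ 4 / ((k:ℝ) + 1) := by positivity
  rw [hc]
  simp only [norm_zero, ne_eq, OfNat.ofNat_ne_zero, not_false_eq_true, zero_pow, mul_zero, zero_sub]
  nlinarith

/-- Summing `Phi_step` over a chain of `m` steps of length `h` that ends at the identity. -/
lemma Phi_chain {n : ℕ} {S Λ : ℕ → Polynomial ℝ} (W : Wt n S Λ) {T : ℝ} (hT : 0 < T) :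
    ∃ C : ℝ, 0 ≤ C ∧ ∀ h : ℝ, 0 < h → h ≤ 1 / 3 → ∀ (m : ℕ) (ψ G : ℂ → ℂ), m * h ≤ T →
      UU (Real.exp (-(m * h))) ψ → LogOf (Real.exp (-(m * h)) : ℝ) ψ G →
      ∀ x : ℝ, 0 ≤ x → x ≤ 1 → Phi n S x (tc G) ≤ m * (C * h ^ 2) := by
  obtain ⟨C, hC, hstep⟩ := Phi_step W hT
  refine ⟨C, hC, fun h hh hh1 m => ?_⟩
  induction m with
  | zero =>
    intro ψ G _ hψ hG x hx0 hx1
    simp only [CharP.cast_eq_zero, zero_mul, neg_zero, Real.exp_zero, ofReal_one] at *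
    refine Phi_zero_nonpos W (fun k => ?_) hx0 hx1
    have hG0 : Set.EqOn G (fun _ => 0) (ball 0 1) := by
      refine log_unique hG.diff (differentiableOn_const _) hG.zero rfl fun z hz hz0 => ?_
      have h1 := hG.eq z hz
      rw [hψ.eq_id hz, id, one_mul] at h1
      apply mul_left_cancel₀ hz0
      rw [← h1]; simp
    rw [tc_congr hG0]
    rcases k with _ | k
    · simp [tc_zero]
    · exact tc_const _ (Nat.succ_ne_zero k)
  | succ m ih =>
    intro ψ G hmT hψ hG x hx0 hx1
    have hmT' : m * h ≤ T := by push_cast at hmT; nlinarith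
    have hc : Real.exp (-((m + 1 : ℕ) * h)) = Real.exp (-(m * h)) * Real.exp (-h) := by
      rw [← Real.exp_add]; congr 1; push_cast; ring
    obtain ⟨χ, η, hχ, hη, he⟩ := hψ.interpolate (c := Real.exp (-(m * h)))
      (by apply Real.exp_le_exp.2; push_cast; nlinarith)
      (by rw [Real.exp_le_one_iff]; have := mul_nonneg (Nat.cast_nonneg (α := ℝ) m) hh.le; linarith)
    rw [hc, mul_div_cancel_left₀ _ (Real.exp_pos _).ne'] at hη
    obtain ⟨K, hK⟩ := hχ.exists_log
    obtain ⟨P, s⟩ := LStep.of_factor hh hh1 hT (by rw [Real.log_exp, neg_neg]; exact hmT') hc hχ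
      hη he hG hK
    have h1 := hstep h K P G s x hx0 hx1
    have hx' : x * Real.exp (-h) ≤ 1 := by
      have : Real.exp (-h) ≤ 1 := by rw [Real.exp_le_one_iff]; linarith
      nlinarith [Real.exp_pos (-h)]
    have h2 := ih χ K hmT' hχ hK (x * Real.exp (-h)) (by positivity) hx'
    push_cast
    linarith

/-- Milin-type inequality for bounded univalent functions. -/
lemma Phi_bounded {n : ℕ} {S Λ : ℕ → Polynomial ℝ} (W : Wt n S Λ) {a : ℝ} {ψ G : ℂ → ℂ}
    (hψ : UU a ψ) (hG : LogOf a ψ G) : Phi n S 1 (tc G) ≤ 0 := by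
  obtain ⟨T, hT⟩ : ∃ T, T = -Real.log a := ⟨_, rfl⟩
  have hT0 : 0 ≤ T := by have := Real.log_nonpos hψ.pos.le hψ.le_one; linarith
  have ha : a = Real.exp (-T) := by rw [hT, neg_neg, Real.exp_log hψ.pos]
  -- For `a = 1` the chain has no steps, and any positive length bound serves in `Phi_chain`.
  rcases hT0.eq_or_lt with hT1 | hTpos
  · obtain ⟨C, -, h⟩ := Phi_chain W one_pos
    have := h (1 / 3) (by norm_num) le_rfl 0 ψ G (by simp) (by simpa [ha, ← hT1] using hψ)
      (by simpa [ha, ← hT1] using hG) 1 zero_le_one le_rfl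
    simpa using this
  obtain ⟨C, hC, h⟩ := Phi_chain W hTpos
  have hlim : Tendsto (fun m : ℕ => (C * T ^ 2) / (m:ℝ)) atTop (𝓝 0) :=
    tendsto_const_div_atTop_nhds_zero_nat _
  refine ge_of_tendsto hlim ?_
  obtain ⟨m0, hm0⟩ := exists_nat_ge (3 * T)
  filter_upwards [eventually_ge_atTop m0, eventually_gt_atTop 0] with m hm hmpos
  have hm' : (0:ℝ) < m := by exact_mod_cast hmpos
  have hmm : (m0:ℝ) ≤ m := by exact_mod_cast hm
  have e : (m:ℝ) * (T / m) = T := mul_div_cancel₀ _ hm'.ne'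
  have := h (T / m) (by positivity) (by rw [div_le_iff₀ hm']; linarith) m ψ G e.le
    (by rw [e, ← ha]; exact hψ) (by rw [e, ← ha]; exact hG) 1 zero_le_one le_rfl
  refine this.trans_eq ?_
  field_simp

/-- Milin-type inequality for the whole class, by dilation from the bounded case. -/
theorem Phi_classS {n : ℕ} {S Λ : ℕ → Polynomial ℝ} (W : Wt n S Λ) {f G : ℂ → ℂ}
    (hf : InClassS f) (hG : LogOf 1 f G) : Phi n S 1 (tc G) ≤ 0 := by
  obtain ⟨hfa, hfi, hf0, hf1⟩ := hf
  have hfd : DifferentiableOn ℂ f (ball 0 1) := hfa.differentiableOn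
  have key : ∀ r : ℝ, 0 < r → r < 1 → Phi n S 1 (fun k => (r:ℂ) ^ k * tc G k) ≤ 0 := by
    intro r hr hr1
    have hsub : closedBall (0:ℂ) r ⊆ ball 0 1 := closedBall_subset_ball hr1
    obtain ⟨M, hM⟩ := (isCompact_closedBall (0:ℂ) r).exists_bound_of_continuousOn
      (hfd.continuousOn.mono hsub)
    obtain ⟨M', hM'⟩ : ∃ M', M' = |M| + 1 := ⟨_, rfl⟩
    have hM0 : 0 < M' := by rw [hM']; positivity
    have hMc : (M':ℂ) ≠ 0 := by exact_mod_cast hM0.ne'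
    have hrc : (r:ℂ) ≠ 0 := by exact_mod_cast hr.ne'
    have hmaps : ∀ z ∈ ball (0:ℂ) 1, (r:ℂ) * z ∈ closedBall (0:ℂ) r := by
      intro z hz
      rw [mem_ball_zero_iff] at hz
      rw [mem_closedBall_zero_iff, norm_mul, Complex.norm_of_nonneg hr.le]
      nlinarith
    have hlin : DifferentiableOn ℂ (fun z : ℂ => (r:ℂ) * z) (ball 0 1) := by fun_prop
    have hψ : UU (r / M') (fun z => f (r * z) / M') := by
      refine ⟨by positivity, ?_, ?_, ?_, by simp [hf0], ?_⟩
      · exact (hfd.comp hlin fun z hz => hsub (hmaps z hz)).div_const _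
      · intro z hz w hw h
        have h1 : f (r * z) = f (r * w) := by
          simp only at h
          rwa [div_left_inj' hMc] at h
        exact mul_left_cancel₀ hrc (hfi (hsub (hmaps z hz)) (hsub (hmaps w hw)) h1)
      · intro z hz
        rw [mem_ball_zero_iff, norm_div, Complex.norm_of_nonneg hM0.le, div_lt_one hM0]
        have := hM _ (hmaps z hz)
        rw [hM']
        exact this.trans_lt ((le_abs_self M).trans_lt (lt_add_one _))
      · rw [deriv_div_const, deriv_comp_mul_left (c := (r:ℂ)) (f := f), mul_zero, hf1]
        simp
    have hL : LogOf ((r / M' : ℝ) : ℂ) (fun z => f (r * z) / M') (fun z => G (r * z)) := by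
      refine ⟨hG.diff.comp hlin fun z hz => hsub (hmaps z hz), by simp [hG.zero], fun z hz => ?_⟩
      rw [hG.eq _ (hsub (hmaps z hz))]
      push_cast
      ring
    have := Phi_bounded W hψ hL
    rwa [show tc (fun z => G (r * z)) = fun k => (r:ℂ) ^ k * tc G k from
      funext fun k => tc_comp_mul G r k] at this
  have hcont : Continuous fun r : ℝ => Phi n S 1 (fun k => (r:ℂ) ^ k * tc G k) := by
    unfold Phi
    fun_prop
  have h1 : Tendsto (fun r : ℝ => Phi n S 1 (fun k => (r:ℂ) ^ k * tc G k)) (𝓝[<] 1)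
      (𝓝 (Phi n S 1 (tc G))) := by
    have := (hcont.tendsto 1).mono_left (nhdsWithin_le_nhds (s := Set.Iio 1))
    simpa using this
  refine le_of_tendsto h1 ?_
  filter_upwards [Ioo_mem_nhdsLT (show (0:ℝ) < 1 by norm_num)] with r hr
  exact key r hr.1 hr.2

/-! ### Milin functionals and Koebe transforms -/

/-- The Koebe transform of a function of class `𝒮` is of class `𝒮`. -/
lemma koebe_transform {f : ℂ → ℂ} (hf : InClassS f) {a : ℂ} (ha : ‖a‖ < 1) :
    InClassS (fun z =>
      (f (mob a z) - f (-a)) / ((1 - (starRingEnd ℂ) a * a) * deriv f (-a))) := by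
  obtain ⟨hfa, hfi, hf0, hf1⟩ := hf
  have hfd : DifferentiableOn ℂ f (ball 0 1) := hfa.differentiableOn
  have ha' : -a ∈ ball (0:ℂ) 1 := by rwa [mem_ball_zero_iff, norm_neg]
  have hd : deriv f (-a) ≠ 0 := inj_deriv_ne_zero isOpen_ball hfd hfi ha'
  have h2 : 1 - (starRingEnd ℂ) a * a ≠ 0 := mob_denom ha ha
  have hK : ((1 - (starRingEnd ℂ) a * a) * deriv f (-a)) ≠ 0 := mul_ne_zero h2 hd
  have h0 : mob a 0 = -a := by simp [mob]
  have hn : ∀ {z : ℂ}, z ∈ ball (0:ℂ) 1 → ‖z‖ < 1 := fun hz => by rwa [mem_ball_zero_iff] at hz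
  have hmaps : Set.MapsTo (mob a) (ball 0 1) (ball 0 1) := fun z hz => by
    rw [mem_ball_zero_iff]; exact mob_norm_lt ha (hn hz)
  refine ⟨?_, ?_, by simp [h0], ?_⟩
  · apply DifferentiableOn.analyticOnNhd _ isOpen_ball
    have h3 : DifferentiableOn ℂ (mob a) (ball 0 1) := fun z hz =>
      (mob_hasDerivAt ha (hn hz)).differentiableAt.differentiableWithinAt
    exact ((hfd.comp h3 hmaps).sub_const _).div_const _
  · intro z hz w hw h
    have h3 : f (mob a z) = f (mob a w) := by
      simp only at h
      rw [div_left_inj' hK] at h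
      linear_combination h
    exact mob_inj ha (hn hz) (hn hw) (hfi (hmaps hz) (hmaps hw) h3)
  · have h3 := mob_hasDerivAt ha (hn zero_mem_disc)
    have h4 : HasDerivAt f (deriv f (-a)) (mob a 0) := by
      rw [h0]; exact (hfd.differentiableAt (isOpen_ball.mem_nhds ha')).hasDerivAt
    have h5 := ((h4.comp 0 h3).sub_const (f (-a))).div_const
      ((1 - (starRingEnd ℂ) a * a) * deriv f (-a))
    refine Eq.trans h5.deriv ?_
    rw [mul_zero, sub_zero, one_pow, div_one, mul_comm, div_self hK]

/-- `E_N = ∑_{k ≤ N} (N + 1 - k) (k ‖c_k‖² - 4 / k)`, four times Milin's functional when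
`c_k = 2 γ_k`. -/
noncomputable def milE (c : ℕ → ℂ) (N : ℕ) : ℝ :=
  ∑ k ∈ Finset.range N,
    (((k:ℝ) + 1) * ‖c (k + 1)‖ ^ 2 - 4 / ((k:ℝ) + 1)) * ((N:ℝ) - k)

lemma wS_one_eq {N k : ℕ} (hk : k < N) : (wS N (k + 1)).eval 1 = (N:ℝ) - k := by
  rw [wS_one, Nat.add_sub_add_right, Nat.cast_sub hk.le]

/-- Milin's inequality. -/
theorem milE_nonpos {f G : ℂ → ℂ} (hf : InClassS f) (hG : LogOf 1 f G) (N : ℕ) :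
    milE (tc G) N ≤ 0 := by
  refine le_of_eq_of_le ?_ (Phi_classS (wt_single N) hf hG)
  rw [milE, Phi]
  refine Finset.sum_congr rfl fun k hk => ?_
  rw [wS_one_eq (Finset.mem_range.1 hk)]

/-- The combined Milin inequality, in which the nonpositive `milE (tc G) 1` carries a negative
coefficient. -/
theorem milE_special {f G : ℂ → ℂ} (hf : InClassS f) (hG : LogOf 1 f G) :
    ∑ N ∈ Finset.Icc 1 9, (cI N : ℝ) * milE (tc G) N ≤ 0 := by
  refine le_of_eq_of_le ?_ (Phi_classS wt_special hf hG)
  rw [Phi]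
  simp only [Polynomial.eval_finsetSum, Polynomial.eval_mul, Polynomial.eval_C, Finset.mul_sum]
  rw [Finset.sum_comm]
  refine Finset.sum_congr rfl fun N hN => ?_
  rw [Finset.mem_Icc] at hN
  rw [milE, Finset.mul_sum]
  have hsub : Finset.range N ⊆ Finset.range 9 := Finset.range_subset_range.2 hN.2
  rw [← Finset.sum_subset hsub]
  · refine Finset.sum_congr rfl fun k hk => ?_
    rw [wS_one_eq (Finset.mem_range.1 hk)]; ring
  · intro k _ hk
    rw [Finset.mem_range, not_lt] at hk
    rw [wS_one, Nat.sub_eq_zero_of_le (by omega)]; simp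

/-! ### First variation of the Koebe transform -/

/-- A holomorphic family `Q t z` that equals `1` to first order in `t`, uniformly for `z` in a
compact set. -/
lemma family_bound {Q : ℂ → ℂ → ℂ} {K : Set ℂ} (hK : IsCompact K)
    (hd : ∀ z ∈ K, DifferentiableOn ℂ (fun t => Q t z) (ball 0 (1 / 4)))
    (hc : ContinuousOn (fun p : ℂ × ℂ => Q p.1 p.2) (ball 0 (1 / 4) ×ˢ K))
    (h0 : ∀ z ∈ K, Q 0 z = 1) (h1 : ∀ z ∈ K, HasDerivAt (fun t => Q t z) 0 0) :
    ∃ C : ℝ, 0 < C ∧ ∀ t : ℂ, ‖t‖ ≤ 1 / 16 → ∀ z ∈ K, ‖Q t z‖ ≤ 1 + C * ‖t‖ ^ 2 := by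
  obtain ⟨M, hM⟩ := ((isCompact_closedBall (0:ℂ) (1 / 8)).prod hK).exists_bound_of_continuousOn
    (hc.mono (Set.prod_mono (closedBall_subset_ball (by norm_num)) subset_rfl))
  refine ⟨64 * |M| * 64 + 1, by positivity, fun t ht z hz => ?_⟩
  have hmap : ∀ s : ℂ, s ∈ ball (0:ℂ) 1 → s / 8 ∈ ball (0:ℂ) (1 / 4) := by
    intro s hs
    rw [mem_ball_zero_iff] at hs ⊢
    rw [norm_div]; norm_num; linarith
  have hg : DifferentiableOn ℂ (fun s : ℂ => Q (s / 8) z) (ball 0 1) :=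
    (hd z hz).comp (f := fun s : ℂ => s / 8) (by fun_prop) hmap
  have hb : ∀ s : ℂ, ‖s‖ ≤ 3 / 4 → ‖Q (s / 8) z‖ ≤ |M| := by
    intro s hs
    refine (hM (s / 8, z) ⟨?_, hz⟩).trans (le_abs_self M)
    rw [mem_closedBall_zero_iff, norm_div]; norm_num; linarith
  have hb1 : ∀ s : ℂ, ‖s‖ ≤ 5 / 8 → ‖deriv (fun s : ℂ => Q (s / 8) z) s‖ ≤ 8 * |M| := by
    intro s hs
    have := deriv_le_of_bound hg (r := 5 / 8) (s := 3 / 4) (by norm_num) (by norm_num) hb hs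
    norm_num at this
    linarith
  have hb2 : ∀ s : ℂ, ‖s‖ ≤ 1 / 2 → ‖deriv (deriv (fun s : ℂ => Q (s / 8) z)) s‖ ≤ 64 * |M| := by
    intro s hs
    have := deriv_le_of_bound (deriv_differentiableOn hg) (r := 1 / 2) (s := 5 / 8) (by norm_num)
      (by norm_num) hb1 hs
    norm_num at this
    linarith
  have h8 : ‖8 * t‖ = 8 * ‖t‖ := by rw [norm_mul]; norm_num
  have h2 := second_order hg (r := 1 / 2) (by norm_num) hb2 (z := 0) (w := 8 * t) (by simp)
    (by rw [h8]; linarith)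
  have h3 : deriv (fun s : ℂ => Q (s / 8) z) 0 = 0 := by
    have h4 : HasDerivAt (fun t => Q t z) 0 ((0:ℂ) / 8) := by rw [zero_div]; exact h1 z hz
    have h5 := h4.comp (0:ℂ) ((hasDerivAt_id (0:ℂ)).div_const 8)
    simpa [Function.comp_def] using h5.deriv
  have h6 : 8 * t / 8 = t := by ring
  simp only [h3, zero_mul, sub_zero, zero_div, h0 z hz, h6, h8] at h2
  have h7 : ‖Q t z‖ ≤ ‖(1:ℂ)‖ + ‖Q t z - 1‖ := by
    calc ‖Q t z‖ = ‖1 + (Q t z - 1)‖ := by congr 1; ring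
      _ ≤ _ := norm_add_le _ _
  rw [norm_one] at h7
  nlinarith [sq_nonneg ‖t‖]

section variation

variable {f G B : ℂ → ℂ} {ε : ℂ}

/-- The first-order variation of `log (f z / z)` along the Koebe transforms centred at `t ε`;
`B` stands for `(1 - exp (-G z)) / z`. -/
noncomputable def varD (G B : ℂ → ℂ) (ε z : ℂ) : ℂ :=
  ε * (deriv G z + B z) - (starRingEnd ℂ) ε * (z * (1 + z * deriv G z)) - 2 * deriv G 0 * ε

/-- The ratio of the Koebe transform at `t ε` and the first-order prediction `f z * exp (t D z)`,
with `t` complex. -/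
noncomputable def varQ (f G B : ℂ → ℂ) (ε t z : ℂ) : ℂ :=
  (f ((z + t * ε) / (1 + t * (starRingEnd ℂ) ε * z)) - f (t * ε)) /
    ((1 - t ^ 2) * deriv f (t * ε)) * Complex.exp (-(t * varD G B ε z)) / f z

lemma varQ_arg (hε : ‖ε‖ = 1) {t z : ℂ} (ht : ‖t‖ < 1 / 4) (hz : ‖z‖ = 1 / 2) :
    1 + t * (starRingEnd ℂ) ε * z ≠ 0 ∧
      (z + t * ε) / (1 + t * (starRingEnd ℂ) ε * z) ∈ ball (0:ℂ) 1 ∧ t * ε ∈ ball (0:ℂ) 1 ∧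
      1 - t ^ 2 ≠ 0 := by
  have h1 : ‖t * ε‖ < 1 / 4 := by rwa [norm_mul, hε, mul_one]
  have h2 : ‖t * (starRingEnd ℂ) ε * z‖ < 1 / 8 := by
    rw [norm_mul, norm_mul, RCLike.norm_conj, hε, hz]; linarith
  have h3 : 7 / 8 ≤ ‖1 + t * (starRingEnd ℂ) ε * z‖ := by
    have := norm_sub_le (1 + t * (starRingEnd ℂ) ε * z) (t * (starRingEnd ℂ) ε * z)
    rw [add_sub_cancel_right, norm_one] at this
    linarith
  refine ⟨norm_pos_iff.1 (by linarith), ?_, by rw [mem_ball_zero_iff]; linarith, ?_⟩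
  · rw [mem_ball_zero_iff, norm_div, div_lt_one (by linarith)]
    have := norm_add_le z (t * ε)
    linarith
  · intro h
    have h4 : t ^ 2 = 1 := by linear_combination -h
    have h5 := congrArg norm h4
    rw [norm_pow, norm_one] at h5
    nlinarith [norm_nonneg t]

lemma logOf_deriv (hG : LogOf 1 f G) {z : ℂ} (hz : z ∈ ball (0:ℂ) 1) :
    deriv f z = Complex.exp (G z) * (1 + z * deriv G z) := by
  have h1 : f =ᶠ[𝓝 z] fun z => z * Complex.exp (G z) := by
    filter_upwards [isOpen_ball.mem_nhds hz] with w hw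
    rw [hG.eq w hw, one_mul]
  rw [h1.deriv_eq]
  have h2 := (hG.diff.differentiableAt (isOpen_ball.mem_nhds hz)).hasDerivAt
  have h3 := (hasDerivAt_id z).mul h2.cexp
  refine Eq.trans h3.deriv ?_
  simp only [id]; ring

lemma logOf_deriv2 (hG : LogOf 1 f G) : HasDerivAt (deriv f) (2 * deriv G 0) 0 := by
  have h1 : deriv f =ᶠ[𝓝 0] fun z => Complex.exp (G z) * (1 + z * deriv G z) := by
    filter_upwards [isOpen_ball.mem_nhds zero_mem_disc] with w hw
    exact logOf_deriv hG hw
  refine HasDerivAt.congr_of_eventuallyEq ?_ h1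
  have h2 := (hG.diff.differentiableAt (isOpen_ball.mem_nhds zero_mem_disc)).hasDerivAt
  have h4 := ((deriv_differentiableOn hG.diff).differentiableAt
    (isOpen_ball.mem_nhds zero_mem_disc)).hasDerivAt
  have h3 := h2.cexp.mul (((hasDerivAt_id (0:ℂ)).mul h4).const_add 1)
  convert! h3 using 1
  simp [hG.zero]; ring

lemma varD_diff (hG : DifferentiableOn ℂ G (ball 0 1)) (hB : DifferentiableOn ℂ B (ball 0 1)) :
    DifferentiableOn ℂ (varD G B ε) (ball 0 1) := by
  have := deriv_differentiableOn hG
  unfold varD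
  fun_prop

lemma varQ_bound (hf : InClassS f) (hG : LogOf 1 f G) (hB : DifferentiableOn ℂ B (ball 0 1))
    (hBG : ∀ z ∈ ball (0:ℂ) 1, z * B z = 1 - Complex.exp (-G z)) (hε : ‖ε‖ = 1) :
    ∃ C : ℝ, 0 < C ∧ ∀ t : ℂ, ‖t‖ ≤ 1 / 16 → ∀ z ∈ sphere (0:ℂ) (1 / 2),
      ‖varQ f G B ε t z‖ ≤ 1 + C * ‖t‖ ^ 2 := by
  obtain ⟨hfa, hfi, hf0, hf1⟩ := hf
  have hfd : DifferentiableOn ℂ f (ball 0 1) := hfa.differentiableOn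
  have hfd' := deriv_differentiableOn hfd
  have hDd := varD_diff (ε := ε) hG.diff hB
  have hn : ∀ {z : ℂ}, z ∈ sphere (0:ℂ) (1 / 2) → ‖z‖ = 1 / 2 := fun hz => by simpa using hz
  have hm : ∀ {t : ℂ}, t ∈ ball (0:ℂ) (1 / 4) → ‖t‖ < 1 / 4 := fun ht => by
    rwa [mem_ball_zero_iff] at ht
  have hball : ∀ {z : ℂ}, z ∈ sphere (0:ℂ) (1 / 2) → z ∈ ball (0:ℂ) 1 := fun hz =>
    mem_disc_of_le (by norm_num) (hn hz).le
  have hz0 : ∀ {z : ℂ}, z ∈ sphere (0:ℂ) (1 / 2) → z ≠ 0 := fun hz =>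
    norm_pos_iff.1 (by rw [hn hz]; norm_num)
  have hfz : ∀ {z : ℂ}, z ∈ sphere (0:ℂ) (1 / 2) → f z ≠ 0 := fun {z} hz h =>
    hz0 hz (hfi (hball hz) zero_mem_disc (by rw [h, hf0]))
  have hder : ∀ {z : ℂ}, z ∈ ball (0:ℂ) 1 → deriv f z ≠ 0 := fun hz =>
    inj_deriv_ne_zero isOpen_ball hfd hfi hz
  refine family_bound (isCompact_sphere _ _) ?_ ?_ ?_ ?_
  · intro z hz
    unfold varQ
    refine DifferentiableOn.div_const (DifferentiableOn.mul (DifferentiableOn.div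
      (DifferentiableOn.sub ?_ ?_) (DifferentiableOn.mul ?_ ?_) ?_) ?_) _
    · exact hfd.comp (f := fun t => (z + t * ε) / (1 + t * (starRingEnd ℂ) ε * z))
        (DifferentiableOn.div (by fun_prop) (by fun_prop) fun t ht => (varQ_arg hε (hm ht) (hn hz)).1)
        fun t ht => (varQ_arg hε (hm ht) (hn hz)).2.1
    · exact hfd.comp (f := fun t => t * ε) (by fun_prop)
        fun t ht => (varQ_arg hε (hm ht) (hn hz)).2.2.1
    · fun_prop
    · exact hfd'.comp (f := fun t => t * ε) (by fun_prop)
        fun t ht => (varQ_arg hε (hm ht) (hn hz)).2.2.1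
    · intro t ht
      exact mul_ne_zero (varQ_arg hε (hm ht) (hn hz)).2.2.2
        (hder (varQ_arg hε (hm ht) (hn hz)).2.2.1)
    · fun_prop
  · unfold varQ
    refine ContinuousOn.div (ContinuousOn.mul (ContinuousOn.div
      (ContinuousOn.sub ?_ ?_) (ContinuousOn.mul ?_ ?_) ?_) ?_) ?_ ?_
    · exact hfd.continuousOn.comp
        (f := fun p : ℂ × ℂ => (p.2 + p.1 * ε) / (1 + p.1 * (starRingEnd ℂ) ε * p.2))
        (ContinuousOn.div (by fun_prop) (by fun_prop) fun p hp =>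
          (varQ_arg hε (hm hp.1) (hn hp.2)).1) fun p hp => (varQ_arg hε (hm hp.1) (hn hp.2)).2.1
    · exact hfd.continuousOn.comp (f := fun p : ℂ × ℂ => p.1 * ε) (by fun_prop)
        fun p hp => (varQ_arg hε (hm hp.1) (hn hp.2)).2.2.1
    · fun_prop
    · exact hfd'.continuousOn.comp (f := fun p : ℂ × ℂ => p.1 * ε) (by fun_prop)
        fun p hp => (varQ_arg hε (hm hp.1) (hn hp.2)).2.2.1
    · intro p hp
      exact mul_ne_zero (varQ_arg hε (hm hp.1) (hn hp.2)).2.2.2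
        (hder (varQ_arg hε (hm hp.1) (hn hp.2)).2.2.1)
    · have h1 : ContinuousOn (fun p : ℂ × ℂ => varD G B ε p.2)
          (ball (0:ℂ) (1 / 4) ×ˢ sphere (0:ℂ) (1 / 2)) :=
        hDd.continuousOn.comp (f := fun p : ℂ × ℂ => p.2) (by fun_prop) fun p hp => hball hp.2
      fun_prop
    · exact hfd.continuousOn.comp (f := fun p : ℂ × ℂ => p.2) (by fun_prop) fun p hp => hball hp.2
    · exact fun p hp => hfz hp.2
  · intro z hz
    have := hfz hz
    simp [varQ, hf0, hf1, this]
  · intro z hz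
    have hzb := hball hz
    have hzz := hz0 hz
    have hfz' := hfz hz
    have hm1 : HasDerivAt (fun t : ℂ => (z + t * ε) / (1 + t * (starRingEnd ℂ) ε * z))
        (ε - (starRingEnd ℂ) ε * z ^ 2) 0 := by
      have := (((hasDerivAt_id (0:ℂ)).mul_const ε).const_add z).div
        ((((hasDerivAt_id (0:ℂ)).mul_const ((starRingEnd ℂ) ε)).mul_const z).const_add 1)
        (by simp)
      convert! this using 1
      simp; ring
    have hm2 : HasDerivAt (fun t : ℂ => t * ε) ε 0 := by
      simpa using (hasDerivAt_id (0:ℂ)).mul_const ε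
    have hN1 : HasDerivAt (fun t : ℂ => f ((z + t * ε) / (1 + t * (starRingEnd ℂ) ε * z)))
        (deriv f z * (ε - (starRingEnd ℂ) ε * z ^ 2)) 0 := by
      refine HasDerivAt.comp (h₂ := f) (0:ℂ) ?_ hm1
      simpa using (hfd.differentiableAt (isOpen_ball.mem_nhds hzb)).hasDerivAt
    have hN2 : HasDerivAt (fun t : ℂ => f (t * ε)) (1 * ε) 0 := by
      refine HasDerivAt.comp (h₂ := f) (0:ℂ) ?_ hm2
      rw [zero_mul, ← hf1]
      exact (hfd.differentiableAt (isOpen_ball.mem_nhds zero_mem_disc)).hasDerivAt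
    have hV : HasDerivAt (fun t : ℂ => deriv f (t * ε)) (2 * deriv G 0 * ε) 0 := by
      refine HasDerivAt.comp (h₂ := deriv f) (0:ℂ) ?_ hm2
      rw [zero_mul]; exact logOf_deriv2 hG
    have hV1 : HasDerivAt (fun t : ℂ => 1 - t ^ 2) 0 0 := by
      simpa using ((hasDerivAt_id (0:ℂ)).pow 2).const_sub 1
    have hE : HasDerivAt (fun t : ℂ => Complex.exp (-(t * varD G B ε z))) (-varD G B ε z) 0 := by
      have := ((hasDerivAt_id (0:ℂ)).mul_const (varD G B ε z)).neg.cexp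
      simpa using this
    have := (((hN1.sub hN2).div (hV1.mul hV) (by simp [hf1])).mul hE).div_const (f z)
    unfold varQ
    convert! this using 1
    simp only [Pi.sub_apply, Pi.mul_apply, zero_mul, add_zero, div_one, hf0, hf1, neg_zero, Complex.exp_zero]
    have hE' : Complex.exp (G z) * Complex.exp (-G z) = 1 := by rw [← Complex.exp_add]; simp
    have hb := hBG z hzb
    have hfe : f z = z * Complex.exp (G z) := by rw [hG.eq z hzb, one_mul]
    rw [eq_comm, div_eq_zero_iff]
    left
    rw [logOf_deriv hG hzb, hfe, varD]
    have hb' : Complex.exp (-G z) = 1 - z * B z := by linear_combination hb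
    rw [hb'] at hE'
    simp [hf0, hf1, hfe]
    linear_combination ε * hE'
end variation

/-! ### Variation of the Milin functionals -/

section rigidity

variable {f G B : ℂ → ℂ} {ε : ℂ}

/-- First-order expansion of the logarithmic coefficients along the Koebe transforms at `t ε`. -/
lemma koebe_variation (hf : InClassS f) (hG : LogOf 1 f G) (hB : DifferentiableOn ℂ B (ball 0 1))
    (hBG : ∀ z ∈ ball (0:ℂ) 1, z * B z = 1 - Complex.exp (-G z)) (hB0 : B 0 = deriv G 0)
    (hε : ‖ε‖ = 1) :
    ∃ C : ℝ, 0 < C ∧ ∀ t : ℝ, 0 < t → t ≤ 1 / 16 → ∃ F H : ℂ → ℂ, InClassS F ∧ LogOf 1 F H ∧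
      ∀ k, ‖tc H k - tc G k - t * tc (varD G B ε) k‖ ≤ C * t ^ 2 * 4 ^ k := by
  obtain ⟨C, hC, hQ⟩ := varQ_bound hf hG hB hBG hε
  refine ⟨2 * C, by positivity, fun t ht ht1 => ?_⟩
  have hta : ‖-((t:ℂ) * ε)‖ < 1 := by
    rw [norm_neg, norm_mul, hε, Complex.norm_real, Real.norm_of_nonneg ht.le]; linarith
  have hF := koebe_transform hf hta
  set F : ℂ → ℂ := _ with hFdef
  change InClassS F at hF
  obtain ⟨H, hH⟩ := exists_logOf one_ne_zero hF.1.differentiableOn hF.2.1 hF.2.2.1 hF.2.2.2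
  refine ⟨F, H, hF, hH, ?_⟩
  have hD := varD_diff (ε := ε) hG.diff hB
  set U : ℂ → ℂ := fun z => H z - G z - t * varD G B ε z with hU
  have hUd : DifferentiableOn ℂ U (ball 0 1) := (hH.diff.sub hG.diff).sub (hD.const_mul _)
  have hU0 : U 0 = 0 := by
    simp only [hU, hH.zero, hG.zero, varD, hB0]; ring
  have hexp : ∀ z ∈ sphere (0:ℂ) (1 / 2), Complex.exp (U z) = varQ f G B ε t z := by
    intro z hz
    have hzn : ‖z‖ = 1 / 2 := by simpa using hz
    have hzb : z ∈ ball (0:ℂ) 1 := mem_disc_of_le (by norm_num) hzn.le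
    have hz0 : z ≠ 0 := norm_pos_iff.1 (by rw [hzn]; norm_num)
    have h1 := hH.eq z hzb
    have h2 := hG.eq z hzb
    have hFz : F z = (f ((z + t * ε) / (1 + t * (starRingEnd ℂ) ε * z)) - f (t * ε)) /
        ((1 - t ^ 2) * deriv f (t * ε)) := by
      have hc : (starRingEnd ℂ) ε * ε = 1 := by
        rw [mul_comm, Complex.mul_conj, Complex.normSq_eq_norm_sq, hε]; simp
      rw [hFdef]
      simp only [mob, neg_neg, map_neg, map_mul, Complex.conj_ofReal, sub_neg_eq_add, neg_mul,
        mul_neg]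
      congr 2
      linear_combination (-(t:ℂ) ^ 2) * hc
    rw [varQ, ← hFz, h1, h2, hU]
    simp only [one_mul]
    rw [sub_eq_add_neg, sub_eq_add_neg, Complex.exp_add, Complex.exp_add, Complex.exp_neg (G z)]
    have := Complex.exp_ne_zero (G z)
    field_simp
  have hre : ∀ z : ℂ, ‖z‖ ≤ 1 / 2 → (U z).re ≤ C * t ^ 2 := by
    intro z hz
    have hcl : DiffContOnCl ℂ (fun z => Complex.exp (U z)) (ball 0 (1 / 2)) :=
      diffContOnCl_disc hUd.cexp (by norm_num)
    have h1 : ‖Complex.exp (U z)‖ ≤ 1 + C * t ^ 2 := by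
      refine Complex.norm_le_of_forall_mem_frontier_norm_le isBounded_ball hcl (fun w hw => ?_) ?_
      · rw [frontier_ball _ (by norm_num)] at hw
        rw [hexp w hw]
        have := hQ t (by rw [Complex.norm_real, Real.norm_of_nonneg ht.le]; exact ht1) w hw
        rwa [Complex.norm_real, Real.norm_of_nonneg ht.le] at this
      · rw [closure_ball _ (by norm_num)]; simpa using hz
    rw [Complex.norm_exp] at h1
    have := Real.add_one_le_exp (U z).re
    linarith
  have hV : DifferentiableOn ℂ (fun z => U ((1 / 2 : ℂ) * z)) (ball 0 1) := by
    refine hUd.comp (f := fun z => (1 / 2 : ℂ) * z) (by fun_prop) fun z hz => ?_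
    rw [mem_ball_zero_iff] at hz ⊢
    rw [norm_mul]; norm_num; linarith
  intro k
  have h2 := tc_norm_le hV (C := 2 * C * t ^ 2) (r := 1 / 2) (by norm_num) (by norm_num)
    (fun z hz => by
      have := norm_le_of_re_le (T := C * t ^ 2) (by positivity) hV (by simpa using hU0)
        (fun z hz => hre _ (by
          rw [mem_ball_zero_iff] at hz
          rw [norm_mul]; norm_num; linarith)) (r := 1 / 2) (by norm_num) hz.le
      refine this.trans (le_of_eq ?_)
      ring) k
  rw [tc_comp_mul, hU, tc_sub (f := fun z => H z - G z) (hH.diff.sub hG.diff) (hD.const_mul _), tc_sub hH.diff hG.diff,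
    tc_const_mul, norm_mul, norm_pow] at h2
  have h3 : (4:ℝ) ^ k = 2 ^ k * 2 ^ k := by rw [← mul_pow]; norm_num
  rw [h3]
  have h4 : (0:ℝ) < 2 ^ k := by positivity
  have h5 : ‖(1 / 2 : ℂ)‖ = 1 / 2 := by norm_num
  rw [h5] at h2
  simp only [one_div, inv_pow, div_inv_eq_mul] at h2
  rw [inv_mul_le_iff₀ h4] at h2
  linarith

/-- If `G` is extremal for the Milin functional, the first variation along Koebe transforms
is nonpositive. -/
lemma milE_variation (hf : InClassS f) (hG : LogOf 1 f G) (hB : DifferentiableOn ℂ B (ball 0 1))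
    (hBG : ∀ z ∈ ball (0:ℂ) 1, z * B z = 1 - Complex.exp (-G z)) (hB0 : B 0 = deriv G 0)
    (hε : ‖ε‖ = 1) {N : ℕ} (hN : milE (tc G) N = 0) :
    ∑ k ∈ Finset.range N, ((k:ℝ) + 1) * ((N:ℝ) - k) *
      ((starRingEnd ℂ) (tc G (k + 1)) * tc (varD G B ε) (k + 1)).re ≤ 0 := by
  obtain ⟨C, hC, hvar⟩ := koebe_variation hf hG hB hBG hB0 hε
  set S := ∑ k ∈ Finset.range N, ((k:ℝ) + 1) * ((N:ℝ) - k) *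
      ((starRingEnd ℂ) (tc G (k + 1)) * tc (varD G B ε) (k + 1)).re with hS
  set M := ∑ k ∈ Finset.range N, ((k:ℝ) + 1) * ((N:ℝ) - k) * (‖tc G (k + 1)‖ * (C * 4 ^ (k + 1)))
    with hM
  have hM0 : 0 ≤ M := Finset.sum_nonneg fun k hk => by
    have : (k:ℝ) ≤ N := by exact_mod_cast (Finset.mem_range.1 hk).le
    have : (0:ℝ) ≤ N - k := by linarith
    positivity
  have key : ∀ t : ℝ, 0 < t → t ≤ 1 / 16 → S ≤ t * M := by
    intro t ht ht1
    obtain ⟨F, H, hF, hH, hk⟩ := hvar t ht ht1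
    have h1 := milE_nonpos hF hH N
    have h2 : 2 * t * S - 2 * t ^ 2 * M ≤ milE (tc H) N - milE (tc G) N := by
      rw [hS, hM, milE, milE, Finset.mul_sum, Finset.mul_sum, ← Finset.sum_sub_distrib,
        ← Finset.sum_sub_distrib]
      refine Finset.sum_le_sum fun k hkN => ?_
      have hkN' : (0:ℝ) ≤ N - k := by
        have : (k:ℝ) ≤ N := by exact_mod_cast (Finset.mem_range.1 hkN).le
        linarith
      set c := tc G (k + 1)
      set h := tc H (k + 1)
      set d := tc (varD G B ε) (k + 1)
      have h3 : ‖h‖ ^ 2 ≥ ‖c‖ ^ 2 + 2 * ((starRingEnd ℂ) c * (h - c)).re := by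
        have : ‖h‖ ^ 2 = ‖c‖ ^ 2 + 2 * ((starRingEnd ℂ) c * (h - c)).re + ‖h - c‖ ^ 2 := by
          simp only [← Complex.normSq_eq_norm_sq, Complex.normSq_apply, Complex.mul_re,
            Complex.conj_re, Complex.conj_im, Complex.sub_re, Complex.sub_im]
          ring
        nlinarith [sq_nonneg ‖h - c‖]
      have h4 : t * ((starRingEnd ℂ) c * d).re - ‖c‖ * (C * t ^ 2 * 4 ^ (k + 1)) ≤
          ((starRingEnd ℂ) c * (h - c)).re := by
        have e : (starRingEnd ℂ) c * (h - c) =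
            (t:ℂ) * ((starRingEnd ℂ) c * d) + (starRingEnd ℂ) c * (h - c - t * d) := by ring
        rw [e, Complex.add_re, Complex.re_ofReal_mul]
        have h5 : ‖(starRingEnd ℂ) c * (h - c - t * d)‖ ≤ ‖c‖ * (C * t ^ 2 * 4 ^ (k + 1)) := by
          rw [norm_mul, Complex.norm_conj]
          exact mul_le_mul_of_nonneg_left (hk (k + 1)) (norm_nonneg _)
        have h6 := Complex.abs_re_le_norm ((starRingEnd ℂ) c * (h - c - t * d))
        have h7 := neg_abs_le ((starRingEnd ℂ) c * (h - c - t * d)).re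
        linarith
      have h8 : 2 * (t * ((starRingEnd ℂ) c * d).re - ‖c‖ * (C * t ^ 2 * 4 ^ (k + 1))) ≤
          ‖h‖ ^ 2 - ‖c‖ ^ 2 := by linarith
      have h9 := mul_le_mul_of_nonneg_left h8 (mul_nonneg (by positivity : (0:ℝ) ≤ (k:ℝ) + 1) hkN')
      linarith
    rw [hN] at h2
    have : t * (S - t * M) ≤ 0 := by nlinarith
    by_contra hcon
    push Not at hcon
    nlinarith [mul_pos ht (sub_pos.2 hcon)]
  by_contra hcon
  push Not at hcon
  have h1 : 0 < S / (2 * (M + 1)) := by positivity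
  have h2 := key (min (1 / 16) (S / (2 * (M + 1)))) (lt_min (by norm_num) h1) (min_le_left _ _)
  have h3 := mul_le_mul_of_nonneg_right (min_le_right (1 / 16) (S / (2 * (M + 1)))) hM0
  have h4 : S / (2 * (M + 1)) * M ≤ S / 2 := by
    rw [div_mul_eq_mul_div, div_le_div_iff₀ (by positivity) (by norm_num)]
    nlinarith
  linarith

/-- Taylor coefficients of `(1 - z)²`. -/
def koebeK : ℕ → ℂ
  | 0 => 1
  | 1 => -2
  | 2 => 1
  | _ + 3 => 0

lemma koebeK_sum : ∀ m : ℕ, ∑ j ∈ Finset.range (m + 3), koebeK j = 0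
  | 0 => by simp [Finset.sum_range_succ, koebeK]; norm_num
  | m + 1 => by rw [Finset.sum_range_succ, koebeK_sum m, koebeK, add_zero]

lemma koebeK_rec : ∀ m : ℕ, ((m:ℂ) + 1) * koebeK (m + 1) = -(2 * ∑ j ∈ Finset.range (m + 1), koebeK j)
  | 0 => by simp [koebeK]
  | 1 => by simp [Finset.sum_range_succ, koebeK]; norm_num
  | m + 2 => by rw [koebeK_sum, koebeK]; simp

lemma exp_coeff_rec {e b : ℕ → ℂ} (h0 : e 0 = 1)
    (hrec : ∀ m : ℕ, ((m:ℂ) + 1) * e (m + 1) = -∑ j ∈ Finset.range (m + 1), b j * e (m - j))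
    {N : ℕ} (hb : ∀ j < N, b j = 2) :
    (∀ m ≤ N, e m = koebeK m) ∧
      ((N:ℂ) + 1) * e (N + 1) = ((N:ℂ) + 1) * koebeK (N + 1) - (b N - 2) := by
  have h1 : ∀ m ≤ N, e m = koebeK m := by
    intro m
    induction m using Nat.strong_induction_on with
    | _ m ih =>
      intro hm
      rcases m with _ | m
      · rw [h0, koebeK]
      · have hne : (m:ℂ) + 1 ≠ 0 := by exact_mod_cast Nat.succ_ne_zero m
        apply mul_left_cancel₀ hne
        rw [hrec, koebeK_rec, ← Finset.sum_range_reflect, Finset.mul_sum]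
        congr 1
        refine Finset.sum_congr rfl fun j hj => ?_
        have hj' := Finset.mem_range.1 hj
        rw [hb _ (by omega), show m - (m + 1 - 1 - j) = j by omega, ih j hj' (by omega)]
  refine ⟨h1, ?_⟩
  rw [hrec, koebeK_rec, ← Finset.sum_range_reflect, Finset.sum_range_succ',
    Finset.sum_range_succ' koebeK]
  have : ∑ k ∈ Finset.range N, b (N + 1 - 1 - (k + 1)) * e (N - (N + 1 - 1 - (k + 1))) =
      ∑ k ∈ Finset.range N, 2 * koebeK (k + 1) := by
    refine Finset.sum_congr rfl fun j hj => ?_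
    have hj' := Finset.mem_range.1 hj
    rw [hb _ (by omega), show N - (N + 1 - 1 - (j + 1)) = j + 1 by omega, h1 _ (by omega)]
  rw [this, ← Finset.mul_sum]
  simp [h0, koebeK]
  ring

lemma tc_exp_neg_zero (hG0 : G 0 = 0) : tc (fun z => Complex.exp (-G z)) 0 = 1 := by
  rw [tc_zero, hG0]; simp

lemma tc_exp_neg_rec (hG : DifferentiableOn ℂ G (ball 0 1)) (m : ℕ) :
    ((m:ℂ) + 1) * tc (fun z => Complex.exp (-G z)) (m + 1) =
      -∑ j ∈ Finset.range (m + 1), (((j:ℂ) + 1) * tc G (j + 1)) *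
        tc (fun z => Complex.exp (-G z)) (m - j) := by
  have hE : DifferentiableOn ℂ (fun z => Complex.exp (-G z)) (ball 0 1) := hG.neg.cexp
  have hG' := deriv_differentiableOn hG
  rw [← tc_deriv, tc_congr (g := fun z => (-1:ℂ) * (deriv G z * Complex.exp (-G z))) ?_,
    tc_const_mul, tc_mul hG' hE, neg_one_mul]
  · simp_rw [tc_deriv]
  · intro z hz
    have := (hG.differentiableAt (isOpen_ball.mem_nhds hz)).hasDerivAt.neg.cexp.deriv
    simp only [Pi.neg_apply] at this
    change deriv (fun z => Complex.exp (-G z)) z = _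
    rw [this]; ring

/-- Taylor coefficients of the first variation `varD`; the last factor is the coefficient of `z ^ k`
in `1 + z G'(z)`. -/
lemma tc_varD_succ (hG : DifferentiableOn ℂ G (ball 0 1)) (hB : DifferentiableOn ℂ B (ball 0 1))
    (hBG : ∀ z ∈ ball (0:ℂ) 1, z * B z = 1 - Complex.exp (-G z)) (k : ℕ) :
    tc (varD G B ε) (k + 1) = ε * (((k:ℂ) + 2) * tc G (k + 2) -
        tc (fun z => Complex.exp (-G z)) (k + 2)) -
      (starRingEnd ℂ) ε * (if k = 0 then 1 else (k:ℂ) * tc G k) := by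
  have hG' := deriv_differentiableOn hG
  have hE : DifferentiableOn ℂ (fun z => Complex.exp (-G z)) (ball 0 1) := hG.neg.cexp
  have hc : ∀ c : ℂ, DifferentiableOn ℂ (fun _ : ℂ => c) (ball 0 1) := fun c =>
    differentiableOn_const c
  have hzG : DifferentiableOn ℂ (fun z => z * deriv G z) (ball 0 1) := by fun_prop
  have h1zG : DifferentiableOn ℂ (fun z => 1 + z * deriv G z) (ball 0 1) := by fun_prop
  have hBk : tc B (k + 1) = -tc (fun z => Complex.exp (-G z)) (k + 2) := by
    rw [← tc_X_mul hB, tc_congr (g := fun z => 1 - Complex.exp (-G z)) hBG,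
      tc_sub (hc 1) hE, tc_const _ (by omega), zero_sub]
  have hh : tc (fun z => 1 + z * deriv G z) k = if k = 0 then 1 else (k:ℂ) * tc G k := by
    rcases k with _ | k
    · simp [tc_zero]
    · rw [tc_add (hc 1) hzG, tc_const _ (by omega), tc_X_mul hG', tc_deriv]
      simp
  unfold varD
  rw [tc_sub (by fun_prop) (hc _), tc_sub (by fun_prop) (by fun_prop), tc_const _ (by omega),
    tc_const_mul, tc_const_mul, tc_add hG' hB, tc_X_mul h1zG, tc_deriv, hBk, hh]
  push_cast
  ring

end rigidity

/-! ### Rigidity -/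

section rigidity2

variable {f G : ℂ → ℂ}

/-- If `c_k = 2 / k` for `k ≤ N`, then `milE (tc G) N = 0` is maximal, and its first variation in the
direction `ε` is a positive multiple of `Re (ε δ)`, `δ = (N + 1) c_{N+1} - 2`. As it is nonpositive
for all unimodular `ε`, `δ = 0`. -/
lemma coeff_step (hf : InClassS f) (hG : LogOf 1 f G) {N : ℕ} (hN : 1 ≤ N)
    (hc : ∀ j < N, ((j:ℂ) + 1) * tc G (j + 1) = 2) : ((N:ℂ) + 1) * tc G (N + 1) = 2 := by
  set h : ℂ → ℂ := fun z => 1 - Complex.exp (-G z) with hh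
  have hE : DifferentiableOn ℂ (fun z => Complex.exp (-G z)) (ball 0 1) := hG.diff.neg.cexp
  have hhd : DifferentiableOn ℂ h (ball 0 1) := by
    rw [hh]; fun_prop
  have hh0 : h 0 = 0 := by simp [hh, hG.zero]
  have hB : DifferentiableOn ℂ (dslope h 0) (ball 0 1) :=
    (Complex.differentiableOn_dslope (isOpen_ball.mem_nhds zero_mem_disc)).2 hhd
  have hBG : ∀ z ∈ ball (0:ℂ) 1, z * dslope h 0 z = 1 - Complex.exp (-G z) := by
    intro z _
    have := sub_smul_dslope h 0 z
    simpa [hh0] using this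
  have hB0 : dslope h 0 0 = deriv G 0 := by
    rw [dslope_same]
    have := ((hG.diff.differentiableAt (isOpen_ball.mem_nhds zero_mem_disc)).hasDerivAt.neg.cexp.const_sub
      1).deriv
    simp only [Pi.neg_apply] at this
    rw [hh, this, hG.zero]; simp
  have hcN : ∀ k ∈ Finset.range N, tc G (k + 1) = ((2 / ((k:ℝ) + 1) : ℝ) : ℂ) := by
    intro k hk
    have hne : (k:ℂ) + 1 ≠ 0 := by exact_mod_cast Nat.succ_ne_zero k
    have := hc k (Finset.mem_range.1 hk)
    push_cast
    rw [eq_div_iff hne, ← this]; ring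
  have hmil : milE (tc G) N = 0 := by
    rw [milE]
    refine Finset.sum_eq_zero fun k hk => ?_
    rw [hcN k hk, Complex.norm_real, Real.norm_of_nonneg (by positivity)]
    have : (k:ℝ) + 1 ≠ 0 := by positivity
    field_simp
    ring
  set e : ℕ → ℂ := tc (fun z => Complex.exp (-G z)) with he
  obtain ⟨he1, he2⟩ := exp_coeff_rec (e := e) (b := fun j => ((j:ℂ) + 1) * tc G (j + 1))
    (tc_exp_neg_zero hG.zero) (tc_exp_neg_rec hG.diff) (N := N) hc
  set δ : ℂ := ((N:ℂ) + 1) * tc G (N + 1) - 2 with hδ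
  have hN1 : (N:ℂ) + 1 ≠ 0 := by exact_mod_cast Nat.succ_ne_zero N
  have hK : ∀ k : ℕ, k < N → (if k = 0 then (1:ℂ) else (k:ℂ) * tc G k) = 2 - koebeK (k + 2) := by
    intro k hk
    rcases k with _ | k
    · simp [koebeK]; norm_num
    · have := hc k (by omega)
      simp [koebeK, this]
  have key : ∀ ε : ℂ, ‖ε‖ = 1 → (ε * δ).re ≤ 0 := by
    intro ε hε
    have hv := milE_variation hf hG hB hBG hB0 hε hmil
    obtain ⟨n, rfl⟩ : ∃ n, N = n + 1 := ⟨N - 1, by omega⟩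
    rw [Finset.sum_range_succ, Finset.sum_eq_zero, zero_add] at hv
    · rw [hcN n (by simp), Complex.conj_ofReal, Complex.re_ofReal_mul,
        tc_varD_succ hG.diff hB hBG, hK n (by omega)] at hv
      change _ * (_ * (ε * (((n:ℂ) + 2) * tc G (n + 2) - e (n + 2)) - _).re) ≤ 0 at hv
      have h1 : e (n + 2) = koebeK (n + 2) - δ / ((n:ℂ) + 2) := by
        have hne : (n:ℂ) + 2 ≠ 0 := by exact_mod_cast (show n + 2 ≠ 0 by omega)
        rw [eq_sub_iff_add_eq]
        apply mul_left_cancel₀ hne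
        rw [mul_add, mul_div_cancel₀ _ hne]
        push_cast at he2
        linear_combination he2
      have h2 : ((n:ℂ) + 2) * tc G (n + 2) = 2 + δ := by rw [hδ]; push_cast; ring
      have hkr : ∃ x : ℝ, 2 - koebeK (n + 2) = x := by
        rcases n with _ | n
        · exact ⟨1, by simp [koebeK]; norm_num⟩
        · exact ⟨2, by simp [koebeK]⟩
      obtain ⟨x, hx⟩ := hkr
      have h3 : (ε * (((n:ℂ) + 2) * tc G (n + 2) - e (n + 2)) -
          (starRingEnd ℂ) ε * (2 - koebeK (n + 2))).re = (1 + 1 / ((n:ℝ) + 2)) * (ε * δ).re := by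
        have h4 : ε * (((n:ℂ) + 2) * tc G (n + 2) - e (n + 2)) -
          (starRingEnd ℂ) ε * (2 - koebeK (n + 2)) =
            (x:ℂ) * (ε - (starRingEnd ℂ) ε) + ((1 + 1 / ((n:ℝ) + 2) : ℝ) : ℂ) * (ε * δ) := by
          rw [h1, h2]; push_cast
          linear_combination (ε - (starRingEnd ℂ) ε) * hx
        rw [h4, Complex.add_re, Complex.re_ofReal_mul, Complex.re_ofReal_mul]
        simp
      rw [h3] at hv
      have hn : (0:ℝ) < (n:ℝ) + 1 := by positivity
      have h5 : 0 < ((n:ℝ) + 1) * (((n + 1 : ℕ):ℝ) - n) * (2 / ((n:ℝ) + 1) * (1 + 1 / ((n:ℝ) + 2))) := by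
        push_cast
        rw [add_sub_cancel_left]
        positivity
      by_contra hcon
      push Not at hcon
      have := mul_pos h5 hcon
      linarith
    · intro k hk
      have hk' := Finset.mem_range.1 hk
      rw [hcN k (by simp; omega), Complex.conj_ofReal, Complex.re_ofReal_mul,
        tc_varD_succ hG.diff hB hBG, hK k (by omega)]
      change _ * (_ * (ε * (((k:ℂ) + 2) * tc G (k + 2) - e (k + 2)) - _).re) = 0
      have h2 : ((k:ℂ) + 2) * tc G (k + 2) = 2 := by
        have := hc (k + 1) (by omega)
        push_cast at this
        linear_combination this
      have hkr : ∃ x : ℝ, 2 - koebeK (k + 2) = x := by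
        rcases k with _ | n
        · exact ⟨1, by simp [koebeK]; norm_num⟩
        · exact ⟨2, by simp [koebeK]⟩
      obtain ⟨x, hx⟩ := hkr
      rw [he1 (k + 2) (by omega), h2, hx, ← sub_mul]
      simp
  have hδ0 : δ = 0 := by
    by_contra hne
    have hpos : 0 < ‖δ‖ := norm_pos_iff.2 hne
    have h1 := key ((starRingEnd ℂ) δ / (‖δ‖ : ℂ)) (by
      rw [norm_div, Complex.norm_conj, Complex.norm_real, norm_norm, div_self hpos.ne'])
    have h2 : (starRingEnd ℂ) δ / (‖δ‖ : ℂ) * δ = (‖δ‖ : ℂ) := by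
      have : (‖δ‖ : ℂ) ≠ 0 := by exact_mod_cast hpos.ne'
      rw [div_mul_eq_mul_div, mul_comm, Complex.mul_conj, Complex.normSq_eq_norm_sq]
      push_cast
      field_simp
    rw [h2, Complex.ofReal_re] at h1
    linarith
  rw [hδ] at hδ0
  linear_combination hδ0

lemma coeff_all (hf : InClassS f) (hG : LogOf 1 f G) (h1 : tc G 1 = 2) (j : ℕ) :
    ((j:ℂ) + 1) * tc G (j + 1) = 2 := by
  induction j using Nat.strong_induction_on with
  | _ j ih =>
    rcases j with _ | j
    · simp [h1]
    · exact coeff_step hf hG (by omega) ih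

/-- A function of class `𝒮` whose first logarithmic coefficient is `1` is the Koebe function. -/
lemma koebe_of_coeff_one (hf : InClassS f) (hG : LogOf 1 f G) (h1 : tc G 1 = 2) {z : ℂ}
    (hz : z ∈ ball (0:ℂ) 1) : f z = z / (1 - z) ^ 2 := by
  have hE : DifferentiableOn ℂ (fun z => Complex.exp (-G z)) (ball 0 1) := hG.diff.neg.cexp
  have he : ∀ m, tc (fun z => Complex.exp (-G z)) m = koebeK m := fun m =>
    (exp_coeff_rec (tc_exp_neg_zero hG.zero) (tc_exp_neg_rec hG.diff) (N := m)
      fun j _ => coeff_all hf hG h1 j).1 m le_rfl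
  have hs := Complex.hasSum_taylorSeries_on_ball hE hz
  have hs2 : HasSum (fun n : ℕ => ((n.factorial : ℂ))⁻¹ • (z - 0) ^ n •
      iteratedDeriv n (fun z => Complex.exp (-G z)) 0) ((1 - z) ^ 2) := by
    have : (fun n : ℕ => ((n.factorial : ℂ))⁻¹ • (z - 0) ^ n •
      iteratedDeriv n (fun z => Complex.exp (-G z)) 0) = fun n => koebeK n * z ^ n := by
      funext n
      rw [← he n, tc, sub_zero, smul_eq_mul, smul_eq_mul]
      ring
    rw [this]
    have h3 := hasSum_sum_of_ne_finset_zero (L := SummationFilter.unconditional ℕ) (f := fun n => koebeK n * z ^ n) (s := Finset.range 3)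
      fun n hn => by
        obtain ⟨m, rfl⟩ : ∃ m, n = m + 3 := ⟨n - 3, by simp at hn; omega⟩
        simp [koebeK]
    convert! h3 using 1
    simp [Finset.sum_range_succ, koebeK]; ring
  have h4 := hs.unique hs2
  rw [hG.eq z hz, one_mul, ← h4, Complex.exp_neg, div_inv_eq_mul]

/-- Equality `|γ₁| = 1` characterises the rotations of the Koebe function. -/
lemma koebe_of_norm_coeff_one (hf : InClassS f) (hG : LogOf 1 f G) (h1 : ‖tc G 1‖ = 2) :
    IsKoebeRotation f := by
  set κ : ℂ := tc G 1 / 2 with hκ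
  have hκn : ‖κ‖ = 1 := by rw [hκ, norm_div, h1]; norm_num
  have hκ0 : κ ≠ 0 := norm_pos_iff.1 (by rw [hκn]; norm_num)
  have hinv : ‖κ⁻¹‖ = 1 := by rw [norm_inv, hκn, inv_one]
  have hmaps : ∀ z ∈ ball (0:ℂ) 1, κ⁻¹ * z ∈ ball (0:ℂ) 1 := by
    intro z hz
    rw [mem_ball_zero_iff] at hz ⊢
    rwa [norm_mul, hinv, one_mul]
  obtain ⟨hfa, hfi, hf0, hf1⟩ := hf
  have hfS : InClassS (fun z => κ * f (κ⁻¹ * z)) := by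
    refine ⟨?_, ?_, by simp [hf0], ?_⟩
    · refine DifferentiableOn.analyticOnNhd ?_ isOpen_ball
      exact (hfa.differentiableOn.comp (f := fun z => κ⁻¹ * z) (by fun_prop) hmaps).const_mul _
    · intro x hx y hy hxy
      have := hfi (hmaps x hx) (hmaps y hy) (mul_left_cancel₀ hκ0 hxy)
      exact mul_left_cancel₀ (inv_ne_zero hκ0) this
    · have hd : HasDerivAt (fun z => f (κ⁻¹ * z)) (1 * κ⁻¹) 0 := by
        refine HasDerivAt.comp (h₂ := f) (0:ℂ) ?_ (by simpa using (hasDerivAt_id (0:ℂ)).const_mul κ⁻¹)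
        rw [mul_zero, ← hf1]
        exact (hfa 0 zero_mem_disc).differentiableAt.hasDerivAt
      rw [(hd.const_mul κ).deriv]
      field_simp
  have hGS : LogOf 1 (fun z => κ * f (κ⁻¹ * z)) (fun z => G (κ⁻¹ * z)) := by
    refine ⟨hG.diff.comp (f := fun z => κ⁻¹ * z) (by fun_prop) hmaps, by simp [hG.zero], ?_⟩
    intro z hz
    rw [hG.eq _ (hmaps z hz)]
    field_simp
  have htc : tc (fun z => G (κ⁻¹ * z)) 1 = 2 := by
    rw [tc_comp_mul, pow_one]
    have : tc G 1 = 2 * κ := by rw [hκ]; ring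
    rw [this]; field_simp
  refine ⟨Complex.arg κ, fun w hw => ?_⟩
  have hexp : Complex.exp ((Complex.arg κ : ℂ) * Complex.I) = κ := by
    have := Complex.norm_mul_exp_arg_mul_I κ
    rwa [hκn, Complex.ofReal_one, one_mul] at this
  have hw' : κ * w ∈ ball (0:ℂ) 1 := by
    rw [mem_ball_zero_iff] at hw ⊢
    rwa [norm_mul, hκn, one_mul]
  have h := koebe_of_coeff_one hfS hGS htc hw'
  rw [inv_mul_cancel_left₀ hκ0, mul_div_assoc] at h
  simp only [hexp]
  exact mul_left_cancel₀ hκ0 h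

end rigidity2

/-! ### The weighted inequality -/

section assembly

/-- The weight `n² / ((n+1)² (n + 1/20))` at `n = k + 1`. -/
noncomputable def wgt (k : ℕ) : ℝ := ((k:ℝ) + 1) ^ 2 / (((k:ℝ) + 1 + 1) ^ 2 * ((k:ℝ) + 1 + 1 / 20))

lemma wgt_nonneg (k : ℕ) : 0 ≤ wgt k := by unfold wgt; positivity

lemma wgt_le (k : ℕ) : wgt k ≤ 1 / ((k:ℝ) + 1) := by
  have hk : (0:ℝ) ≤ k := k.cast_nonneg
  unfold wgt
  rw [div_le_div_iff₀ (by positivity) (by positivity)]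
  nlinarith [mul_nonneg hk hk, mul_nonneg (mul_nonneg hk hk) hk]

/-- First difference of the weight. -/
noncomputable def wgtD (k : ℕ) : ℝ := wgt k - wgt (k + 1)

/-- Second difference of the weight. -/
noncomputable def wgtDD (k : ℕ) : ℝ := wgt k - 2 * wgt (k + 1) + wgt (k + 2)

lemma wgtD_eq (m : ℕ) : wgtD m = (1.65 + 8.6 * m + 11.9 * m ^ 2 + 6 * m ^ 3 + m ^ 4) /
    ((((m:ℝ) + 2) ^ 2 * ((m:ℝ) + 21 / 20)) * (((m:ℝ) + 3) ^ 2 * ((m:ℝ) + 41 / 20))) := by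
  have hm : (0:ℝ) ≤ m := m.cast_nonneg
  unfold wgtD wgt
  push_cast
  rw [div_sub_div _ _ (by positivity) (by positivity), div_eq_div_iff (by positivity) (by positivity)]
  ring

lemma wgtD_nonneg (m : ℕ) : 0 ≤ wgtD m := by
  rw [wgtD_eq]; positivity

lemma wgtD_le (m : ℕ) : wgtD m ≤ 2 / ((m:ℝ) + 1) ^ 2 := by
  have hm : (0:ℝ) ≤ m := m.cast_nonneg
  rw [wgtD_eq, div_le_div_iff₀ (by positivity) (by positivity), ← sub_nonneg]
  ring_nf
  positivity

lemma wgtDD_nonneg (m : ℕ) : 0 ≤ wgtDD (m + 1) := by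
  have hm : (0:ℝ) ≤ m := m.cast_nonneg
  have : wgtDD (m + 1) = (544.635 + 1683.05 * m + 1818.695 * m ^ 2 + 947.59 * m ^ 3 +
      259.4 * m ^ 4 + 36 * m ^ 5 + 2 * m ^ 6) /
      ((((m:ℝ) + 3) ^ 2 * ((m:ℝ) + 41 / 20)) * ((((m:ℝ) + 4) ^ 2 * ((m:ℝ) + 61 / 20)) *
        (((m:ℝ) + 5) ^ 2 * ((m:ℝ) + 81 / 20)))) := by
    unfold wgtDD wgt
    push_cast
    rw [mul_div_assoc', div_sub_div _ _ (by positivity) (by positivity),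
      div_add_div _ _ (by positivity) (by positivity),
      div_eq_div_iff (by positivity) (by positivity)]
    ring
  rw [this]
  positivity

/-- The weights obtained from `wgt` by stopping the double summation by parts at `M`. -/
noncomputable def wgtV (M k : ℕ) : ℝ := wgt k - wgt M - ((M:ℝ) - k) * wgtD M

lemma wgtV_succ (M k : ℕ) : wgtV (M + 1) k = wgtV M k + wgtDD M * ((M:ℝ) + 1 - k) := by
  unfold wgtV wgtDD wgtD; push_cast; ring

lemma wgtV_nonneg {M k : ℕ} (hk : 1 ≤ k) (hM : k ≤ M) : 0 ≤ wgtV M k := by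
  induction M, hM using Nat.le_induction with
  | base => simp [wgtV]
  | succ M hM ih =>
    rw [wgtV_succ]
    obtain ⟨m, rfl⟩ : ∃ m, M = m + 1 := ⟨M - 1, by omega⟩
    have h1 : (k:ℝ) ≤ ((m + 1 : ℕ) : ℝ) := by exact_mod_cast hM
    have := mul_nonneg (wgtDD_nonneg m) (show (0:ℝ) ≤ ((m + 1 : ℕ) : ℝ) + 1 - k by linarith)
    linarith

lemma wgtV_le {M k : ℕ} (hM : k ≤ M) : wgtV M k ≤ wgt k := by
  have h1 : (k:ℝ) ≤ M := by exact_mod_cast hM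
  have := mul_nonneg (sub_nonneg.2 h1) (wgtD_nonneg M)
  have := wgt_nonneg M
  unfold wgtV; linarith

lemma le_wgtV {M k : ℕ} : wgt k - 3 / ((M:ℝ) + 1) ≤ wgtV M k := by
  have h1 := wgt_le M
  have hM : (0:ℝ) < (M:ℝ) + 1 := by positivity
  have h2 : ((M:ℝ) - k) * wgtD M ≤ 2 / ((M:ℝ) + 1) := by
    have hk : (0:ℝ) ≤ k := k.cast_nonneg
    calc ((M:ℝ) - k) * wgtD M ≤ ((M:ℝ) + 1) * wgtD M :=
          mul_le_mul_of_nonneg_right (by linarith) (wgtD_nonneg M)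
      _ ≤ ((M:ℝ) + 1) * (2 / ((M:ℝ) + 1) ^ 2) := mul_le_mul_of_nonneg_left (wgtD_le M) hM.le
      _ = 2 / ((M:ℝ) + 1) := by field_simp
  have h3 : 3 / ((M:ℝ) + 1) = 1 / ((M:ℝ) + 1) + 2 / ((M:ℝ) + 1) := by ring
  unfold wgtV; linarith

/-- Double summation by parts: the truncated weighted sum is a combination of Milin functionals. -/
lemma sum_by_parts (c : ℕ → ℂ) (M : ℕ) :
    ∑ k ∈ Finset.range M, wgtV M k * (((k:ℝ) + 1) * ‖c (k + 1)‖ ^ 2 - 4 / ((k:ℝ) + 1)) =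
      ∑ j ∈ Finset.range M, wgtDD j * milE c (j + 1) := by
  induction M with
  | zero => simp
  | succ M ih =>
    rw [Finset.sum_range_succ (fun j => wgtDD j * milE c (j + 1)), ← ih, milE, Finset.sum_range_succ,
      Finset.sum_range_succ (n := M), mul_add, Finset.mul_sum, ← add_assoc, ← Finset.sum_add_distrib]
    congr 1
    · refine Finset.sum_congr rfl fun k _ => ?_
      rw [wgtV_succ]; push_cast; ring
    · rw [wgtV_succ]; simp [wgtV]

/-- The excess of the first second difference over the coefficient `-56/5000` for which the
combined Milin inequality is available. -/
noncomputable def slack : ℝ := wgtDD 0 + 56 / 5000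

lemma slack_pos : 0 < slack := by
  unfold slack wgtDD wgt; norm_num

lemma milE_one (c : ℕ → ℂ) : milE c 1 = ‖c 1‖ ^ 2 - 4 := by
  simp [milE]

/-- The second differences exceed the coefficients of the combined inequality `milE_special`; the
excess at the first one is kept as `slack`. -/
lemma milE_comb {f G : ℂ → ℂ} (hf : InClassS f) (hG : LogOf 1 f G) {M : ℕ} (hM : 9 ≤ M) :
    ∑ j ∈ Finset.range M, wgtDD j * milE (tc G) (j + 1) ≤ slack * (‖tc G 1‖ ^ 2 - 4) := by
  have hE := milE_nonpos hf hG
  induction M, hM using Nat.le_induction with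
  | base =>
    have h1 := milE_special hf hG
    rw [← milE_one]
    have h2 : ∀ (j : ℕ) (q : ℝ), q ≤ wgtDD j →
        wgtDD j * milE (tc G) (j + 1) ≤ q * milE (tc G) (j + 1) := fun j q hq =>
      mul_le_mul_of_nonpos_right hq (hE _)
    have e1 := h2 1 (29 / 5000) (by unfold wgtDD wgt; norm_num)
    have e2 := h2 2 (29 / 5000) (by unfold wgtDD wgt; norm_num)
    have e3 := h2 3 (22 / 5000) (by unfold wgtDD wgt; norm_num)
    have e4 := h2 4 (16 / 5000) (by unfold wgtDD wgt; norm_num)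
    have e5 := h2 5 (11 / 5000) (by unfold wgtDD wgt; norm_num)
    have e6 := h2 6 (8 / 5000) (by unfold wgtDD wgt; norm_num)
    have e7 := h2 7 (6 / 5000) (by unfold wgtDD wgt; norm_num)
    have e8 := h2 8 (5 / 5000) (by unfold wgtDD wgt; norm_num)
    rw [show Finset.Icc 1 9 = ({1, 2, 3, 4, 5, 6, 7, 8, 9} : Finset ℕ) by decide] at h1
    simp [cI] at h1
    simp only [Finset.sum_range_succ, Finset.sum_range_zero, zero_add, Nat.reduceAdd, slack] at *
    linarith
  | succ M hM ih =>
    rw [Finset.sum_range_succ]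
    obtain ⟨m, rfl⟩ : ∃ m, M = m + 1 := ⟨M - 1, by omega⟩
    have := mul_nonpos_of_nonneg_of_nonpos (wgtDD_nonneg m) (hE (m + 1 + 1))
    linarith

lemma summable_rhs : Summable fun k : ℕ => wgt k / ((k:ℝ) + 1) := by
  have h : Summable fun k : ℕ => 1 / ((k:ℝ) + 1) ^ 2 := by
    have := (summable_nat_add_iff 1).2 (Real.summable_one_div_nat_pow.2 (one_lt_two))
    simpa using this
  refine Summable.of_nonneg_of_le (fun k => div_nonneg (wgt_nonneg k) (by positivity)) (fun k => ?_) h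
  rw [pow_two, ← div_div]
  exact div_le_div_of_nonneg_right (wgt_le k) (by positivity)

/-- The weighted inequality for partial sums, with the surplus at the first coefficient. -/
lemma partial_bound {f G : ℂ → ℂ} (hf : InClassS f) (hG : LogOf 1 f G) (K : ℕ) :
    ∑ k ∈ Finset.range K, wgt k * (((k:ℝ) + 1) * ‖tc G (k + 1)‖ ^ 2) ≤
      slack * (‖tc G 1‖ ^ 2 - 4) + 4 * ∑' k : ℕ, wgt k / ((k:ℝ) + 1) := by
  set a : ℕ → ℝ := fun k => ((k:ℝ) + 1) * ‖tc G (k + 1)‖ ^ 2 with ha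
  have ha0 : ∀ k, 0 ≤ a k := fun k => by simp only [ha]; positivity
  set R := ∑' k : ℕ, wgt k / ((k:ℝ) + 1) with hR
  wlog hK : 1 ≤ K generalizing K
  · refine le_trans ?_ (this (K + 1) (by omega))
    rw [Finset.sum_range_succ]
    have := mul_nonneg (wgt_nonneg K) (ha0 K)
    simp only [ha] at this
    linarith
  have key : ∀ M : ℕ, max K 9 ≤ M →
      ∑ k ∈ Finset.range K, (wgt k - 3 / ((M:ℝ) + 1)) * a k ≤ slack * (‖tc G 1‖ ^ 2 - 4) + 4 * R := by
    intro M hM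
    have hKM : K ≤ M := (le_max_left _ _).trans hM
    have h1 := milE_comb hf hG ((le_max_right _ _).trans hM)
    rw [← sum_by_parts] at h1
    have h2 : ∑ k ∈ Finset.range M, wgtV M k * (a k - 4 / ((k:ℝ) + 1)) =
        ∑ k ∈ Finset.range M, wgtV M k * a k - 4 * ∑ k ∈ Finset.range M, wgtV M k / ((k:ℝ) + 1) := by
      rw [Finset.mul_sum, ← Finset.sum_sub_distrib]
      exact Finset.sum_congr rfl fun k _ => by ring
    have h3 : ∑ k ∈ Finset.range M, wgtV M k / ((k:ℝ) + 1) ≤ R :=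
      (Finset.sum_le_sum fun k hk => div_le_div_of_nonneg_right
        (wgtV_le (Finset.mem_range.1 hk).le) (by positivity)).trans
        (summable_rhs.sum_le_tsum _ fun k _ => div_nonneg (wgt_nonneg k) (by positivity))
    have h4 : ∑ k ∈ Finset.range K, (wgt k - 3 / ((M:ℝ) + 1)) * a k ≤
        ∑ k ∈ Finset.range M, wgtV M k * a k := by
      refine (Finset.sum_le_sum fun k _ => mul_le_mul_of_nonneg_right le_wgtV (ha0 k)).trans ?_
      refine Finset.sum_le_sum_of_subset_of_nonneg (by simpa using hKM) fun k hk hk' => ?_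
      simp only [Finset.mem_range, not_lt] at hk hk'
      exact mul_nonneg (wgtV_nonneg (hK.trans hk') hk.le) (ha0 k)
    linarith
  have hlim : Tendsto (fun M : ℕ => ∑ k ∈ Finset.range K, (wgt k - 3 / ((M:ℝ) + 1)) * a k) atTop
      (𝓝 (∑ k ∈ Finset.range K, (wgt k - 0) * a k)) := by
    refine tendsto_finsetSum _ fun k _ => Tendsto.mul_const _ (tendsto_const_nhds.sub ?_)
    have := (tendsto_one_div_add_atTop_nhds_zero_nat (𝕜 := ℝ)).const_mul 3
    simpa [div_eq_mul_inv] using this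
  simp only [sub_zero] at hlim
  exact le_of_tendsto hlim (eventually_atTop.2 ⟨_, key⟩)

end assembly

theorem logcoeff_cubic_weight_one_twentieth
    (f : ℂ → ℂ) (γ : ℕ → ℂ) (hf : InClassS f) (hγ : IsLogCoeffs f γ) :
    (∑' n : ℕ, ((n : ℝ) + 1) ^ 3 * ‖γ (n + 1)‖ ^ 2 / ((((n : ℝ) + 1) + 1) ^ 2 * (((n : ℝ) + 1) + 1 / 20)) ≤ ∑' n : ℕ, ((n : ℝ) + 1) / ((((n : ℝ) + 1) + 1) ^ 2 * (((n : ℝ) + 1) + 1 / 20))) ∧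
    (∑' n : ℕ, ((n : ℝ) + 1) ^ 3 * ‖γ (n + 1)‖ ^ 2 / ((((n : ℝ) + 1) + 1) ^ 2 * (((n : ℝ) + 1) + 1 / 20)) = ∑' n : ℕ, ((n : ℝ) + 1) / ((((n : ℝ) + 1) + 1) ^ 2 * (((n : ℝ) + 1) + 1 / 20)) → IsKoebeRotation f) := by
  obtain ⟨g, hga, hg0, hge, hgc⟩ := hγ
  have hG : LogOf 1 f g := by
    refine ⟨hga.differentiableOn, hg0, fun z hz => ?_⟩
    by_cases hz0 : z = 0
    · simp [hz0, hf.2.2.1]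
    · rw [hge z hz hz0]; field_simp
  have htc : ∀ n : ℕ, tc g (n + 1) = 2 * γ (n + 1) := by
    intro n
    rw [tc, hgc (n + 1) (by omega)]
    exact mul_div_cancel_left₀ _ (by exact_mod_cast (n + 1).factorial_ne_zero)
  have hL : ∀ n : ℕ, ((n : ℝ) + 1) ^ 3 * ‖γ (n + 1)‖ ^ 2 /
      ((((n : ℝ) + 1) + 1) ^ 2 * (((n : ℝ) + 1) + 1 / 20)) =
      wgt n * (((n:ℝ) + 1) * ‖tc g (n + 1)‖ ^ 2) / 4 := by
    intro n
    rw [htc, norm_mul, wgt]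
    norm_num
    ring
  have hRt : ∀ n : ℕ, ((n : ℝ) + 1) / ((((n : ℝ) + 1) + 1) ^ 2 * (((n : ℝ) + 1) + 1 / 20)) =
      wgt n / ((n:ℝ) + 1) := by
    intro n
    rw [wgt]
    field_simp
  simp only [hL, hRt]
  set R := ∑' k : ℕ, wgt k / ((k:ℝ) + 1) with hR
  have hmain : ∑' n : ℕ, wgt n * (((n:ℝ) + 1) * ‖tc g (n + 1)‖ ^ 2) / 4 ≤
      slack * (‖tc g 1‖ ^ 2 - 4) / 4 + R := by
    refine Real.tsum_le_of_sum_range_le (fun n => ?_) fun K => ?_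
    · have := wgt_nonneg n
      positivity
    · rw [← Finset.sum_div]
      have := partial_bound hf hG K
      rw [← hR] at this
      linarith
  have h1 : ‖tc g 1‖ ^ 2 - 4 ≤ 0 := by
    rw [← milE_one]; exact milE_nonpos hf hG 1
  have h2 := mul_nonpos_of_nonneg_of_nonpos slack_pos.le h1
  refine ⟨by linarith, fun heq => koebe_of_norm_coeff_one hf hG ?_⟩
  have h3 : 0 ≤ slack * (‖tc g 1‖ ^ 2 - 4) := by linarith
  have h4 : 0 ≤ ‖tc g 1‖ ^ 2 - 4 := nonneg_of_mul_nonneg_right h3 slack_pos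
  have h5 : ‖tc g 1‖ ^ 2 = 2 ^ 2 := by linarith
  exact (sq_eq_sq₀ (norm_nonneg _) (by norm_num)).1 h5
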